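/- arXiv:0908.0024 — 5 statements merged into one kernel-verified Lean document; each statement's English description precedes it below -/
import Mathlib

section
/- Comparison principle: let g, h : ℝ → ℝ be locally Lipschitz continuous with g(ζ) ≤ h(ζ) for all ζ ∈ ℝ, let T > 0, and let u, v : ℝ × [0,T] → ℝ be bounded continuous mild solutions of ∂_t u + Au = g(u) and ∂_t v + Av = h(v) respectively. If u(x,0) ≤ v(x,0) for all x ∈ ℝ, then u(x,t) ≤ v(x,t) for all x ∈ ℝ and t ∈ [0,T]. -/
open Real MeasureTheory

/-- The fundamental solution at time `t` of the free equation `∂_t u + Au = 0`,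
where `A` is the order-1 pseudodifferential operator with symbol
`λ ↦ e^{−iπ·sign(λ)·β/2}|λ|`, `κ = cos(πβ/2)`, `σ = sin(πβ/2)`. -/
noncomputable def stableKernel (κ σ t x : ℝ) : ℝ :=
  κ * t / (π * ((x - σ * t) ^ 2 + (κ * t) ^ 2))

/-- `u : ℝ × [0,T] → ℝ` is a mild solution of `∂_t u + Au = g(u)`:
`u(x,t) = ∫ p_t(x−y)·u(y,0) dy + ∫₀ᵗ ∫ p_{t−s}(x−y)·g(u(y,s)) dy ds`. -/
def IsMildSolution (κ σ : ℝ) (g : ℝ → ℝ) (T : ℝ) (u : ℝ → ℝ → ℝ) : Prop :=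
  ∀ x t : ℝ, 0 < t → t ≤ T →
    u x t = (∫ y : ℝ, stableKernel κ σ t (x - y) * u y 0) +
      ∫ s in Set.Ioc (0 : ℝ) t,
        ∫ y : ℝ, stableKernel κ σ (t - s) (x - y) * g (u y s)


/-- the standard Cauchy probability measure -/
noncomputable def stdC : Measure ℝ := ProbabilityTheory.cauchyMeasure 0 1

instance : IsProbabilityMeasure stdC := by unfold stdC; infer_instance

lemma stdC_integral {E : Type*} [NormedAddCommGroup E] [NormedSpace ℝ E] (f : ℝ → E) :
    ∫ z, f z ∂stdC = ∫ z, (π⁻¹ * (1 + z ^ 2)⁻¹) • f z := by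
  rw [stdC, ProbabilityTheory.cauchyMeasure_of_scale_ne_zero _ one_ne_zero]
  unfold ProbabilityTheory.cauchyPDF
  rw [integral_withDensity_eq_integral_toReal_smul]
  · congr 1
    ext z
    rw [ENNReal.toReal_ofReal (ProbabilityTheory.cauchyPDF_pos _ one_ne_zero _).le]
    simp [ProbabilityTheory.cauchyPDFReal_def, add_comm]
  · fun_prop
  · simp

lemma integrable_expabs_Ioi (a : ℂ) (ha : a.re < 0) :
    IntegrableOn (fun x : ℝ => Complex.exp (a * x)) (Set.Ioi 0) :=
  integrableOn_exp_mul_complex_Ioi ha 0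

noncomputable def eabs (x : ℝ) : ℂ := Complex.exp (-(2 * π * |x| : ℝ))

lemma eabs_fourier_integrand (w : ℝ) :
    IntegrableOn (fun x : ℝ => Complex.exp ((-2 * π * w * Complex.I - 2 * π) * x)) (Set.Ioi 0) ∧
    IntegrableOn (fun x : ℝ => Complex.exp ((-2 * π * w * Complex.I + 2 * π) * x)) (Set.Iic 0) :=
  ⟨integrableOn_exp_mul_complex_Ioi (by simp [Real.pi_pos]) 0,
    integrableOn_exp_mul_complex_Iic (by simp [Real.pi_pos]) 0⟩

lemma eabs_pos (w x : ℝ) (hx : x ∈ Set.Ioi (0:ℝ)) :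
    Complex.exp ((-2 * π * x * w : ℝ) * Complex.I) • eabs x =
      Complex.exp ((-2 * π * w * Complex.I - 2 * π) * x) := by
  rw [eabs, abs_of_pos hx, smul_eq_mul, ← Complex.exp_add]
  congr 1; push_cast; ring

lemma eabs_neg (w x : ℝ) (hx : x ∈ Set.Iic (0:ℝ)) :
    Complex.exp ((-2 * π * x * w : ℝ) * Complex.I) • eabs x =
      Complex.exp ((-2 * π * w * Complex.I + 2 * π) * x) := by
  rw [eabs, abs_of_nonpos hx, smul_eq_mul, ← Complex.exp_add]
  congr 1; push_cast; ring

lemma eabs_integrable (w : ℝ) :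
    Integrable (fun x : ℝ => Complex.exp ((-2 * π * x * w : ℝ) * Complex.I) • eabs x) := by
  rw [← integrableOn_univ, ← Set.Iic_union_Ioi (a := (0:ℝ))]
  refine IntegrableOn.union ?_ ?_
  · exact (eabs_fourier_integrand w).2.congr_fun (fun x hx => (eabs_neg w x hx).symm)
      measurableSet_Iic
  · exact (eabs_fourier_integrand w).1.congr_fun (fun x hx => (eabs_pos w x hx).symm)
      measurableSet_Ioi

open FourierTransform in
lemma eabs_fourier : 𝓕 eabs = fun w : ℝ => ((π⁻¹ * (1 + w ^ 2)⁻¹ : ℝ) : ℂ) := by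
  ext w
  rw [Real.fourier_real_eq_integral_exp_smul]
  have hi := eabs_integrable w
  rw [← setIntegral_univ, ← Set.Iic_union_Ioi (a := (0:ℝ)),
    setIntegral_union (Set.Iic_disjoint_Ioi le_rfl) measurableSet_Ioi hi.integrableOn
      hi.integrableOn,
    setIntegral_congr_fun measurableSet_Iic (fun x hx => eabs_neg w x hx),
    setIntegral_congr_fun measurableSet_Ioi (fun x hx => eabs_pos w x hx),
    integral_exp_mul_complex_Iic (by simp [Real.pi_pos]),
    integral_exp_mul_complex_Ioi (by simp [Real.pi_pos])]
  have h1 : (-2 * π * w * Complex.I + 2 * π : ℂ) ≠ 0 := by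
    intro h
    have := congrArg Complex.re h
    simp at this
  have h2 : (-2 * π * w * Complex.I - 2 * π : ℂ) ≠ 0 := by
    intro h
    have := congrArg Complex.re h
    simp at this
  have h3 : (1 + w ^ 2 : ℂ) ≠ 0 := by
    have : (1 + w^2 : ℝ) ≠ 0 := by positivity
    exact_mod_cast this
  have h4 : (π : ℂ) ≠ 0 := by exact_mod_cast Real.pi_ne_zero
  simp only [Complex.ofReal_zero, mul_zero, Complex.exp_zero]
  push_cast
  rw [← mul_inv, div_add_div _ _ h1 h2, inv_eq_one_div, div_eq_div_iff (mul_ne_zero h1 h2)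
    (mul_ne_zero h4 h3)]
  linear_combination (-4 * (π:ℂ)^2 * w^2) * Complex.I_sq

open FourierTransform in
lemma charFun_stdC (t : ℝ) : charFun stdC t = Complex.exp (-(|t| : ℝ)) := by
  have hc : Continuous eabs := by unfold eabs; fun_prop
  have hi : Integrable eabs := by simpa using eabs_integrable 0
  have hfi : Integrable (𝓕 eabs) := by
    rw [eabs_fourier]
    exact (integrable_inv_one_add_sq.const_mul π⁻¹).ofReal
  have := congrFun (hc.fourierInv_fourier_eq hi hfi) (t / (2 * π))
  rw [eabs_fourier, Real.fourierInv_eq'] at this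
  rw [charFun_apply_real, stdC_integral]
  have hpi := Real.pi_pos
  convert this using 1
  · congr 1; ext z
    rw [smul_eq_mul, Complex.real_smul, mul_comm]
    congr 2
    simp
    have h4 : (π : ℂ) ≠ 0 := by exact_mod_cast Real.pi_ne_zero
    field_simp
  · rw [eabs, abs_div, abs_of_pos (show 0 < 2 * π by positivity)]
    congr 3
    field_simp

lemma stdC_stable (a b : ℝ) (ha : 0 ≤ a) (hb : 0 ≤ b) :
    Measure.conv (stdC.map (a * ·)) (stdC.map (b * ·)) = stdC.map ((a + b) * ·) := by
  have := Measure.isProbabilityMeasure_map (μ := stdC) (f := (a * ·)) (by fun_prop)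
  have := Measure.isProbabilityMeasure_map (μ := stdC) (f := (b * ·)) (by fun_prop)
  have := Measure.isProbabilityMeasure_map (μ := stdC) (f := ((a + b) * ·)) (by fun_prop)
  apply Measure.ext_of_charFun
  ext t
  rw [charFun_conv, charFun_map_mul, charFun_map_mul, charFun_map_mul, charFun_stdC,
    charFun_stdC, charFun_stdC, ← Complex.exp_add, abs_mul, abs_mul, abs_mul, abs_of_nonneg ha,
    abs_of_nonneg hb, abs_of_nonneg (add_nonneg ha hb)]
  congr 1; push_cast; ring

lemma bdd_int {α : Type*} [MeasurableSpace α] [TopologicalSpace α] [OpensMeasurableSpace α]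
    [SecondCountableTopology α] (μ : Measure α)
    [IsFiniteMeasure μ] (f : α → ℝ) (hf : Continuous f) (C : ℝ) (hC : ∀ x, |f x| ≤ C) :
    Integrable f μ :=
  Integrable.of_bound hf.aestronglyMeasurable C (Filter.Eventually.of_forall hC)

lemma stdC_stable_integral (a b : ℝ) (ha : 0 ≤ a) (hb : 0 ≤ b) (f : ℝ → ℝ) (hf : Continuous f)
    (C : ℝ) (hC : ∀ x, |f x| ≤ C) :
    ∫ y, ∫ z, f (a * y + b * z) ∂stdC ∂stdC = ∫ z, f ((a + b) * z) ∂stdC := by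
  have := Measure.isProbabilityMeasure_map (μ := stdC) (f := (a * ·)) (by fun_prop)
  have := Measure.isProbabilityMeasure_map (μ := stdC) (f := (b * ·)) (by fun_prop)
  have h := congrArg (fun m => ∫ z, f z ∂m) (stdC_stable a b ha hb)
  rw [integral_conv (bdd_int _ f hf C hC), integral_map (by fun_prop) hf.aestronglyMeasurable,
    integral_map (by fun_prop)] at h
  · rw [← h]
    congr 1; ext y
    rw [integral_map (by fun_prop)]
    exact Continuous.aestronglyMeasurable (by fun_prop)
  · apply StronglyMeasurable.aestronglyMeasurable
    apply StronglyMeasurable.integral_prod_right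
      (f := fun x y : ℝ => f (x + y))
    exact (hf.comp continuous_add).stronglyMeasurable

/-- kernel integral as expectation -/
lemma kernel_eq (κ σ t x : ℝ) (hκ : 0 < κ) (ht : 0 < t) (f : ℝ → ℝ) :
    ∫ y : ℝ, stableKernel κ σ t (x - y) * f y = ∫ z, f (x - σ * t - κ * t * z) ∂stdC := by
  have hk : 0 < κ * t := mul_pos hκ ht
  rw [stdC_integral]
  have h1 := integral_sub_left_eq_self
    (fun y => stableKernel κ σ t (x - y) * f y) volume (x - σ * t)
  have h2 := Measure.integral_comp_mul_left
    (fun y => stableKernel κ σ t (x - (x - σ * t - y)) * f (x - σ * t - y)) (κ * t)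
  rw [h1] at h2
  rw [abs_of_pos (inv_pos.mpr hk), smul_eq_mul] at h2
  rw [← mul_right_inj' (inv_pos.mpr hk).ne', ← h2, ← integral_const_mul]
  congr 1; ext z
  unfold stableKernel
  have hpi := Real.pi_pos
  have e : x - (x - σ * t - κ * t * z) - σ * t = κ * t * z := by ring
  rw [e, smul_eq_mul]
  have h3 : (1 + z^2) ≠ 0 := by positivity
  have h4 : (κ * t * z)^2 + (κ * t)^2 = (κ * t)^2 * (1 + z^2) := by ring
  rw [h4]
  field_simp

lemma cont_int {α : Type*} [TopologicalSpace α] [FirstCountableTopology α] (Φ : α → ℝ → ℝ)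
    (hΦ : Continuous (fun p : α × ℝ => Φ p.1 p.2)) (C : ℝ) (hC : ∀ a z, |Φ a z| ≤ C) :
    Continuous fun a => ∫ z, Φ a z ∂stdC := by
  refine continuous_of_dominated (bound := fun _ => C) ?_ ?_ ?_ ?_
  · intro a
    exact (hΦ.comp (by fun_prop : Continuous fun z : ℝ => (a, z))).aestronglyMeasurable
  · intro a
    exact Filter.Eventually.of_forall (hC a)
  · exact integrable_const C
  · refine Filter.Eventually.of_forall fun z => ?_
    exact (hΦ.comp (by fun_prop : Continuous fun a : α => (a, z)))

/-- the free semigroup -/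
noncomputable def freeP (κ σ t : ℝ) (f : ℝ → ℝ) (x : ℝ) : ℝ :=
  ∫ z, f (x - σ * t - κ * t * z) ∂stdC

lemma freeP_zero (κ σ : ℝ) (f : ℝ → ℝ) (x : ℝ) : freeP κ σ 0 f x = f x := by
  simp [freeP]

lemma freeP_bound (κ σ t : ℝ) (f : ℝ → ℝ) (C : ℝ) (hC : ∀ x, |f x| ≤ C) (x : ℝ) :
    |freeP κ σ t f x| ≤ C := by
  have := norm_integral_le_of_norm_le_const (μ := stdC)
    (f := fun z => f (x - σ * t - κ * t * z)) (C := C) (Filter.Eventually.of_forall fun z => hC _)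
  simpa [freeP] using this

lemma freeP_semigroup (κ σ a b : ℝ) (hκ : 0 < κ) (ha : 0 ≤ a) (hb : 0 ≤ b) (f : ℝ → ℝ)
    (hf : Continuous f) (C : ℝ) (hC : ∀ x, |f x| ≤ C) (x : ℝ) :
    freeP κ σ a (freeP κ σ b f) x = freeP κ σ (a + b) f x := by
  have := stdC_stable_integral (κ * a) (κ * b) (by positivity) (by positivity)
    (fun q => f (x - σ * (a + b) - q)) (by fun_prop) C (fun _ => hC _)
  unfold freeP
  rw [← mul_add] at this
  rw [← this]
  congr 1; ext y; congr 1; ext z; congr 1; ring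

lemma freeP_cont {α : Type*} [TopologicalSpace α] [FirstCountableTopology α] (κ σ : ℝ)
    (F : ℝ → ℝ → ℝ) (hF : Continuous (fun p : ℝ × ℝ => F p.1 p.2)) (C : ℝ)
    (hC : ∀ x t, |F x t| ≤ C) (τ ξ r : α → ℝ) (hτ : Continuous τ) (hξ : Continuous ξ)
    (hr : Continuous r) :
    Continuous fun a => freeP κ σ (τ a) (fun y => F y (r a)) (ξ a) := by
  unfold freeP
  apply cont_int (fun a z => F (ξ a - σ * τ a - κ * τ a * z) (r a)) _ C (fun _ _ => hC _ _)
  exact hF.comp (by fun_prop : Continuous fun p : α × ℝ =>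
    (ξ p.1 - σ * τ p.1 - κ * τ p.1 * p.2, r p.1))

lemma mild_shift (κ σ : ℝ) (hκ : 0 < κ) (T : ℝ) (W F : ℝ → ℝ → ℝ)
    (hW : Continuous (fun p : ℝ × ℝ => W p.1 p.2)) (hF : Continuous (fun p : ℝ × ℝ => F p.1 p.2))
    (C : ℝ) (hWC : ∀ x t, |W x t| ≤ C) (hFC : ∀ x t, |F x t| ≤ C)
    (hm : ∀ x t, 0 ≤ t → t ≤ T → W x t = freeP κ σ t (fun y => W y 0) x +
      ∫ s in Set.Ioc 0 t, freeP κ σ (t - s) (fun y => F y s) x)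
    (x t s : ℝ) (hs : 0 ≤ s) (hst : s ≤ t) (htT : t ≤ T) :
    freeP κ σ (t - s) (fun y => W y s) x = freeP κ σ t (fun y => W y 0) x +
      ∫ r in Set.Ioc 0 s, freeP κ σ (t - r) (fun y => F y r) x := by
  have hW0 : Continuous fun y => W y 0 :=
    hW.comp (by fun_prop : Continuous fun y : ℝ => (y, (0 : ℝ)))
  have e1 : freeP κ σ (t - s) (fun y => W y s) x =
      ∫ z, (freeP κ σ s (fun y => W y 0) (x - σ * (t - s) - κ * (t - s) * z) +
        ∫ r in Set.Ioc 0 s, freeP κ σ (s - r) (fun y => F y r)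
          (x - σ * (t - s) - κ * (t - s) * z)) ∂stdC := by
    unfold freeP
    congr 1; ext z
    exact hm _ s hs (hst.trans htT)
  have hc : Continuous fun p : ℝ × ℝ => freeP κ σ (s - p.2) (fun y => F y p.2)
          (x - σ * (t - s) - κ * (t - s) * p.1) :=
    freeP_cont κ σ F hF C hFC _ _ _ (by fun_prop) (by fun_prop) (by fun_prop)
  have hint : Integrable (fun p : ℝ × ℝ => freeP κ σ (s - p.2) (fun y => F y p.2)
          (x - σ * (t - s) - κ * (t - s) * p.1)) (stdC.prod (volume.restrict (Set.Ioc 0 s))) :=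
    bdd_int _ _ hc C (fun p => freeP_bound _ _ _ _ C (fun _ => hFC _ _) _)
  rw [e1, integral_add]
  · congr 1
    · have := freeP_semigroup κ σ (t - s) s hκ (by linarith) hs (fun y => W y 0) hW0 C
        (fun _ => hWC _ _) x
      rw [sub_add_cancel] at this
      exact this
    · rw [integral_integral_swap hint]
      apply setIntegral_congr_fun measurableSet_Ioc
      intro r hr
      have hFr : Continuous fun y => F y r :=
        hF.comp (by fun_prop : Continuous fun y : ℝ => (y, r))
      have := freeP_semigroup κ σ (t - s) (s - r) hκ (by linarith) (by linarith [hr.2])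
        (fun y => F y r) hFr C (fun _ => hFC _ _) x
      rw [sub_add_sub_cancel] at this
      exact this
  · refine bdd_int _ _ ?_ C (fun p => freeP_bound _ _ _ _ C (fun _ => hWC _ _) _)
    exact freeP_cont κ σ W hW C hWC (fun _ => s) _ (fun _ => 0) (by fun_prop) (by fun_prop)
      (by fun_prop)
  · exact hint.integral_prod_left

lemma step (κ σ : ℝ) (hκ : 0 < κ) (T : ℝ) (W F : ℝ → ℝ → ℝ)
    (hW : Continuous (fun p : ℝ × ℝ => W p.1 p.2)) (hF : Continuous (fun p : ℝ × ℝ => F p.1 p.2))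
    (C : ℝ) (hWC : ∀ x t, |W x t| ≤ C) (hFC : ∀ x t, |F x t| ≤ C)
    (hm : ∀ x t, 0 ≤ t → t ≤ T → W x t = freeP κ σ t (fun y => W y 0) x +
      ∫ s in Set.Ioc 0 t, freeP κ σ (t - s) (fun y => F y s) x)
    (h0 : ∀ x, 0 ≤ W x 0) (L : ℝ) (hL : 0 ≤ L)
    (hFL : ∀ x t, -(L * |W x t|) ≤ F x t)
    (c : ℝ) (hc : 0 ≤ c) (hbd : ∀ x t, 0 ≤ t → t ≤ T → -(c * Real.exp (4 * L * t)) ≤ W x t)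
    (x t : ℝ) (ht : 0 ≤ t) (htT : t ≤ T) : -(c / 2 * Real.exp (4 * L * t)) ≤ W x t := by
  have hshift := mild_shift κ σ hκ T W F hW hF C hWC hFC hm x t
  set a := freeP κ σ t (fun y => W y 0) x with ha
  set b : ℝ → ℝ := fun r => freeP κ σ (t - r) (fun y => F y r) x with hb
  have hbc : Continuous b :=
    freeP_cont κ σ F hF C hFC _ (fun _ => x) _ (by fun_prop) (by fun_prop) (by fun_prop)
  set q : ℝ → ℝ := fun s => a + ∫ r in (0:ℝ)..s, b r with hq
  have hqd : ∀ s, HasDerivAt q (b s) s := fun s =>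
    (intervalIntegral.integral_hasDerivAt_right (hbc.intervalIntegrable _ _)
      (hbc.stronglyMeasurableAtFilter _ _) hbc.continuousAt).const_add a
  have hqe : ∀ s, 0 ≤ s → s ≤ t → q s = freeP κ σ (t - s) (fun y => W y s) x := by
    intro s hs hst
    rw [hshift s hs hst htT, hq]
    simp only
    rw [intervalIntegral.integral_of_le hs]
  have hW' : ∀ s, Continuous fun y => W y s := fun s =>
    hW.comp (by fun_prop : Continuous fun y : ℝ => (y, s))
  have hF' : ∀ s, Continuous fun y => F y s := fun s =>
    hF.comp (by fun_prop : Continuous fun y : ℝ => (y, s))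
  have key : ∀ s, 0 ≤ s → s ≤ t → -(2 * L * (c * Real.exp (4 * L * s))) ≤ b s + L * q s := by
    intro s hs hst
    rw [hqe s hs hst]
    simp only [hb, freeP]
    have i1 : Integrable (fun z => F (x - σ * (t - s) - κ * (t - s) * z) s) stdC :=
      bdd_int _ _ ((hF' s).comp (by fun_prop)) C (fun _ => hFC _ _)
    have i2 : Integrable (fun z => W (x - σ * (t - s) - κ * (t - s) * z) s) stdC :=
      bdd_int _ _ ((hW' s).comp (by fun_prop)) C (fun _ => hWC _ _)
    rw [← integral_const_mul, ← integral_add i1 (i2.const_mul L)]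
    have := integral_mono (μ := stdC) (integrable_const (-(2 * L * (c * Real.exp (4 * L * s)))))
      (i1.add (i2.const_mul L)) ?_
    · simpa using this
    · intro z
      simp only [Pi.add_apply]
      generalize x - σ * (t - s) - κ * (t - s) * z = y
      have h1 := hFL y s
      have h2 := hbd y s hs (hst.trans htT)
      have h3 : 0 ≤ c * Real.exp (4 * L * s) := by positivity
      rcases le_total 0 (W y s) with hw | hw
      · rw [abs_of_nonneg hw] at h1
        have : 0 ≤ 2 * L * (c * Real.exp (4 * L * s)) := by positivity
        linarith
      · rw [abs_of_nonpos hw] at h1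
        nlinarith [mul_le_mul_of_nonneg_left h2 hL]
  set E : ℝ → ℝ := fun s => Real.exp (L * s) * (q s + c / 2 * Real.exp (4 * L * s)) with hE
  have hEd : ∀ s, HasDerivAt E (Real.exp (L * s) * L * (q s + c / 2 * Real.exp (4 * L * s)) +
      Real.exp (L * s) * (b s + c / 2 * (Real.exp (4 * L * s) * (4 * L)))) s := by
    intro s
    have d1 : HasDerivAt (fun s => Real.exp (L * s)) (Real.exp (L * s) * L) s := by
      simpa using ((hasDerivAt_id s).const_mul L).exp
    have d2 : HasDerivAt (fun s => Real.exp (4 * L * s)) (Real.exp (4 * L * s) * (4 * L)) s := by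
      simpa using ((hasDerivAt_id s).const_mul (4 * L)).exp
    exact d1.mul ((hqd s).add (d2.const_mul (c / 2)))
  have hmono : MonotoneOn E (Set.Icc 0 t) := by
    apply monotoneOn_of_deriv_nonneg (convex_Icc 0 t)
    · exact fun s _ => (hEd s).continuousAt.continuousWithinAt
    · exact fun s _ => (hEd s).differentiableAt.differentiableWithinAt
    · intro s hs
      rw [interior_Icc] at hs
      rw [(hEd s).deriv]
      have k := key s hs.1.le hs.2.le
      have h3 : 0 ≤ L * (c * Real.exp (4 * L * s)) := by positivity
      have : 0 ≤ Real.exp (L * s) * ((b s + L * q s) + 5 / 2 * (L * (c * Real.exp (4 * L * s)))) :=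
        mul_nonneg (Real.exp_pos _).le (by linarith)
      linarith
  have hE0 : 0 ≤ E 0 := by
    have : 0 ≤ a := integral_nonneg fun z => h0 _
    simp only [hE, hq]
    simp
    positivity
  have hEt := hE0.trans (hmono ⟨le_rfl, ht⟩ ⟨ht, le_rfl⟩ ht)
  have h5 := nonneg_of_mul_nonneg_right hEt (Real.exp_pos _)
  rw [hqe t ht le_rfl, sub_self, freeP_zero] at h5
  linarith

lemma core (κ σ : ℝ) (hκ : 0 < κ) (T : ℝ) (W F : ℝ → ℝ → ℝ)
    (hW : Continuous (fun p : ℝ × ℝ => W p.1 p.2)) (hF : Continuous (fun p : ℝ × ℝ => F p.1 p.2))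
    (C : ℝ) (hWC : ∀ x t, |W x t| ≤ C) (hFC : ∀ x t, |F x t| ≤ C)
    (hm : ∀ x t, 0 ≤ t → t ≤ T → W x t = freeP κ σ t (fun y => W y 0) x +
      ∫ s in Set.Ioc 0 t, freeP κ σ (t - s) (fun y => F y s) x)
    (h0 : ∀ x, 0 ≤ W x 0) (L : ℝ) (hL : 0 ≤ L)
    (hFL : ∀ x t, -(L * |W x t|) ≤ F x t)
    (x t : ℝ) (ht : 0 ≤ t) (htT : t ≤ T) : 0 ≤ W x t := by
  have hC : 0 ≤ C := (abs_nonneg _).trans (hWC 0 0)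
  have hn : ∀ n : ℕ, ∀ x t, 0 ≤ t → t ≤ T → -(C * (1 / 2) ^ n * Real.exp (4 * L * t)) ≤ W x t := by
    intro n
    induction n with
    | zero =>
      intro x t ht _
      have h1 := (abs_le.mp (hWC x t)).1
      have h2 : 1 ≤ Real.exp (4 * L * t) := Real.one_le_exp (by positivity)
      nlinarith
    | succ n ih =>
      intro x t ht htT
      have := step κ σ hκ T W F hW hF C hWC hFC hm h0 L hL hFL (C * (1 / 2) ^ n) (by positivity)
        ih x t ht htT
      rw [pow_succ]
      linarith
  have hlim : Filter.Tendsto (fun n : ℕ => -(C * (1 / 2 : ℝ) ^ n * Real.exp (4 * L * t)))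
      Filter.atTop (nhds (-(C * 0 * Real.exp (4 * L * t)))) :=
    (((tendsto_pow_atTop_nhds_zero_of_lt_one (by norm_num) (by norm_num)).const_mul C).mul_const
      _).neg
  have := le_of_tendsto' hlim (fun n => hn n x t ht htT)
  simpa using this

/-- Time-clipped version of a mild solution satisfies the probabilistic mild equation. -/
lemma mild_clip (κ σ : ℝ) (hκ : 0 < κ) (g : ℝ → ℝ) (T : ℝ) (u U : ℝ → ℝ → ℝ)
    (hu : IsMildSolution κ σ g T u) (hU : ∀ x t, 0 ≤ t → t ≤ T → U x t = u x t)
    (x t : ℝ) (ht : 0 ≤ t) (htT : t ≤ T) :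
    U x t = freeP κ σ t (fun y => U y 0) x +
      ∫ s in Set.Ioc 0 t, freeP κ σ (t - s) (fun y => g (U y s)) x := by
  rcases ht.eq_or_lt with rfl | ht'
  · simp [freeP_zero]
  rw [hU x t ht htT, hu x t ht' htT, kernel_eq κ σ t x hκ ht']
  congr 1
  · unfold freeP
    congr 1; ext z
    beta_reduce
    rw [hU _ 0 le_rfl (ht.trans htT)]
  · rw [← integral_Ioc_eq_integral_Ioo.symm, ← integral_Ioc_eq_integral_Ioo.symm]
    apply setIntegral_congr_fun measurableSet_Ioo
    intro s hs
    simp only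
    rw [kernel_eq κ σ (t - s) x hκ (by linarith [hs.2])]
    unfold freeP
    congr 1; ext z
    beta_reduce
    rw [hU _ s hs.1.le (hs.2.le.trans htT)]

/-- Comparison principle. If `g ≤ h` are locally Lipschitz,
`u, v` are bounded continuous mild solutions on `ℝ × [0,T]` of
`∂_t u + Au = g(u)`, `∂_t v + Av = h(v)`, and `u(·,0) ≤ v(·,0)`, then
`u ≤ v` on `ℝ × [0,T]`. -/
theorem mild_solution_comparison_principle
    (β : ℝ) (hβ : β ∈ Set.Ioo (-1 : ℝ) 1)
    (κ σ : ℝ) (hκ : κ = Real.cos (π * β / 2)) (hσ : σ = Real.sin (π * β / 2))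
    (g h : ℝ → ℝ) (hg : LocallyLipschitz g) (hh : LocallyLipschitz h)
    (hgh : ∀ ζ : ℝ, g ζ ≤ h ζ)
    (T : ℝ) (hT : 0 < T)
    (u v : ℝ → ℝ → ℝ)
    (hu_cont : ContinuousOn (fun p : ℝ × ℝ => u p.1 p.2)
      (Set.univ ×ˢ Set.Icc 0 T))
    (hv_cont : ContinuousOn (fun p : ℝ × ℝ => v p.1 p.2)
      (Set.univ ×ˢ Set.Icc 0 T))
    (hu_bdd : ∃ M : ℝ, ∀ x : ℝ, ∀ t ∈ Set.Icc (0 : ℝ) T, |u x t| ≤ M)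
    (hv_bdd : ∃ M : ℝ, ∀ x : ℝ, ∀ t ∈ Set.Icc (0 : ℝ) T, |v x t| ≤ M)
    (hu : IsMildSolution κ σ g T u) (hv : IsMildSolution κ σ h T v)
    (h0 : ∀ x : ℝ, u x 0 ≤ v x 0) :
    ∀ x : ℝ, ∀ t ∈ Set.Icc (0 : ℝ) T, u x t ≤ v x t := by
  have hκ0 : 0 < κ := by
    rw [hκ]
    apply Real.cos_pos_of_mem_Ioo
    constructor <;> nlinarith [Real.pi_pos, hβ.1, hβ.2]
  obtain ⟨M₁, hM₁⟩ := hu_bdd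
  obtain ⟨M₂, hM₂⟩ := hv_bdd
  set M := max M₁ M₂ with hM
  set cl : ℝ → ℝ := fun t => max 0 (min t T) with hcl
  have hclc : Continuous cl := by fun_prop
  have hclm : ∀ t, cl t ∈ Set.Icc (0:ℝ) T := fun t =>
    ⟨le_max_left _ _, max_le hT.le (min_le_right _ _)⟩
  have hcle : ∀ t, 0 ≤ t → t ≤ T → cl t = t := fun t h1 h2 => by
    simp only [hcl]; rw [min_eq_left h2, max_eq_right h1]
  set U : ℝ → ℝ → ℝ := fun x t => u x (cl t) with hU
  set V : ℝ → ℝ → ℝ := fun x t => v x (cl t) with hV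
  have hUc : Continuous (fun p : ℝ × ℝ => U p.1 p.2) :=
    hu_cont.comp_continuous (f := fun p : ℝ × ℝ => (p.1, cl p.2)) (by fun_prop)
      (fun p => ⟨Set.mem_univ _, hclm _⟩)
  have hVc : Continuous (fun p : ℝ × ℝ => V p.1 p.2) :=
    hv_cont.comp_continuous (f := fun p : ℝ × ℝ => (p.1, cl p.2)) (by fun_prop)
      (fun p => ⟨Set.mem_univ _, hclm _⟩)
  have hUM : ∀ x t, U x t ∈ Set.Icc (-M) M := fun x t =>
    abs_le.mp ((hM₁ x _ (hclm t)).trans (le_max_left _ _))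
  have hVM : ∀ x t, V x t ∈ Set.Icc (-M) M := fun x t =>
    abs_le.mp ((hM₂ x _ (hclm t)).trans (le_max_right _ _))
  have hUe : ∀ x t, 0 ≤ t → t ≤ T → U x t = u x t := fun x t h1 h2 => by
    simp only [hU]; rw [hcle t h1 h2]
  have hVe : ∀ x t, 0 ≤ t → t ≤ T → V x t = v x t := fun x t h1 h2 => by
    simp only [hV]; rw [hcle t h1 h2]
  have hgc := hg.continuous
  have hhc := hh.continuous
  obtain ⟨K, hK⟩ := LocallyLipschitzOn.exists_lipschitzOnWith_of_compact
    (isCompact_Icc (a := -M) (b := M)) (hh.locallyLipschitzOn)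
  obtain ⟨Cg, hCg⟩ := (isCompact_Icc (a := -M) (b := M)).exists_bound_of_continuousOn
    hgc.continuousOn
  obtain ⟨Ch, hCh⟩ := (isCompact_Icc (a := -M) (b := M)).exists_bound_of_continuousOn
    hhc.continuousOn
  have hgU : ∀ x t, |g (U x t)| ≤ Cg := fun x t => hCg _ (hUM x t)
  have hhV : ∀ x t, |h (V x t)| ≤ Ch := fun x t => hCh _ (hVM x t)
  have hgUc : Continuous (fun p : ℝ × ℝ => g (U p.1 p.2)) := hgc.comp hUc
  have hhVc : Continuous (fun p : ℝ × ℝ => h (V p.1 p.2)) := hhc.comp hVc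
  have mU := mild_clip κ σ hκ0 g T u U hu hUe
  have mV := mild_clip κ σ hκ0 h T v V hv hVe
  have slice : ∀ (G : ℝ → ℝ → ℝ), Continuous (fun p : ℝ × ℝ => G p.1 p.2) →
      ∀ s, Continuous fun y => G y s := fun G hG s =>
    hG.comp (by fun_prop : Continuous fun y : ℝ => (y, s))
  have sub : ∀ (A B : ℝ → ℝ → ℝ) (CA CB : ℝ), Continuous (fun p : ℝ × ℝ => A p.1 p.2) →
      Continuous (fun p : ℝ × ℝ => B p.1 p.2) → (∀ x t, |A x t| ≤ CA) → (∀ x t, |B x t| ≤ CB) →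
      ∀ τ s x, freeP κ σ τ (fun y => A y s - B y s) x =
        freeP κ σ τ (fun y => A y s) x - freeP κ σ τ (fun y => B y s) x := by
    intro A B CA CB hA hB hCA hCB τ s x
    unfold freeP
    exact integral_sub (bdd_int _ _ ((slice A hA s).comp (by fun_prop)) CA (fun _ => hCA _ _))
      (bdd_int _ _ ((slice B hB s).comp (by fun_prop)) CB (fun _ => hCB _ _))
  have hUM' : ∀ x t, |U x t| ≤ M := fun x t => abs_le.mpr (hUM x t)
  have hVM' : ∀ x t, |V x t| ≤ M := fun x t => abs_le.mpr (hVM x t)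
  have main := core κ σ hκ0 T (fun x t => V x t - U x t) (fun x t => h (V x t) - g (U x t))
    (hVc.sub hUc) (hhVc.sub hgUc) (max (M + M) (Ch + Cg))
    (fun x t => ((abs_sub _ _).trans (add_le_add (hVM' x t) (hUM' x t))).trans (le_max_left _ _))
    (fun x t => ((abs_sub _ _).trans (add_le_add (hhV x t) (hgU x t))).trans (le_max_right _ _))
    ?_ ?_ K K.2 ?_
  · intro x t ht
    have := main x t ht.1 ht.2
    rw [hUe x t ht.1 ht.2, hVe x t ht.1 ht.2] at this
    linarith
  · intro x t h1 h2
    rw [sub V U M M hVc hUc hVM' hUM']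
    simp_rw [sub (fun x t => h (V x t)) (fun x t => g (U x t)) Ch Cg hhVc hgUc hhV hgU]
    rw [mU x t h1 h2, mV x t h1 h2, integral_sub]
    · ring
    · exact bdd_int _ _ (freeP_cont κ σ (fun x t => h (V x t)) hhVc Ch hhV _ (fun _ => x) _
        (by fun_prop) (by fun_prop) (by fun_prop)) Ch
        (fun p => freeP_bound _ _ _ _ Ch (fun _ => hhV _ _) _)
    · exact bdd_int _ _ (freeP_cont κ σ (fun x t => g (U x t)) hgUc Cg hgU _ (fun _ => x) _
        (by fun_prop) (by fun_prop) (by fun_prop)) Cg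
        (fun p => freeP_bound _ _ _ _ Cg (fun _ => hgU _ _) _)
  · intro x
    rw [hUe x 0 le_rfl hT.le, hVe x 0 le_rfl hT.le]
    linarith [h0 x]
  · intro x t
    have h1 := hK.dist_le_mul _ (hVM x t) _ (hUM x t)
    rw [Real.dist_eq, Real.dist_eq] at h1
    have h2 := (abs_le.mp h1).1
    have h3 := hgh (U x t)
    linarith
end

section
/- Invariance of order intervals: let g : ℝ → ℝ be locally Lipschitz continuous, let γ ≤ δ be real numbers with g(γ) ≥ 0 and g(δ) ≤ 0, let T > 0, and let u : ℝ × [0,T] → ℝ be a bounded continuous mild solution of ∂_t u + Au = g(u). If γ ≤ u(x,0) ≤ δ for all x ∈ ℝ, then γ ≤ u(x,t) ≤ δ for all x ∈ ℝ and t ∈ [0,T]. -/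
open Real MeasureTheory

open scoped FourierTransform in
lemma fourier_E (a b : ℝ) (ha : 0 < a) :
    Integrable (fun l : ℝ => Complex.exp (-(2*π*a*|l|) + 2*π*b*l*Complex.I)) ∧
    ∀ y : ℝ, 𝓕 (fun l : ℝ => Complex.exp (-(2*π*a*|l|) + 2*π*b*l*Complex.I)) y
      = ((a / (π * ((y-b)^2 + a^2)) : ℝ) : ℂ) := by
  have key : ∀ c : ℝ, Integrable (fun l : ℝ => Complex.exp (-(2*π*a*|l|) + 2*π*c*l*Complex.I)) ∧
    ∫ l : ℝ, Complex.exp (-(2*π*a*|l|) + 2*π*c*l*Complex.I)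
      = ((a / (π * (c^2 + a^2)) : ℝ) : ℂ) := by
    intro c
    set z1 : ℂ := -(2*π*a) + 2*π*c*Complex.I with hz1
    set z2 : ℂ := (2*π*a) + 2*π*c*Complex.I with hz2
    have hpa : 0 < 2*π*a := by positivity
    have h1 : z1.re < 0 := by simp [hz1]; positivity
    have h2 : 0 < z2.re := by simp [hz2]; positivity
    have e1 : Set.EqOn (fun l : ℝ => Complex.exp (-(2*π*a*|l|) + 2*π*c*l*Complex.I))
        (fun l : ℝ => Complex.exp (z1 * l)) (Set.Ioi 0) := by
      intro l hl
      have : |l| = l := abs_of_pos hl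
      simp only [this, hz1]; congr 1; ring
    have e2 : Set.EqOn (fun l : ℝ => Complex.exp (-(2*π*a*|l|) + 2*π*c*l*Complex.I))
        (fun l : ℝ => Complex.exp (z2 * l)) (Set.Iic 0) := by
      intro l hl
      have : |l| = -l := abs_of_nonpos hl
      simp only [this, hz2]; congr 1; push_cast; ring
    have i1 := (integrableOn_exp_mul_complex_Ioi h1 0).congr_fun e1.symm measurableSet_Ioi
    have i2 := (integrableOn_exp_mul_complex_Iic h2 0).congr_fun e2.symm measurableSet_Iic
    refine ⟨?_, ?_⟩
    · rw [← integrableOn_univ, ← Set.Iic_union_Ioi (a := (0:ℝ))]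
      exact i2.union i1
    · rw [← intervalIntegral.integral_Iic_add_Ioi i2 i1, setIntegral_congr_fun measurableSet_Ioi e1,
        setIntegral_congr_fun measurableSet_Iic e2, integral_exp_mul_complex_Ioi h1,
        integral_exp_mul_complex_Iic h2]
      have n1 : z1 ≠ 0 := by intro h; simp [h] at h1
      have n2 : z2 ≠ 0 := by intro h; simp [h] at h2
      have n3 : (c^2 + a^2 : ℂ) ≠ 0 := by
        have : (c^2+a^2 : ℝ) ≠ 0 := by positivity
        exact_mod_cast this
      have n4 : (π:ℂ) ≠ 0 := by exact_mod_cast pi_ne_zero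
      have hz : z1 * z2 = -(4*π^2) * (c^2+a^2) := by
        simp only [hz1, hz2]; ring_nf; simp only [Complex.I_sq]; ring
      simp only [Complex.ofReal_zero, mul_zero, Complex.exp_zero]
      push_cast
      have : 1 / z2 + -1 / z1 = (z1 - z2) / (z1 * z2) := by field_simp; ring
      rw [this, hz]
      have : z1 - z2 = -(4*π*a) := by simp only [hz1, hz2]; ring
      rw [this]; field_simp
  refine ⟨(key b).1, fun y => ?_⟩
  rw [Real.fourier_real_eq_integral_exp_smul]
  have := (key (b - y)).2
  rw [show (b-y)^2 = (y-b)^2 by ring] at this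
  rw [← this]
  congr 1; ext l
  rw [smul_eq_mul, ← Complex.exp_add]
  congr 1; push_cast; ring

lemma cauchy_integrable (a b : ℝ) (ha : 0 < a) :
    Integrable (fun y : ℝ => a / (π * ((y-b)^2 + a^2))) := by
  have := ProbabilityTheory.integrable_cauchyPDFReal b (γ := ⟨a, ha.le⟩)
  refine this.congr (Filter.Eventually.of_forall fun y => ?_)
  change π⁻¹ * a * ((y - b) ^ 2 + a ^ 2)⁻¹ = _
  field_simp

lemma cauchy_integral (a b : ℝ) (ha : 0 < a) :
    ∫ y : ℝ, a / (π * ((y-b)^2 + a^2)) = 1 := by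
  have := ProbabilityTheory.integral_cauchyPDFReal_eq_one b (γ := ⟨a, ha.le⟩)
    (by intro h; exact ha.ne' (congrArg NNReal.toReal h))
  rw [← this]
  congr 1; ext y
  change _ = π⁻¹ * a * ((y - b) ^ 2 + a ^ 2)⁻¹
  field_simp

open scoped FourierTransform in
lemma fourier_C (a b : ℝ) (ha : 0 < a) (l : ℝ) :
    𝓕 (fun y : ℝ => ((a / (π * ((y-b)^2 + a^2)) : ℝ) : ℂ)) l =
      Complex.exp (-(2*π*a*|l|) + 2*π*(-b:ℝ)*l*Complex.I) := by
  obtain ⟨hi, hf⟩ := fourier_E a b ha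
  have hF : 𝓕 (fun l : ℝ => Complex.exp (-(2*π*a*|l|) + 2*π*b*l*Complex.I)) =
    (fun y : ℝ => ((a / (π * ((y-b)^2 + a^2)) : ℝ) : ℂ)) := funext hf
  have hc : Continuous (fun l : ℝ => Complex.exp (-(2*π*a*|l|) + 2*π*b*l*Complex.I)) := by
    fun_prop
  have hinv := hc.fourierInv_fourier_eq hi (by rw [hF]; exact (cauchy_integrable a b ha).ofReal)
  have := congrFun hinv (-l)
  rw [Real.fourierInv_eq_fourier_neg, neg_neg, hF] at this
  rw [this]; congr 1; push_cast; rw [abs_neg]; ring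

open scoped FourierTransform in
lemma cauchy_conv (a b a' b' x : ℝ) (ha : 0 < a) (ha' : 0 < a') :
    ∫ y : ℝ, (a / (π * ((x-y-b)^2 + a^2))) * (a' / (π * ((y-b')^2 + a'^2))) =
      (a+a') / (π * ((x-(b+b'))^2 + (a+a')^2)) := by
  obtain ⟨hi, hf⟩ := fourier_E a (x-b) ha
  have hF := funext hf
  have hs := VectorFourier.integral_bilin_fourierIntegral_eq_flip (.mul ℂ ℂ) (L := innerₗ ℝ)
    (μ := volume) (ν := volume) (e := 𝐞)
    (f := (fun l : ℝ => Complex.exp (-(2*π*a*|l|) + 2*π*(x-b:ℝ)*l*Complex.I)))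
    (g := (fun y : ℝ => ((a' / (π * ((y-b')^2 + a'^2)) : ℝ) : ℂ)))
    Real.continuous_fourierChar continuous_inner hi (cauchy_integrable a' b' ha').ofReal
  rw [flip_innerₗ] at hs
  change ∫ y, (𝓕 (fun l : ℝ => Complex.exp (-(2*π*a*|l|) + 2*π*(x-b:ℝ)*l*Complex.I)) y) * _ =
    ∫ l, _ * (𝓕 (fun y : ℝ => ((a' / (π * ((y-b')^2 + a'^2)) : ℝ) : ℂ)) l) at hs
  rw [hF] at hs
  simp_rw [fourier_C a' b' ha'] at hs
  obtain ⟨hi2, hf2⟩ := fourier_E (a+a') (x-(b+b')) (by positivity)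
  have h0 := hf2 0
  rw [Real.fourier_real_eq_integral_exp_smul] at h0
  have : ((∫ y : ℝ, (a / (π * ((x-y-b)^2 + a^2))) * (a' / (π * ((y-b')^2 + a'^2))) : ℝ) : ℂ) =
      (((a+a') / (π * ((x-(b+b'))^2 + (a+a')^2)) : ℝ) : ℂ) := by
    rw [← integral_complex_ofReal]
    calc _ = _ := ?_
      _ = _ := hs
      _ = _ := ?_
      _ = _ := h0
      _ = _ := by congr 3; ring
    · congr 1; ext y; push_cast; congr 4; ring
    · congr 1; ext l
      rw [← Complex.exp_add, smul_eq_mul, ← Complex.exp_add]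
      congr 1; push_cast; ring
  exact_mod_cast this

structure GoodKernel (p : ℝ → ℝ → ℝ) : Prop where
  meas : Measurable (fun q : ℝ × ℝ => p q.1 q.2)
  nonneg : ∀ t x, 0 < t → 0 ≤ p t x
  int : ∀ t, 0 < t → Integrable (p t)
  one : ∀ t, 0 < t → ∫ y, p t y = 1
  conv : ∀ a b x, 0 < a → 0 < b → ∫ y, p a (x - y) * p b y = p (a + b) x

namespace GoodKernel

lemma int' {p : ℝ → ℝ → ℝ} (h : GoodKernel p) (t x : ℝ) (ht : 0 < t) : Integrable (fun y => p t (x - y)) :=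
  (h.int t ht).comp_sub_left x

lemma one' {p : ℝ → ℝ → ℝ} (h : GoodKernel p) (t x : ℝ) (ht : 0 < t) : ∫ y, p t (x - y) = 1 := by
  rw [integral_sub_left_eq_self (p t) volume x]; exact h.one t ht

lemma mul_int {p : ℝ → ℝ → ℝ} (h : GoodKernel p) (t x : ℝ) (ht : 0 < t) {f : ℝ → ℝ} (hf : Measurable f) {M : ℝ}
    (hM : ∀ y, |f y| ≤ M) : Integrable (fun y => p t (x - y) * f y) :=
  (h.int' t x ht).mul_bdd (c := M) hf.aestronglyMeasurable (Filter.Eventually.of_forall hM)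

lemma le_of_le {p : ℝ → ℝ → ℝ} (h : GoodKernel p) (t x : ℝ) (ht : 0 < t) {f : ℝ → ℝ} (hf : Measurable f) {M : ℝ}
    (hM : ∀ y, |f y| ≤ M) {C : ℝ} (hC : ∀ y, f y ≤ C) : ∫ y, p t (x - y) * f y ≤ C := by
  calc ∫ y, p t (x - y) * f y ≤ ∫ y, p t (x - y) * C := by
        refine integral_mono (h.mul_int t x ht hf hM) ((h.int' t x ht).mul_const C) fun y => ?_
        exact mul_le_mul_of_nonneg_left (hC y) (h.nonneg _ _ ht)
    _ = C := by rw [integral_mul_const, h.one' t x ht, one_mul]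

lemma abs_le {p : ℝ → ℝ → ℝ} (h : GoodKernel p) (t x : ℝ) (ht : 0 < t) {f : ℝ → ℝ} {M : ℝ}
    (hM : ∀ y, |f y| ≤ M) : |∫ y, p t (x - y) * f y| ≤ M := by
  calc |∫ y, p t (x - y) * f y| ≤ ∫ y, p t (x - y) * M := by
        rw [← Real.norm_eq_abs]
        refine norm_integral_le_of_norm_le ((h.int' t x ht).mul_const M)
          (Filter.Eventually.of_forall fun y => ?_)
        rw [norm_mul, norm_of_nonneg (h.nonneg _ _ ht)]
        exact mul_le_mul_of_nonneg_left (hM y) (h.nonneg _ _ ht)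
    _ = M := by rw [integral_mul_const, h.one' t x ht, one_mul]

lemma meas_fix {p : ℝ → ℝ → ℝ} (h : GoodKernel p) (t x : ℝ) : Measurable (fun y => p t (x - y)) :=
  h.meas.comp (f := fun y : ℝ => (t, x - y)) (by fun_prop)

lemma conv' {p : ℝ → ℝ → ℝ} (h : GoodKernel p) (a b x z : ℝ) (ha : 0 < a) (hb : 0 < b) :
    ∫ y, p a (x - y) * p b (y - z) = p (a + b) (x - z) := by
  rw [← h.conv a b (x - z) ha hb,
    ← integral_sub_right_eq_self (fun y => p a (x - z - y) * p b y) z]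
  congr 1; ext y; congr 2; ring

lemma semigroup {p : ℝ → ℝ → ℝ} (h : GoodKernel p) (a b x : ℝ) (ha : 0 < a) (hb : 0 < b) {f : ℝ → ℝ} (hf : Measurable f) {M : ℝ}
    (hM : ∀ y, |f y| ≤ M) :
    ∫ y, p a (x - y) * ∫ z, p b (y - z) * f z = ∫ z, p (a + b) (x - z) * f z := by
  have hm : Measurable (fun q : ℝ × ℝ => p a (x - q.1) * (p b (q.1 - q.2) * f q.2)) := by
    refine (h.meas.comp (f := fun q : ℝ × ℝ => (a, x - q.1)) (by fun_prop)).mul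
      ((h.meas.comp (f := fun q : ℝ × ℝ => (b, q.1 - q.2)) (by fun_prop)).mul (by fun_prop))
  have hi : Integrable (fun q : ℝ × ℝ => p a (x - q.1) * (p b (q.1 - q.2) * f q.2))
      (volume.prod volume) := by
    rw [integrable_prod_iff hm.aestronglyMeasurable]
    refine ⟨Filter.Eventually.of_forall fun y => ?_, ?_⟩
    · exact (h.mul_int b y hb hf hM).const_mul (p a (x - y))
    · refine ((h.int' a x ha).mul_const M).mono'
        hm.aestronglyMeasurable.norm.integral_prod_right' (Filter.Eventually.of_forall fun y => ?_)
      have : ∀ z, ‖p a (x - y) * (p b (y - z) * f z)‖ = p a (x - y) * (p b (y - z) * |f z|) := by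
        intro z
        rw [norm_mul, norm_mul, norm_of_nonneg (h.nonneg _ _ ha), norm_of_nonneg (h.nonneg _ _ hb)]
        rfl
      simp only [this]
      rw [integral_const_mul, norm_mul, norm_of_nonneg (h.nonneg _ _ ha)]
      refine mul_le_mul_of_nonneg_left ?_ (h.nonneg _ _ ha)
      exact h.abs_le b y hb (f := fun z => |f z|) (fun z => by simpa using hM z)
  calc _ = ∫ y, ∫ z, p a (x - y) * (p b (y - z) * f z) := by
        congr 1; ext y; rw [integral_const_mul]
    _ = ∫ z, ∫ y, p a (x - y) * (p b (y - z) * f z) := integral_integral_swap hi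
    _ = _ := by
        congr 1; ext z; rw [← h.conv' a b x z ha hb, ← integral_mul_const]
        congr 1; ext y; ring

/-- joint measurability -/
lemma meas_duh {p : ℝ → ℝ → ℝ} (h : GoodKernel p) {F : ℝ → ℝ → ℝ} (hF : Measurable (fun q : ℝ × ℝ => F q.1 q.2)) (s : ℝ) :
    Measurable (fun q : ℝ × ℝ => ∫ z, p (s - q.2) (q.1 - z) * F z q.2) := by
  have hm : Measurable (fun w : (ℝ × ℝ) × ℝ => p (s - w.1.2) (w.1.1 - w.2) * F w.2 w.1.2) := by
    refine (h.meas.comp (f := fun w : (ℝ × ℝ) × ℝ => (s - w.1.2, w.1.1 - w.2)) (by fun_prop)).mul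
      (hF.comp (f := fun w : (ℝ × ℝ) × ℝ => (w.2, w.1.2)) (by fun_prop))
  exact (hm.stronglyMeasurable.integral_prod_right').measurable

lemma meas_duh1 {p : ℝ → ℝ → ℝ} (h : GoodKernel p) {F : ℝ → ℝ → ℝ} (hF : Measurable (fun q : ℝ × ℝ => F q.1 q.2)) (s x : ℝ) :
    Measurable (fun r : ℝ => ∫ z, p (s - r) (x - z) * F z r) :=
  (h.meas_duh hF s).comp (f := fun r : ℝ => (x, r)) (by fun_prop)

lemma fubini {p : ℝ → ℝ → ℝ} (h : GoodKernel p) (a s x : ℝ) (ha : 0 < a) {F : ℝ → ℝ → ℝ}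
    (hF : Measurable (fun q : ℝ × ℝ => F q.1 q.2)) {M : ℝ} (hM : ∀ y r, |F y r| ≤ M) :
    ∫ y, p a (x - y) * (∫ r in Set.Ioo 0 s, ∫ z, p (s - r) (y - z) * F z r) =
      ∫ r in Set.Ioo 0 s, ∫ z, p (a + s - r) (x - z) * F z r := by
  have hm : Measurable (fun q : ℝ × ℝ => p a (x - q.1) * ∫ z, p (s - q.2) (q.1 - z) * F z q.2) :=
    (h.meas.comp (f := fun q : ℝ × ℝ => (a, x - q.1)) (by fun_prop)).mul (h.meas_duh hF s)
  have hi : Integrable (fun q : ℝ × ℝ => p a (x - q.1) * ∫ z, p (s - q.2) (q.1 - z) * F z q.2)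
      (volume.prod (volume.restrict (Set.Ioo 0 s))) := by
    have h1 : Integrable (fun q : ℝ × ℝ => p a (x - q.1) * M)
      (volume.prod (volume.restrict (Set.Ioo 0 s))) :=
      (h.int' a x ha).mul_prod (integrable_const M)
    refine h1.mono' hm.aestronglyMeasurable ?_
    have : ∀ᵐ q : ℝ × ℝ ∂(volume.prod (volume.restrict (Set.Ioo 0 s))), q.2 ∈ Set.Ioo 0 s :=
      Measure.quasiMeasurePreserving_snd.ae (ae_restrict_mem measurableSet_Ioo)
    filter_upwards [this] with q hq
    rw [norm_mul, norm_of_nonneg (h.nonneg _ _ ha)]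
    exact mul_le_mul_of_nonneg_left (h.abs_le _ _ (by linarith [hq.2]) (fun y => hM y _))
      (h.nonneg _ _ ha)
  calc _ = ∫ y, ∫ r in Set.Ioo 0 s, p a (x - y) * ∫ z, p (s - r) (y - z) * F z r := by
        congr 1; ext y; rw [integral_const_mul]
    _ = ∫ r in Set.Ioo 0 s, ∫ y, p a (x - y) * ∫ z, p (s - r) (y - z) * F z r :=
        integral_integral_swap hi
    _ = _ := by
        refine setIntegral_congr_fun measurableSet_Ioo fun r hr => ?_
        have := h.semigroup a (s - r) x ha (by linarith [hr.2]) (f := fun z => F z r)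
          (hF.comp (f := fun z : ℝ => (z, r)) (by fun_prop)) (fun y => hM y r)
        simp only [this]
        congr 1; ext z; congr 2; ring

end GoodKernel

lemma exp_tail (L r t : ℝ) (hrt : r ≤ t) :
    ∫ s in Set.Ioo r t, L * exp (-L * (t - s)) = 1 - exp (-L * (t - r)) := by
  rw [← integral_Ioc_eq_integral_Ioo, ← intervalIntegral.integral_of_le hrt]
  rw [intervalIntegral.integral_eq_sub_of_hasDerivAt (f := fun s => exp (-L * (t - s)))]
  · simp
  · intro s _
    have : HasDerivAt (fun s => -L * (t - s)) L s := by
      simpa using ((hasDerivAt_id s).const_sub t).const_mul (-L)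
    simpa [mul_comm] using this.exp
  · exact (by fun_prop : Continuous fun s => L * exp (-L * (t - s))).intervalIntegrable _ _

lemma parts (L t M : ℝ) (φ : ℝ → ℝ) (hφ : Measurable φ)
    (hM : ∀ r ∈ Set.Ioo 0 t, |φ r| ≤ M) :
    ∫ s in Set.Ioo 0 t, L * exp (-L * (t - s)) * ∫ r in Set.Ioo 0 s, φ r =
    ∫ r in Set.Ioo 0 t, (1 - exp (-L * (t - r))) * φ r := by
  have hset : MeasurableSet {q : ℝ × ℝ | q.2 < q.1} := measurableSet_lt measurable_snd measurable_fst
  have hi : Integrable (fun q : ℝ × ℝ => Set.indicator {q : ℝ × ℝ | q.2 < q.1}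
      (fun q => L * exp (-L * (t - q.1)) * φ q.2) q)
      ((volume.restrict (Set.Ioo 0 t)).prod (volume.restrict (Set.Ioo 0 t))) := by
    refine Integrable.indicator ?_ hset
    refine Integrable.mul_prod (f := fun s => L * exp (-L * (t - s))) ?_ ?_
    · exact ((by fun_prop : Continuous fun s => L * exp (-L * (t - s))).integrableOn_Icc).mono_set
        Set.Ioo_subset_Icc_self
    · refine (integrable_const M).mono' hφ.aestronglyMeasurable ?_
      filter_upwards [ae_restrict_mem measurableSet_Ioo] with r hr using hM r hr
  calc _ = ∫ s in Set.Ioo 0 t, ∫ r in Set.Ioo 0 t, Set.indicator {q : ℝ × ℝ | q.2 < q.1}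
          (fun q => L * exp (-L * (t - q.1)) * φ q.2) (s, r) := by
        refine setIntegral_congr_fun measurableSet_Ioo fun s hs => ?_
        have : ∀ r, Set.indicator {q : ℝ × ℝ | q.2 < q.1}
          (fun q => L * exp (-L * (t - q.1)) * φ q.2) (s, r) =
          (Set.Iio s).indicator (fun r => L * exp (-L * (t - s)) * φ r) r := by
          intro r; simp [Set.indicator]
        simp only [this]
        rw [setIntegral_indicator measurableSet_Iio, integral_const_mul]
        congr 3
        ext r; constructor
        · rintro ⟨h1, h2⟩; exact ⟨⟨h1, h2.trans hs.2⟩, h2⟩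
        · rintro ⟨h1, h2⟩; exact ⟨h1.1, h2⟩
    _ = ∫ r in Set.Ioo 0 t, ∫ s in Set.Ioo 0 t, Set.indicator {q : ℝ × ℝ | q.2 < q.1}
          (fun q => L * exp (-L * (t - q.1)) * φ q.2) (s, r) := integral_integral_swap hi
    _ = _ := by
        refine setIntegral_congr_fun measurableSet_Ioo fun r hr => ?_
        have : ∀ s, Set.indicator {q : ℝ × ℝ | q.2 < q.1}
          (fun q => L * exp (-L * (t - q.1)) * φ q.2) (s, r) =
          (Set.Ioi r).indicator (fun s => L * exp (-L * (t - s)) * φ r) s := by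
          intro s; simp [Set.indicator]
        simp only [this]
        rw [setIntegral_indicator measurableSet_Ioi, integral_mul_const, ← exp_tail L r t hr.2.le]
        congr 3
        ext s; constructor
        · rintro ⟨h1, h2⟩; exact ⟨h2, h1.2⟩
        · rintro ⟨h1, h2⟩; exact ⟨⟨hr.1.trans h1, h2⟩, h1⟩

lemma duhamel_exp {p : ℝ → ℝ → ℝ} (h : GoodKernel p) (u F : ℝ → ℝ → ℝ) (T M : ℝ)
    (hu : Measurable (fun q : ℝ × ℝ => u q.1 q.2)) (hF : Measurable (fun q : ℝ × ℝ => F q.1 q.2))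
    (huM : ∀ y r, |u y r| ≤ M) (hFM : ∀ y r, |F y r| ≤ M)
    (hmild : ∀ x t, 0 < t → t ≤ T → u x t = (∫ y, p t (x - y) * u y 0) +
      ∫ s in Set.Ioo 0 t, ∫ y, p (t - s) (x - y) * F y s) (L x t : ℝ) (ht : 0 < t) (htT : t ≤ T) :
    u x t = exp (-L * t) * (∫ y, p t (x - y) * u y 0) +
      ∫ s in Set.Ioo 0 t, exp (-L * (t - s)) * ∫ y, p (t - s) (x - y) * (F y s + L * u y s) := by
  set A := ∫ y, p t (x - y) * u y 0 with hA
  set φ : ℝ → ℝ := fun r => ∫ z, p (t - r) (x - z) * F z r with hφ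
  have hus : ∀ s, Measurable (fun y => u y s) := fun s =>
    hu.comp (f := fun z : ℝ => (z, s)) (by fun_prop)
  have hFs : ∀ s, Measurable (fun y => F y s) := fun s =>
    hF.comp (f := fun z : ℝ => (z, s)) (by fun_prop)
  have hφm : Measurable φ := h.meas_duh1 hF t x
  have hφM : ∀ r ∈ Set.Ioo 0 t, |φ r| ≤ M := fun r hr =>
    h.abs_le _ _ (by linarith [hr.2]) (fun y => hFM y r)
  have hφi : IntegrableOn φ (Set.Ioo 0 t) := by
    refine (integrable_const M).mono' hφm.aestronglyMeasurable ?_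
    filter_upwards [ae_restrict_mem measurableSet_Ioo] with r hr using hφM r hr
  set ψ : ℝ → ℝ := fun s => ∫ y, p (t - s) (x - y) * u y s with hψ
  have hψm : Measurable ψ := h.meas_duh1 hu t x
  have hψM : ∀ r ∈ Set.Ioo 0 t, |ψ r| ≤ M := fun r hr =>
    h.abs_le _ _ (by linarith [hr.2]) (fun y => huM y r)
  have hψi : IntegrableOn ψ (Set.Ioo 0 t) := by
    refine (integrable_const M).mono' hψm.aestronglyMeasurable ?_
    filter_upwards [ae_restrict_mem measurableSet_Ioo] with r hr using hψM r hr
  have key : ∀ s ∈ Set.Ioo 0 t, ψ s = A + ∫ r in Set.Ioo 0 s, φ r := by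
    intro s hs
    have hts : 0 < t - s := by linarith [hs.2]
    have e1 : ∀ y, u y s = (∫ z, p s (y - z) * u z 0) +
      ∫ r in Set.Ioo 0 s, ∫ z, p (s - r) (y - z) * F z r := fun y =>
      hmild y s hs.1 (hs.2.le.trans htT)
    have hd1 : ∀ y, |∫ z, p s (y - z) * u z 0| ≤ M := fun y => h.abs_le _ _ hs.1 (fun y => huM y 0)
    have hd1m : Measurable (fun y => ∫ z, p s (y - z) * u z 0) := by
      have := (h.meas_duh (F := fun z _ => u z 0)
        (hu.comp (f := fun q : ℝ × ℝ => (q.1, (0:ℝ))) (by fun_prop)) s).comp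
        (f := fun y : ℝ => (y, (0:ℝ))) (by fun_prop)
      simpa [Function.comp_def] using this
    have e2 : ∀ y, p (t - s) (x - y) * u y s = p (t - s) (x - y) * (∫ z, p s (y - z) * u z 0) +
      p (t - s) (x - y) * ∫ r in Set.Ioo 0 s, ∫ z, p (s - r) (y - z) * F z r := fun y => by
      rw [e1 y]; ring
    have i1 := h.mul_int (t - s) x hts hd1m hd1
    have i0 := h.mul_int (t - s) x hts (hus s) (fun y => huM y s)
    have i2 : Integrable (fun y => p (t - s) (x - y) *
        ∫ r in Set.Ioo 0 s, ∫ z, p (s - r) (y - z) * F z r) := by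
      refine (i0.sub i1).congr (Filter.Eventually.of_forall fun y => ?_)
      simp only [Pi.sub_apply]; rw [e2 y]; ring
    simp only [hψ]
    simp_rw [e2]
    rw [integral_add i1 i2, h.semigroup _ _ _ hts hs.1 (hus 0) (fun y => huM y 0),
      h.fubini _ _ _ hts hF hFM]
    simp only [sub_add_cancel]; rfl
  have c1 : Continuous (fun s => exp (-L * (t - s))) := by fun_prop
  have bI : ∀ f : ℝ → ℝ, IntegrableOn f (Set.Ioo 0 t) →
      IntegrableOn (fun s => exp (-L * (t - s)) * f s) (Set.Ioo 0 t) := by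
    intro f hf
    obtain ⟨C, hC⟩ := (isCompact_Icc (a := (0:ℝ)) (b := t)).exists_bound_of_continuousOn
      c1.continuousOn
    refine Integrable.bdd_mul (c := C) hf c1.aestronglyMeasurable ?_
    filter_upwards [ae_restrict_mem measurableSet_Ioo] with r hr using
      hC r (Set.Ioo_subset_Icc_self hr)
  have split : ∫ s in Set.Ioo 0 t, exp (-L * (t - s)) *
      ∫ y, p (t - s) (x - y) * (F y s + L * u y s) =
      (∫ s in Set.Ioo 0 t, exp (-L * (t - s)) * φ s) +
      ∫ s in Set.Ioo 0 t, exp (-L * (t - s)) * (L * ψ s) := by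
    rw [← integral_add (bI φ hφi) (bI _ (hψi.const_mul L))]
    refine setIntegral_congr_fun measurableSet_Ioo fun s hs => ?_
    have hts : 0 < t - s := by linarith [hs.2]
    simp only [hφ, hψ]
    rw [← mul_add, ← integral_const_mul L, ← integral_add (h.mul_int _ x hts (hFs s) (fun y => hFM y s))
      ((h.mul_int _ x hts (hus s) (fun y => huM y s)).const_mul L)]
    congr 2; ext y; ring
  have hE : IntegrableOn (fun s => L * exp (-L * (t - s))) (Set.Ioo 0 t) :=
    ((by fun_prop : Continuous fun s => L * exp (-L * (t - s))).integrableOn_Icc).mono_set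
        Set.Ioo_subset_Icc_self
  have second : ∫ s in Set.Ioo 0 t, exp (-L * (t - s)) * (L * ψ s) =
      (1 - exp (-L * t)) * A + ∫ r in Set.Ioo 0 t, (1 - exp (-L * (t - r))) * φ r := by
    have e3 : Set.EqOn (fun s => exp (-L * (t - s)) * (L * ψ s))
      (fun s => L * exp (-L * (t - s)) * A + L * exp (-L * (t - s)) * ∫ r in Set.Ioo 0 s, φ r)
      (Set.Ioo 0 t) := by
      intro s hs; simp only [key s hs]; ring
    have j1 : IntegrableOn (fun s => L * exp (-L * (t - s)) * A) (Set.Ioo 0 t) := hE.mul_const A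
    have j0 := (bI _ (hψi.const_mul L)).congr_fun e3 measurableSet_Ioo
    have j2 : IntegrableOn (fun s => L * exp (-L * (t - s)) * ∫ r in Set.Ioo 0 s, φ r)
        (Set.Ioo 0 t) := by
      refine (j0.sub j1).congr (Filter.Eventually.of_forall fun y => ?_)
      simp only [Pi.sub_apply]; ring
    rw [setIntegral_congr_fun measurableSet_Ioo e3, integral_add j1 j2, integral_mul_const,
      exp_tail L 0 t ht.le, parts L t M φ hφm hφM, sub_zero]
  have third : ∫ r in Set.Ioo 0 t, (1 - exp (-L * (t - r))) * φ r =
      (∫ r in Set.Ioo 0 t, φ r) - ∫ r in Set.Ioo 0 t, exp (-L * (t - r)) * φ r := by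
    rw [← integral_sub hφi (bI φ hφi)]
    congr 1; ext r; ring
  rw [split, second, third, hmild x t ht htT]
  ring

lemma stable_good (κ σ : ℝ) (hκ : 0 < κ) : GoodKernel (stableKernel κ σ) where
  meas := by unfold stableKernel; fun_prop
  nonneg t x ht := by unfold stableKernel; positivity
  int t ht := cauchy_integrable (κ * t) (σ * t) (by positivity)
  one t ht := cauchy_integral (κ * t) (σ * t) (by positivity)
  conv a b x ha hb := by
    have := cauchy_conv (κ * a) (σ * a) (κ * b) (σ * b) x (by positivity) (by positivity)
    unfold stableKernel
    rw [this, mul_add κ, mul_add σ]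

/-- Upper bound for globally defined continuous bounded mild solutions. -/
lemma upper_bound {p : ℝ → ℝ → ℝ} (h : GoodKernel p) (g : ℝ → ℝ) (hg : LocallyLipschitz g)
    (δ T : ℝ) (hgδ : g δ ≤ 0) (u : ℝ → ℝ → ℝ)
    (hu : Continuous (fun q : ℝ × ℝ => u q.1 q.2)) (M : ℝ) (huM : ∀ y r, |u y r| ≤ M)
    (hmild : ∀ x t, 0 < t → t ≤ T → u x t = (∫ y, p t (x - y) * u y 0) +
      ∫ s in Set.Ioo 0 t, ∫ y, p (t - s) (x - y) * g (u y s))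
    (h0 : ∀ x, u x 0 ≤ δ) : ∀ x t, 0 < t → t ≤ T → u x t ≤ δ := by
  have hM0 : 0 ≤ M := (abs_nonneg _).trans (huM 0 0)
  set R := M + |δ| with hR
  have hδR : δ ∈ Set.Icc (-R) R := by
    rw [Set.mem_Icc, ← abs_le]; linarith
  have huR : ∀ y r, u y r ∈ Set.Icc (-R) R := fun y r => by
    rw [Set.mem_Icc, ← abs_le]; linarith [huM y r, abs_nonneg δ]
  obtain ⟨K, hK⟩ := (hg.locallyLipschitzOn (s := Set.Icc (-R) R)).exists_lipschitzOnWith_of_compact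
    isCompact_Icc
  set L : ℝ := (K : ℝ) with hL
  have hL0 : 0 ≤ L := K.2
  have hlip : ∀ y r, g (u y r) ≤ L * |u y r - δ| := fun y r => by
    have := hK.dist_le_mul _ (huR y r) _ hδR
    rw [Real.dist_eq, Real.dist_eq] at this
    linarith [le_abs_self (g (u y r) - g δ)]
  obtain ⟨M₁, hM₁⟩ := isCompact_Icc.exists_bound_of_continuousOn
    (hg.continuous.continuousOn (s := Set.Icc (-R) R))
  set N := max M M₁
  have hFc : Continuous (fun q : ℝ × ℝ => g (u q.1 q.2)) := hg.continuous.comp hu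
  have huN : ∀ y r, |u y r| ≤ N := fun y r => (huM y r).trans (le_max_left _ _)
  have hFN : ∀ y r, |g (u y r)| ≤ N := fun y r => (hM₁ _ (huR y r)).trans (le_max_right _ _)
  have hexp := duhamel_exp h u (fun y s => g (u y s)) T N hu.measurable hFc.measurable huN hFN hmild L
  have hGm : Measurable (fun q : ℝ × ℝ => g (u q.1 q.2) + L * u q.1 q.2) :=
    (hFc.add (hu.const_mul L)).measurable
  have hGM : ∀ y r, |g (u y r) + L * u y r| ≤ N + L * N := fun y r => by
    refine (abs_add_le _ _).trans (add_le_add (hFN y r) ?_)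
    rw [abs_mul, abs_of_nonneg hL0]
    exact mul_le_mul_of_nonneg_left (huN y r) hL0
  -- iteration
  have iter : ∀ n : ℕ, ∀ x t, 0 < t → t ≤ T → u x t ≤ δ + R * ((2 * L * t) ^ n / n.factorial) := by
    intro n
    induction n with
    | zero =>
      intro x t _ _
      simp only [pow_zero, Nat.factorial_zero, Nat.cast_one, div_one, mul_one]
      linarith [le_abs_self (u x t), huM x t, neg_abs_le δ]
    | succ n ih =>
      intro x t ht htT
      have hR0 : 0 ≤ R := by positivity
      set B : ℝ → ℝ := fun s => R * ((2 * L * s) ^ n / n.factorial) with hB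
      have hBc : Continuous B := by fun_prop
      have hB0 : ∀ s, 0 ≤ s → 0 ≤ B s := fun s hs => by positivity
      rw [hexp x t ht htT]
      have p1 : ∫ y, p t (x - y) * u y 0 ≤ δ := h.le_of_le t x ht
        (hu.comp (f := fun q : ℝ × ℝ => q) (g := fun q : ℝ × ℝ => u q.1 q.2) continuous_id |>.comp
          (f := fun y : ℝ => (y, (0:ℝ))) (by fun_prop)).measurable (fun y => huM y 0) h0
      have p2 : ∫ s in Set.Ioo 0 t, exp (-L * (t - s)) *
          ∫ y, p (t - s) (x - y) * (g (u y s) + L * u y s) ≤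
          ∫ s in Set.Ioo 0 t, (L * exp (-L * (t - s)) * δ + 2 * L * B s) := by
        refine setIntegral_mono_on ?_ ?_ measurableSet_Ioo ?_
        · refine (integrable_const (N + L * N)).mono'
            (((by fun_prop : Measurable fun s => exp (-L * (t - s)))).mul
              (h.meas_duh1 (F := fun y s => g (u y s) + L * u y s) hGm t x)).aestronglyMeasurable ?_
          filter_upwards [ae_restrict_mem measurableSet_Ioo] with s hs
          have hts : 0 < t - s := by linarith [hs.2]
          rw [norm_mul, norm_of_nonneg (exp_pos _).le]
          have q1 : exp (-L * (t - s)) ≤ 1 := exp_le_one_iff.2 (by nlinarith)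
          have q2 := h.abs_le (t - s) x hts (fun y => hGM y s)
          calc _ ≤ 1 * (N + L * N) := mul_le_mul q1 q2 (abs_nonneg _) zero_le_one
            _ = _ := one_mul _
        · exact ((by fun_prop : Continuous fun s =>
            L * exp (-L * (t - s)) * δ + 2 * L * B s).integrableOn_Icc).mono_set
            Set.Ioo_subset_Icc_self
        · intro s hs
          have hts : 0 < t - s := by linarith [hs.2]
          have q1 : exp (-L * (t - s)) ≤ 1 := exp_le_one_iff.2 (by nlinarith)
          have hBs := hB0 s hs.1.le
          have q2 : ∫ y, p (t - s) (x - y) * (g (u y s) + L * u y s) ≤ L * δ + 2 * L * B s := by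
            refine h.le_of_le (t - s) x hts
              (hGm.comp (f := fun y : ℝ => (y, s)) (by fun_prop)) (fun y => hGM y s) fun y => ?_
            change g (u y s) + L * u y s ≤ L * δ + 2 * L * B s
            have i1 := ih y s hs.1 (hs.2.le.trans htT)
            have i2 := hlip y s
            have i3 : 0 ≤ L * B s := mul_nonneg hL0 hBs
            rcases le_total (u y s) δ with hc | hc
            · rw [abs_of_nonpos (by linarith)] at i2
              nlinarith
            · rw [abs_of_nonneg (by linarith)] at i2
              have : L * (u y s) ≤ L * (δ + B s) := mul_le_mul_of_nonneg_left i1 hL0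
              nlinarith
          calc _ ≤ exp (-L * (t - s)) * (L * δ + 2 * L * B s) :=
                mul_le_mul_of_nonneg_left q2 (exp_pos _).le
            _ = L * exp (-L * (t - s)) * δ + exp (-L * (t - s)) * (2 * L * B s) := by ring
            _ ≤ L * exp (-L * (t - s)) * δ + 1 * (2 * L * B s) := by
                have : 0 ≤ 2 * L * B s := by positivity
                gcongr
            _ = _ := by ring
      have p3 : ∫ s in Set.Ioo 0 t, (L * exp (-L * (t - s)) * δ + 2 * L * B s) =
          (1 - exp (-L * t)) * δ + R * ((2 * L * t) ^ (n+1) / (n+1).factorial) := by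
        rw [integral_add, integral_mul_const, exp_tail L 0 t ht.le, sub_zero]
        · congr 1
          rw [← integral_Ioc_eq_integral_Ioo, ← intervalIntegral.integral_of_le ht.le]
          have : ∀ s, 2 * L * B s = (2 * L * R * (2 * L) ^ n / n.factorial) * s ^ n := fun s => by
            simp only [hB, mul_pow]; ring
          simp_rw [this]
          rw [intervalIntegral.integral_const_mul, integral_pow, Nat.factorial_succ]
          push_cast
          field_simp
          ring
        · exact ((by fun_prop : Continuous fun s =>
            L * exp (-L * (t - s)) * δ).integrableOn_Icc).mono_set Set.Ioo_subset_Icc_self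
        · exact ((by fun_prop : Continuous fun s =>
            2 * L * B s).integrableOn_Icc).mono_set Set.Ioo_subset_Icc_self
      have p4 := mul_le_mul_of_nonneg_left p1 (exp_pos (-L * t)).le
      linarith
  intro x t ht htT
  have lim : Filter.Tendsto (fun n : ℕ => δ + R * ((2 * L * t) ^ n / n.factorial)) Filter.atTop
      (nhds (δ + R * 0)) :=
    ((FloorSemiring.tendsto_pow_div_factorial_atTop (2 * L * t)).const_mul R).const_add δ
  rw [mul_zero, add_zero] at lim
  exact ge_of_tendsto' lim (fun n => iter n x t ht htT)

/-- Invariance of order intervals. If `g` is locally Lipschitz,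
`γ ≤ δ`, `g(γ) ≥ 0 ≥ g(δ)`, and `u` is a bounded continuous mild solution of
`∂_t u + Au = g(u)` on `ℝ × [0,T]` with `γ ≤ u(·,0) ≤ δ`, then
`γ ≤ u(x,t) ≤ δ` for all `x ∈ ℝ`, `t ∈ [0,T]`. -/
theorem mild_solution_order_interval_invariance
    (β : ℝ) (hβ : β ∈ Set.Ioo (-1 : ℝ) 1)
    (κ σ : ℝ) (hκ : κ = Real.cos (π * β / 2)) (hσ : σ = Real.sin (π * β / 2))
    (g : ℝ → ℝ) (hg : LocallyLipschitz g)
    (γ δ : ℝ) (hγδ : γ ≤ δ) (hgγ : 0 ≤ g γ) (hgδ : g δ ≤ 0)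
    (T : ℝ) (hT : 0 < T)
    (u : ℝ → ℝ → ℝ)
    (hu_cont : ContinuousOn (fun p : ℝ × ℝ => u p.1 p.2)
      (Set.univ ×ˢ Set.Icc 0 T))
    (hu_bdd : ∃ M : ℝ, ∀ x : ℝ, ∀ t ∈ Set.Icc (0 : ℝ) T, |u x t| ≤ M)
    (hu : IsMildSolution κ σ g T u)
    (h0 : ∀ x : ℝ, u x 0 ∈ Set.Icc γ δ) :
    ∀ x : ℝ, ∀ t ∈ Set.Icc (0 : ℝ) T, u x t ∈ Set.Icc γ δ := by
  have hκ0 : 0 < κ := by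
    rw [hκ]
    apply cos_pos_of_mem_Ioo
    constructor <;> nlinarith [hβ.1, hβ.2, pi_pos]
  have hgood := stable_good κ σ hκ0
  obtain ⟨M, hM⟩ := hu_bdd
  set c : ℝ → ℝ := fun s => max 0 (min T s) with hc
  have hcmem : ∀ s, c s ∈ Set.Icc (0:ℝ) T := fun s =>
    ⟨le_max_left _ _, max_le hT.le (min_le_left _ _)⟩
  have hcid : ∀ s ∈ Set.Icc (0:ℝ) T, c s = s := fun s hs => by
    simp only [hc]; rw [min_eq_right hs.2, max_eq_right hs.1]
  set v : ℝ → ℝ → ℝ := fun x s => u x (c s) with hv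
  have hvc : Continuous (fun q : ℝ × ℝ => v q.1 q.2) := by
    have hcc : Continuous (fun q : ℝ × ℝ => (q.1, c q.2)) := by simp only [hc]; fun_prop
    exact hu_cont.comp_continuous hcc (fun q => ⟨trivial, hcmem _⟩)
  have hvM : ∀ y r, |v y r| ≤ M := fun y r => hM y _ (hcmem r)
  have hv0 : ∀ y, v y 0 = u y 0 := fun y => by
    simp only [hv]; rw [hcid 0 ⟨le_rfl, hT.le⟩]
  have hmild : ∀ x t, 0 < t → t ≤ T → v x t = (∫ y, stableKernel κ σ t (x - y) * v y 0) +
      ∫ s in Set.Ioo 0 t, ∫ y, stableKernel κ σ (t - s) (x - y) * g (v y s) := by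
    intro x t ht htT
    have := hu x t ht htT
    rw [integral_Ioc_eq_integral_Ioo] at this
    simp only [hv0]
    have e : v x t = u x t := by simp only [hv]; rw [hcid t ⟨ht.le, htT⟩]
    rw [e, this]
    congr 1
    refine setIntegral_congr_fun measurableSet_Ioo fun s hs => ?_
    simp only [hv]; rw [hcid s ⟨hs.1.le, hs.2.le.trans htT⟩]
  have up := upper_bound hgood g hg δ T hgδ v hvc M hvM hmild (fun x => by rw [hv0]; exact (h0 x).2)
  have hg' : LocallyLipschitz (fun z => -g (-z)) := by
    have hn : LipschitzWith 1 (fun z : ℝ => -z) := LipschitzWith.id.neg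
    exact hn.locallyLipschitz.comp (hg.comp hn.locallyLipschitz)
  have lo := upper_bound hgood (fun z => -g (-z)) hg' (-γ) T (by simpa using hgγ)
    (fun x s => -v x s) hvc.neg M (by simpa using hvM) (by
      intro x t ht htT
      simp only [neg_neg, mul_neg, integral_neg]
      rw [hmild x t ht htT]; ring) (fun x => by
      simp only [hv0]; linarith [(h0 x).1])
  intro x t ht
  rcases ht.1.eq_or_lt with h | h
  · rw [← h]; exact h0 x
  · have h1 := up x t h ht.2
    have h2 := lo x t h ht.2
    have e : v x t = u x t := by simp only [hv]; rw [hcid t ht]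
    simp only [e] at h1 h2
    exact ⟨by linarith, h1⟩
end

section
/- Comparison with step-function initial data: let g : ℝ → ℝ be locally Lipschitz continuous, let T > 0, and let u : ℝ × [0,T] → ℝ be a bounded continuous mild solution of ∂_t u + Au = g(u) such that u(·,0) has finite limits at +∞ and −∞. Let N ≥ 1, a₀, a₁, …, a_N ∈ ℝ, c₁ < c₂ < … < c_N, and set v₀(x) = a₀ + Σ_{j=1}^N a_j·H(x − c_j), where H is the Heaviside function; let γ = min_{x∈ℝ} v₀(x) and δ = max_{x∈ℝ} v₀(x). If g(ζ) ≥ 0 for all ζ ∈ [γ,δ] and u(x,0) ≥ v₀(x) for all x ∈ ℝ, then u(x,t) ≥ a₀ + Σ_{j=1}^N a_j·F((x − c_j)/t) for all x ∈ ℝ and t ∈ (0,T]. -/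
open Real MeasureTheory Filter Topology

/-- The Heaviside function. -/
noncomputable def heaviside (x : ℝ) : ℝ := if 0 ≤ x then 1 else 0

lemma aux_exp_int (a : ℂ) (ha : 0 < a.re) (b : ℂ) (hb : b.re < 0) :
    Integrable (fun v : ℝ => if v ≤ 0 then Complex.exp (a * v) else Complex.exp (b * v)) ∧
    ∫ v : ℝ, (if v ≤ 0 then Complex.exp (a * v) else Complex.exp (b * v)) = 1 / a - 1 / b := by
  have h1 : IntegrableOn (fun v : ℝ => if v ≤ 0 then Complex.exp (a * v) else Complex.exp (b * v)) (Set.Iic 0) := by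
    refine (integrableOn_exp_mul_complex_Iic ha 0).congr_fun ?_ measurableSet_Iic
    intro v hv
    simp only [Set.mem_Iic] at hv
    simp [hv]
  have h2 : IntegrableOn (fun v : ℝ => if v ≤ 0 then Complex.exp (a * v) else Complex.exp (b * v)) (Set.Ioi 0) := by
    refine (integrableOn_exp_mul_complex_Ioi hb 0).congr_fun ?_ measurableSet_Ioi
    intro v hv
    simp only [Set.mem_Ioi] at hv
    simp [not_le.mpr hv]
  constructor
  · rw [← integrableOn_univ, ← Set.Iic_union_Ioi (a := (0:ℝ))]
    exact h1.union h2
  · rw [← intervalIntegral.integral_Iic_add_Ioi h1 h2]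
    have e1 : ∫ v in Set.Iic (0:ℝ), (if v ≤ 0 then Complex.exp (a * v) else Complex.exp (b * v))
        = ∫ v in Set.Iic (0:ℝ), Complex.exp (a * v) := by
      refine setIntegral_congr_fun measurableSet_Iic ?_
      intro v hv
      simp only [Set.mem_Iic] at hv
      simp [hv]
    have e2 : ∫ v in Set.Ioi (0:ℝ), (if v ≤ 0 then Complex.exp (a * v) else Complex.exp (b * v))
        = ∫ v in Set.Ioi (0:ℝ), Complex.exp (b * v) := by
      refine setIntegral_congr_fun measurableSet_Ioi ?_
      intro v hv
      simp only [Set.mem_Ioi] at hv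
      simp [not_le.mpr hv]
    rw [e1, e2, integral_exp_mul_complex_Iic ha, integral_exp_mul_complex_Ioi hb]
    simp
    ring

open ProbabilityTheory FourierTransform in
lemma charFun_cauchy (x₀ : ℝ) (γ : NNReal) (hγ : γ ≠ 0) (t : ℝ) :
    charFun (cauchyMeasure x₀ γ) t = Complex.exp (x₀ * t * Complex.I - γ * |t|) := by
  have hγ' : (0:ℝ) < γ := by positivity
  set f : ℝ → ℂ := fun v => Complex.exp (2 * π * x₀ * v * Complex.I - 2 * π * γ * |v|) with hf
  have fcont : Continuous f := by rw [hf]; fun_prop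
  have key : ∀ w v : ℝ, Complex.exp (-(2 * π * v * w * Complex.I)) * f v =
      if v ≤ 0 then Complex.exp ((2 * π * γ + 2 * π * (x₀ - w) * Complex.I) * v)
        else Complex.exp ((-(2 * π * γ) + 2 * π * (x₀ - w) * Complex.I) * v) := by
    intro w v
    rw [hf]
    simp only
    rw [← Complex.exp_add]
    split_ifs with h
    · rw [abs_of_nonpos h]; congr 1; push_cast; ring
    · rw [abs_of_pos (not_le.mp h)]; congr 1; ring
  have hre : ∀ w : ℝ, 0 < (2 * π * γ + 2 * π * (x₀ - w) * Complex.I : ℂ).re := by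
    intro w; simp; positivity
  have hre' : ∀ w : ℝ, (-(2 * π * γ) + 2 * π * (x₀ - w) * Complex.I : ℂ).re < 0 := by
    intro w; simp; positivity
  have fint : Integrable f := by
    have := (aux_exp_int _ (hre 0) _ (hre' 0)).1
    refine this.congr (ae_of_all _ fun v => ?_)
    simp only
    rw [← key 0 v]; simp
  have fF : 𝓕 f = fun w => ((cauchyPDFReal x₀ γ w : ℝ) : ℂ) := by
    ext w
    rw [Real.fourier_real_eq_integral_exp_smul]
    have : ∀ v : ℝ, Complex.exp (↑(-2 * π * v * w) * Complex.I) • f v = Complex.exp (-(2 * π * v * w * Complex.I)) * f v := by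
      intro v
      rw [smul_eq_mul]; congr 2; push_cast; ring
    simp_rw [this, key]
    rw [(aux_exp_int _ (hre w) _ (hre' w)).2, cauchyPDFReal_def]
    have n1 : (2 * π * γ + 2 * π * (x₀ - w) * Complex.I : ℂ) ≠ 0 := by
      intro h; have := hre w; rw [h] at this; simp at this
    have n2 : (-(2 * π * γ) + 2 * π * (x₀ - w) * Complex.I : ℂ) ≠ 0 := by
      intro h; have := hre' w; rw [h] at this; simp at this
    have n3 : (((w - x₀) ^ 2 + γ ^ 2 : ℝ) : ℂ) ≠ 0 := by
      have : ((w - x₀) ^ 2 + γ ^ 2 : ℝ) ≠ 0 := by positivity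
      exact_mod_cast this
    have n4 : (π : ℂ) ≠ 0 := by exact_mod_cast pi_ne_zero
    push_cast at n3 ⊢
    have hI := Complex.I_sq
    rw [div_sub_div _ _ n1 n2, div_eq_iff (mul_ne_zero n1 n2)]
    field_simp
    linear_combination (-2 * γ  * (w - x₀)^2 : ℂ) * hI
  have inv := congrFun (fcont.fourierInv_fourier_eq fint (by
    rw [fF]; exact (integrable_cauchyPDFReal x₀).ofReal)) (t / (2 * π))
  rw [fF, Real.fourierInv_eq_fourier_neg, Real.fourier_real_eq_integral_exp_smul] at inv
  rw [charFun_apply_real, cauchyMeasure_of_scale_ne_zero _ hγ]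
  rw [integral_withDensity_eq_integral_toReal_smul (by fun_prop) (ae_of_all _ fun x => by simp [cauchyPDF])]
  have : ∀ x : ℝ, (cauchyPDF x₀ γ x).toReal • Complex.exp (t * x * Complex.I) =
     Complex.exp (↑(-2 * π * x * -(t/(2*π))) * Complex.I) • ((cauchyPDFReal x₀ γ x : ℝ) : ℂ) := by
    intro x
    rw [cauchyPDF, ENNReal.toReal_ofReal (cauchyPDF_pos x₀ hγ x).le, Complex.real_smul, smul_eq_mul, mul_comm]
    congr 4
    have := pi_ne_zero
    rw [← Complex.ofReal_mul]; congr 1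
    field_simp
  simp_rw [this]
  rw [inv, hf]
  simp only
  have n4 : (π : ℂ) ≠ 0 := by exact_mod_cast pi_ne_zero
  congr 1
  rw [abs_div, abs_of_pos (by positivity : (0:ℝ) < 2 * π)]
  push_cast
  field_simp

open ProbabilityTheory in
lemma cauchy_conv_s16 (x₀ y₀ : ℝ) (γ δ : NNReal) (hγ : γ ≠ 0) (hδ : δ ≠ 0) :
    (cauchyMeasure x₀ γ).conv (cauchyMeasure y₀ δ) = cauchyMeasure (x₀ + y₀) (γ + δ) := by
  apply Measure.ext_of_charFun
  ext t
  rw [charFun_conv, charFun_cauchy _ _ hγ, charFun_cauchy _ _ hδ, charFun_cauchy _ _ (by positivity), ← Complex.exp_add]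
  congr 1
  push_cast
  ring

/-- The free evolution. -/
noncomputable def Pk (κ σ t : ℝ) (f : ℝ → ℝ) (x : ℝ) : ℝ :=
  ∫ y : ℝ, stableKernel κ σ t (x - y) * f y

/-- The Cauchy probability measure with density the kernel. -/
noncomputable def cmk (κ σ t : ℝ) : Measure ℝ :=
  ProbabilityTheory.cauchyMeasure (σ * t) (κ * t).toNNReal

instance cmk_prob (κ σ t : ℝ) : IsProbabilityMeasure (cmk κ σ t) := by
  unfold cmk; infer_instance

lemma Pk_eq {κ σ t : ℝ} (hκ : 0 < κ) (ht : 0 < t) (f : ℝ → ℝ) (x : ℝ) :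
    Pk κ σ t f x = ∫ z, f (x - z) ∂(cmk κ σ t) := by
  have hp : 0 < κ * t := mul_pos hκ ht
  have hne : (κ * t).toNNReal ≠ 0 := by simpa using hp
  unfold Pk cmk
  rw [ProbabilityTheory.cauchyMeasure_of_scale_ne_zero _ hne,
    integral_withDensity_eq_integral_toReal_smul (by fun_prop)
      (ae_of_all _ fun x => by simp [ProbabilityTheory.cauchyPDF]),
    ← integral_sub_left_eq_self _ _ x]
  congr 1
  ext z
  rw [ProbabilityTheory.cauchyPDF, ENNReal.toReal_ofReal (ProbabilityTheory.cauchyPDF_pos _ hne _).le,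
    ProbabilityTheory.cauchyPDFReal_def, smul_eq_mul, Real.coe_toNNReal _ hp.le, stableKernel,
    sub_sub_cancel]
  congr 1
  have := pi_ne_zero
  have h2 : (z - σ * t) ^ 2 + (κ * t) ^ 2 ≠ 0 := by positivity
  field_simp

lemma cmk_conv {κ σ s t : ℝ} (hκ : 0 < κ) (hs : 0 < s) (ht : 0 < t) :
    (cmk κ σ s).conv (cmk κ σ t) = cmk κ σ (s + t) := by
  unfold cmk
  have h1 : 0 < κ * s := mul_pos hκ hs
  have h2 : 0 < κ * t := mul_pos hκ ht
  rw [cauchy_conv_s16 _ _ _ _ (by simpa using h1) (by simpa using h2), mul_add, mul_add,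
    Real.toNNReal_add h1.le h2.le]

lemma integrable_bdd {α : Type*} [MeasurableSpace α] {μ : Measure α} [IsFiniteMeasure μ]
    {f : α → ℝ} (hf : Measurable f) {B : ℝ} (hB : ∀ x, |f x| ≤ B) : Integrable f μ :=
  Integrable.of_bound hf.aestronglyMeasurable B (ae_of_all _ hB)

lemma Pk_semigroup {κ σ s t : ℝ} (hκ : 0 < κ) (hs : 0 < s) (ht : 0 < t) {f : ℝ → ℝ}
    (hf : Measurable f) {B : ℝ} (hB : ∀ x, |f x| ≤ B) (x : ℝ) :
    ∫ z, Pk κ σ s f (x - z) ∂(cmk κ σ t) = Pk κ σ (t + s) f x := by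
  rw [Pk_eq hκ (add_pos ht hs), ← cmk_conv hκ ht hs, integral_conv]
  · congr 1
    ext z
    rw [Pk_eq hκ hs]
    congr 1
    ext z'
    rw [sub_sub]
  · exact integrable_bdd (by fun_prop) (fun z => hB _)

lemma Pk_abs_le {κ σ t : ℝ} (hκ : 0 < κ) (ht : 0 ≤ t) {f : ℝ → ℝ}
    {B : ℝ} (hB : ∀ x, |f x| ≤ B) (x : ℝ) : |Pk κ σ t f x| ≤ B := by
  rcases ht.eq_or_lt with rfl | ht
  · simp [Pk, stableKernel]; exact (abs_nonneg _).trans (hB 0)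
  rw [Pk_eq hκ ht]
  have := norm_integral_le_of_norm_le_const (μ := cmk κ σ t) (f := fun z => f (x - z)) (C := B)
    (ae_of_all _ fun z => hB _)
  simpa using this

lemma Pk_ge {κ σ t : ℝ} (hκ : 0 < κ) (ht : 0 < t) {f : ℝ → ℝ} (hf : Measurable f)
    {B : ℝ} (hB : ∀ x, |f x| ≤ B) {c : ℝ} (hc : ∀ x, c ≤ f x) (x : ℝ) : c ≤ Pk κ σ t f x := by
  rw [Pk_eq hκ ht]
  have := integral_mono (μ := cmk κ σ t) (integrable_const c)
    (integrable_bdd (f := fun z => f (x - z)) (by fun_prop) (fun z => hB _)) (fun z => hc _)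
  simpa using this

lemma Pk_le {κ σ t : ℝ} (hκ : 0 < κ) (ht : 0 < t) {f : ℝ → ℝ} (hf : Measurable f)
    {B : ℝ} (hB : ∀ x, |f x| ≤ B) {c : ℝ} (hc : ∀ x, f x ≤ c) (x : ℝ) : Pk κ σ t f x ≤ c := by
  rw [Pk_eq hκ ht]
  have := integral_mono (μ := cmk κ σ t)
    (integrable_bdd (f := fun z => f (x - z)) (by fun_prop) (fun z => hB _)) (integrable_const c)
    (fun z => hc _)
  simpa using this

lemma Pk_meas (κ σ : ℝ) {h : ℝ → ℝ → ℝ} (hm : Measurable (fun p : ℝ × ℝ => h p.1 p.2)) :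
    Measurable (fun q : ℝ × ℝ × ℝ => Pk κ σ q.1 (fun y => h y q.2.1) q.2.2) := by
  unfold Pk
  apply StronglyMeasurable.measurable
  apply StronglyMeasurable.integral_prod_right'
    (f := fun q : (ℝ × ℝ × ℝ) × ℝ => stableKernel κ σ q.1.1 (q.1.2.2 - q.2) * h q.2 q.1.2.1)
  apply Measurable.stronglyMeasurable
  apply Measurable.mul
  · unfold stableKernel; fun_prop
  · exact hm.comp (by fun_prop : Measurable fun q : (ℝ × ℝ × ℝ) × ℝ => (q.2, q.1.2.1))

lemma duhamel_restart {κ σ : ℝ} (hκ : 0 < κ) {h w : ℝ → ℝ → ℝ}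
    (hm : Measurable (fun p : ℝ × ℝ => h p.1 p.2)) {B : ℝ} (hB : ∀ y s, |h y s| ≤ B)
    {w0 : ℝ → ℝ} (hw0 : Measurable w0) {B0 : ℝ} (hB0 : ∀ y, |w0 y| ≤ B0)
    {s t : ℝ} (hs : 0 < s) (hst : s < t)
    (hw : ∀ x, w x s = Pk κ σ s w0 x + ∫ r in Set.Ioc 0 s, Pk κ σ (s - r) (fun y => h y r) x)
    (x : ℝ) :
    Pk κ σ (t - s) (fun y => w y s) x =
      Pk κ σ t w0 x + ∫ r in Set.Ioc 0 s, Pk κ σ (t - r) (fun y => h y r) x := by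
  have hts : 0 < t - s := sub_pos.mpr hst
  rw [Pk_eq hκ hts]
  simp_rw [hw]
  have mG : Measurable (fun q : ℝ × ℝ => Pk κ σ (s - q.2) (fun y => h y q.2) (x - q.1)) :=
    (Pk_meas κ σ hm).comp (by fun_prop : Measurable fun q : ℝ × ℝ => (s - q.2, q.2, x - q.1))
  have m0 : Measurable (fun z : ℝ => Pk κ σ s w0 (x - z)) :=
    (Pk_meas κ σ (h := fun y _ => w0 y) (by fun_prop)).comp
      (by fun_prop : Measurable fun z : ℝ => (s, (0:ℝ), x - z))
  have iG : Integrable (fun q : ℝ × ℝ => Pk κ σ (s - q.2) (fun y => h y q.2) (x - q.1))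
      ((cmk κ σ (t - s)).prod (volume.restrict (Set.Ioc 0 s))) := by
    refine Integrable.of_bound mG.aestronglyMeasurable B ?_
    have : (cmk κ σ (t - s)).prod (volume.restrict (Set.Ioc 0 s)) =
        ((cmk κ σ (t - s)).prod volume).restrict (Set.univ ×ˢ Set.Ioc 0 s) := by
      rw [← Measure.prod_restrict, Measure.restrict_univ]
    rw [this]
    refine (ae_restrict_iff' (MeasurableSet.univ.prod measurableSet_Ioc)).mpr (ae_of_all _ ?_)
    rintro ⟨z, r⟩ ⟨-, hr⟩
    exact Pk_abs_le hκ (by simpa using hr.2) (fun y => hB y r) _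
  rw [integral_add (integrable_bdd m0 (fun z => Pk_abs_le hκ hs.le hB0 _)) iG.integral_prod_left,
    Pk_semigroup hκ hs hts hw0 hB0, sub_add_cancel, integral_integral_swap iG,
    integral_Ioc_eq_integral_Ioo, integral_Ioc_eq_integral_Ioo]
  congr 1
  refine setIntegral_congr_fun measurableSet_Ioo ?_
  intro r hr
  have : 0 < s - r := sub_pos.mpr hr.2
  simp only
  rw [Pk_semigroup (f := fun y => h y r) hκ this hts (hm.comp (by fun_prop : Measurable fun y : ℝ => (y, r)))
    (fun y => hB y r)]
  congr 1
  ring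

lemma exp_int (l a t : ℝ) (hat : a ≤ t) :
    ∫ s in Set.Ioc a t, l * Real.exp (-l * (t - s)) = 1 - Real.exp (-l * (t - a)) := by
  rw [← intervalIntegral.integral_of_le hat]
  have := intervalIntegral.integral_eq_sub_of_hasDerivAt (a := a) (b := t)
    (f := fun s => Real.exp (-l * (t - s))) (f' := fun s => l * Real.exp (-l * (t - s)))
    (fun s _ => by
      have h1 : HasDerivAt (fun s => -l * (t - s)) l s := by
        have := ((hasDerivAt_id s).const_sub t).const_mul (-l)
        simpa using this
      simpa [mul_comm] using h1.exp)
    (Continuous.intervalIntegrable (by fun_prop) _ _)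
  simpa using this

lemma damp_swap (l t : ℝ) {G : ℝ → ℝ} (hG : Measurable G) {B : ℝ}
    (hB : ∀ r ∈ Set.Ioc 0 t, |G r| ≤ B) :
    ∫ s in Set.Ioc 0 t, l * Real.exp (-l * (t - s)) * ∫ r in Set.Ioc 0 s, G r =
      ∫ r in Set.Ioc 0 t, (1 - Real.exp (-l * (t - r))) * G r := by
  have e1 : ∀ s ∈ Set.Ioc 0 t, l * Real.exp (-l * (t - s)) * ∫ r in Set.Ioc 0 s, G r =
      ∫ r in Set.Ioc 0 t, (if r ≤ s then l * Real.exp (-l * (t - s)) * G r else 0) := by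
    intro s hs
    rw [← integral_const_mul]
    have : ∀ r, (if r ≤ s then l * Real.exp (-l * (t - s)) * G r else 0) =
      (Set.Iic s).indicator (fun r => l * Real.exp (-l * (t - s)) * G r) r := by
      intro r; simp [Set.indicator]
    simp_rw [this]
    rw [setIntegral_indicator measurableSet_Iic, Set.Ioc_inter_Iic, min_eq_right hs.2]
  rw [setIntegral_congr_fun measurableSet_Ioc e1, integral_integral_swap]
  · refine setIntegral_congr_fun measurableSet_Ioc ?_
    intro r hr
    simp only
    have : ∀ s, (if r ≤ s then l * Real.exp (-l * (t - s)) * G r else 0) =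
      (Set.Ici r).indicator (fun s => l * Real.exp (-l * (t - s)) * G r) s := by
      intro r; simp [Set.indicator]
    simp_rw [this]
    rw [setIntegral_indicator measurableSet_Ici]
    have : Set.Ioc 0 t ∩ Set.Ici r = Set.Icc r t := by
      ext s; simp only [Set.mem_inter_iff, Set.mem_Ioc, Set.mem_Ici, Set.mem_Icc]
      constructor
      · rintro ⟨⟨_, h⟩, h'⟩; exact ⟨h', h⟩
      · rintro ⟨h', h⟩; exact ⟨⟨hr.1.trans_le h', h⟩, h'⟩
    rw [this, integral_Icc_eq_integral_Ioc, integral_mul_const, exp_int l r t hr.2]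
  · have : (volume.restrict (Set.Ioc 0 t)).prod (volume.restrict (Set.Ioc 0 t)) =
        ((volume : Measure ℝ).prod (volume : Measure ℝ)).restrict (Set.Ioc 0 t ×ˢ Set.Ioc 0 t) := by
      rw [Measure.prod_restrict]
    refine Integrable.of_bound ?_ (|l| * Real.exp (|l| * t) * B) ?_
    · apply Measurable.aestronglyMeasurable
      apply Measurable.ite
      · exact measurableSet_le (by fun_prop) (by fun_prop)
      · fun_prop
      · fun_prop
    · rw [this]
      refine (ae_restrict_iff' (measurableSet_Ioc.prod measurableSet_Ioc)).mpr (ae_of_all _ ?_)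
      rintro ⟨s, r⟩ ⟨hs, hr⟩
      have hb := hB r hr
      have hB0 : 0 ≤ B := (abs_nonneg _).trans hb
      simp only [Function.uncurry]
      split_ifs
      · rw [norm_mul, norm_mul]
        simp only [Real.norm_eq_abs, Real.abs_exp]
        refine mul_le_mul (mul_le_mul_of_nonneg_left (Real.exp_le_exp.mpr ?_) (abs_nonneg _)) hb
          (abs_nonneg _) (by positivity)
        have h1 : 0 ≤ t - s := sub_nonneg.mpr hs.2
        have h2 : 0 < s := hs.1
        calc -l * (t - s) ≤ |l| * (t - s) := by gcongr; exact neg_le_abs l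
          _ ≤ |l| * t := by gcongr; linarith
      · simp only [norm_zero]; positivity

lemma duhamel_damped {κ σ : ℝ} (hκ : 0 < κ) {h w : ℝ → ℝ → ℝ}
    (hm : Measurable (fun p : ℝ × ℝ => h p.1 p.2)) {B : ℝ} (hB : ∀ y s, |h y s| ≤ B)
    {w0 : ℝ → ℝ} (hw0 : Measurable w0) {B0 : ℝ} (hB0 : ∀ y, |w0 y| ≤ B0) {T : ℝ}
    (hw : ∀ x s, 0 < s → s ≤ T → 
      w x s = Pk κ σ s w0 x + ∫ r in Set.Ioc 0 s, Pk κ σ (s - r) (fun y => h y r) x)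
    (l : ℝ) (x t : ℝ) (ht : 0 < t) (htT : t ≤ T) :
    w x t = Real.exp (-l * t) * Pk κ σ t w0 x + ∫ s in Set.Ioc 0 t,
      Real.exp (-l * (t - s)) *
        (Pk κ σ (t - s) (fun y => h y s) x + l * Pk κ σ (t - s) (fun y => w y s) x) := by
  set G : ℝ → ℝ := fun r => Pk κ σ (t - r) (fun y => h y r) x with hGdef
  have mG : Measurable G :=
    (Pk_meas κ σ hm).comp (by fun_prop : Measurable fun r : ℝ => (t - r, r, x))
  have bG : ∀ r ∈ Set.Ioc 0 t, |G r| ≤ B := fun r hr =>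
    Pk_abs_le hκ (sub_nonneg.mpr hr.2) (fun y => hB y r) x
  have iG : IntegrableOn G (Set.Ioc 0 t) :=
    Integrable.of_bound mG.aestronglyMeasurable B
      ((ae_restrict_iff' measurableSet_Ioc).mpr (ae_of_all _ bG))
  have bE : ∀ r ∈ Set.Ioc 0 t, |Real.exp (-l * (t - r))| ≤ Real.exp (|l| * t) := by
    intro r hr
    rw [Real.abs_exp]
    apply Real.exp_le_exp.mpr
    have h1 : 0 ≤ t - r := sub_nonneg.mpr hr.2
    have h2 : 0 < r := hr.1
    calc -l * (t - r) ≤ |l| * (t - r) := by gcongr; exact neg_le_abs l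
      _ ≤ |l| * t := by gcongr; linarith
  have iEG : IntegrableOn (fun s => Real.exp (-l * (t - s)) * G s) (Set.Ioc 0 t) := by
    refine iG.bdd_mul (c := Real.exp (|l| * t)) (by fun_prop) ?_
    exact (ae_restrict_iff' measurableSet_Ioc).mpr (ae_of_all _ bE)
  have cont : ContinuousOn (fun s => ∫ r in Set.Ioc 0 s, G r) (Set.Icc 0 t) := by
    apply intervalIntegral.continuousOn_primitive
    rwa [integrableOn_Icc_iff_integrableOn_Ioc]
  have iL : IntegrableOn (fun s => l * Real.exp (-l * (t - s)) * ∫ r in Set.Ioc 0 s, G r) (Set.Ioc 0 t) := by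
    refine IntegrableOn.mono_set ?_ Set.Ioc_subset_Icc_self
    apply ContinuousOn.integrableOn_Icc
    exact ContinuousOn.mul (by fun_prop) cont
  have iK : IntegrableOn (fun s => l * Real.exp (-l * (t - s)) * Pk κ σ t w0 x) (Set.Ioc 0 t) := by
    refine IntegrableOn.mono_set ?_ Set.Ioc_subset_Icc_self
    apply ContinuousOn.integrableOn_Icc
    fun_prop
  have e1 : ∫ s in Set.Ioc 0 t, Real.exp (-l * (t - s)) *
        (Pk κ σ (t - s) (fun y => h y s) x + l * Pk κ σ (t - s) (fun y => w y s) x) =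
      ∫ s in Set.Ioc 0 t, (Real.exp (-l * (t - s)) * G s + (l * Real.exp (-l * (t - s)) * Pk κ σ t w0 x +
        l * Real.exp (-l * (t - s)) * ∫ r in Set.Ioc 0 s, G r)) := by
    rw [integral_Ioc_eq_integral_Ioo, integral_Ioc_eq_integral_Ioo]
    refine setIntegral_congr_fun measurableSet_Ioo ?_
    intro s hs
    simp only
    rw [duhamel_restart hκ hm hB hw0 hB0 hs.1 hs.2 (fun x => hw x s hs.1 (hs.2.le.trans htT)) x]
    simp only [hGdef]
    ring
  rw [e1, integral_add (f := fun s => Real.exp (-l * (t - s)) * G s)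
      (g := fun s => l * Real.exp (-l * (t - s)) * Pk κ σ t w0 x + l * Real.exp (-l * (t - s)) * ∫ r in Set.Ioc 0 s, G r)
      iEG (iK.add iL), integral_add iK iL, damp_swap l t mG bG, integral_mul_const,
    exp_int l 0 t ht.le, hw x t ht htT]
  have e2 : ∫ r in Set.Ioc 0 t, (1 - Real.exp (-l * (t - r))) * G r =
      (∫ r in Set.Ioc 0 t, G r) - ∫ r in Set.Ioc 0 t, Real.exp (-l * (t - r)) * G r := by
    rw [← integral_sub iG iEG]
    congr 1; ext r; ring
  rw [e2, sub_zero]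
  ring

lemma heav_meas (c : ℝ) : Measurable (fun y => heaviside (y - c)) := by
  unfold heaviside
  exact Measurable.ite (measurableSet_le (by fun_prop) (by fun_prop)) (by fun_prop) (by fun_prop)

lemma heav_bdd (z : ℝ) : |heaviside z| ≤ 1 := by
  unfold heaviside; split_ifs <;> simp

lemma Pk_heaviside {κ σ t : ℝ} (hκ : 0 < κ) (ht : 0 < t) (c x : ℝ) :
    Pk κ σ t (fun y => heaviside (y - c)) x =
      1 / 2 + (1 / π) * Real.arctan (((x - c) / t - σ) / κ) := by
  unfold Pk
  have e : ∀ y, stableKernel κ σ t (x - y) * heaviside (y - c) =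
      (Set.Ici c).indicator (fun y => stableKernel κ σ t (x - y)) y := by
    intro y
    simp only [heaviside, Set.indicator, Set.mem_Ici, sub_nonneg]
    split_ifs <;> simp
  simp_rw [e]
  rw [integral_indicator measurableSet_Ici, integral_Ici_eq_integral_Ioi]
  have hd : ∀ y ∈ Set.Ici c, HasDerivAt (fun y => -(1 / π) * Real.arctan ((x - y - σ * t) / (κ * t)))
      (stableKernel κ σ t (x - y)) y := by
    intro y _
    have h1 : HasDerivAt (fun y => (x - y - σ * t) / (κ * t)) (-1 / (κ * t)) y :=
      (((hasDerivAt_id y).const_sub x).sub_const _).div_const _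
    have h2 := (h1.arctan).const_mul (-(1 / π))
    refine h2.congr_deriv ?_
    unfold stableKernel
    have := pi_ne_zero
    have h3 : (x - y - σ * t) ^ 2 + (κ * t) ^ 2 ≠ 0 := by positivity
    have h4 : 1 + ((x - y - σ * t) / (κ * t)) ^ 2 ≠ 0 := by positivity
    field_simp
    ring
  have hl : Tendsto (fun y => -(1 / π) * Real.arctan ((x - y - σ * t) / (κ * t))) atTop
      (𝓝 (-(1 / π) * (-(π / 2)))) := by
    refine Tendsto.const_mul _ ?_
    refine (tendsto_nhds_of_tendsto_nhdsWithin Real.tendsto_arctan_atBot).comp ?_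
    refine Tendsto.atBot_div_const (mul_pos hκ ht) ?_
    have : (fun y => x - y - σ * t) = fun y => (x - σ * t) + (- y) := by ext y; ring
    rw [this]
    exact tendsto_atBot_add_const_left _ _ tendsto_neg_atTop_atBot
  rw [integral_Ioi_of_hasDerivAt_of_nonneg' hd (fun y _ => by unfold stableKernel; positivity) hl]
  have : ((x - c) / t - σ) / κ = (x - c - σ * t) / (κ * t) := by field_simp
  rw [this]
  have := pi_ne_zero
  field_simp
  ring

lemma Pk_step {κ σ t : ℝ} (hκ : 0 < κ) (ht : 0 < t) {N : ℕ} (a₀ : ℝ) (a c : Fin N → ℝ) (x : ℝ) :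
    Pk κ σ t (fun y => a₀ + ∑ j : Fin N, a j * heaviside (y - c j)) x =
      a₀ + ∑ j : Fin N, a j * (1 / 2 + (1 / π) * Real.arctan (((x - c j) / t - σ) / κ)) := by
  have hi : ∀ j : Fin N, Integrable (fun z => a j * heaviside (x - z - c j)) (cmk κ σ t) := by
    intro j
    refine Integrable.const_mul ?_ _
    exact integrable_bdd ((heav_meas (c j)).comp (by fun_prop : Measurable fun z => x - z))
      (fun z => heav_bdd _)
  rw [Pk_eq hκ ht, integral_add (integrable_const _) (integrable_finsetSum _ fun j _ => hi j),
    integral_finsetSum _ fun j _ => hi j]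
  simp only [integral_const, probReal_univ, one_smul, integral_const_mul]
  congr 2
  ext j
  rw [← Pk_heaviside hκ ht, Pk_eq hκ ht]

lemma Pk_sub {κ σ t : ℝ} (hκ : 0 < κ) (ht : 0 < t) {f f' : ℝ → ℝ} (hf : Measurable f)
    (hf' : Measurable f') {B B' : ℝ} (hB : ∀ x, |f x| ≤ B) (hB' : ∀ x, |f' x| ≤ B') (x : ℝ) :
    Pk κ σ t (fun y => f y - f' y) x = Pk κ σ t f x - Pk κ σ t f' x := by
  rw [Pk_eq hκ ht, Pk_eq hκ ht, Pk_eq hκ ht]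
  exact integral_sub (integrable_bdd (by fun_prop) fun z => hB _)
    (integrable_bdd (by fun_prop) fun z => hB' _)

lemma Pk_lin {κ σ t : ℝ} (hκ : 0 < κ) (ht : 0 < t) {f f' : ℝ → ℝ} (hf : Measurable f)
    (hf' : Measurable f') {B B' : ℝ} (hB : ∀ x, |f x| ≤ B) (hB' : ∀ x, |f' x| ≤ B') (l x : ℝ) :
    Pk κ σ t (fun y => f y + l * f' y) x = Pk κ σ t f x + l * Pk κ σ t f' x := by
  rw [Pk_eq hκ ht, Pk_eq hκ ht, Pk_eq hκ ht, ← integral_const_mul]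
  exact integral_add (integrable_bdd (by fun_prop) fun z => hB _)
    ((integrable_bdd (by fun_prop) fun z => hB' _).const_mul l)

/-- Positivity: iterate the damped Duhamel formula. -/
lemma duhamel_nonneg {κ σ : ℝ} (hκ : 0 < κ) {h w : ℝ → ℝ → ℝ}
    (hm : Measurable (fun p : ℝ × ℝ => h p.1 p.2)) {B : ℝ} (hB : ∀ y s, |h y s| ≤ B)
    {w0 : ℝ → ℝ} (hw0 : Measurable w0) {B0 : ℝ} (hB0 : ∀ y, |w0 y| ≤ B0) (hw0n : ∀ y, 0 ≤ w0 y)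
    {T : ℝ} (wm : Measurable (fun p : ℝ × ℝ => w p.1 p.2)) {W : ℝ}
    (hW : ∀ x s, 0 < s → s ≤ T → |w x s| ≤ W)
    (hw : ∀ x s, 0 < s → s ≤ T →
      w x s = Pk κ σ s w0 x + ∫ r in Set.Ioc 0 s, Pk κ σ (s - r) (fun y => h y r) x)
    {L : ℝ} (hL : 0 ≤ L)
    (hlow : ∀ x s, 0 < s → s ≤ T → min 0 (2 * L * w x s) ≤ h x s + L * w x s)
    (x t : ℝ) (ht : 0 < t) (htT : t ≤ T) : 0 ≤ w x t := by
  have hW0 : 0 ≤ W := (abs_nonneg _).trans (hW x t ht htT)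
  have claim : ∀ n : ℕ, ∀ x t, 0 < t → t ≤ T → -(W * ((2 * L * t) ^ n / n.factorial)) ≤ w x t := by
    intro n
    induction n with
    | zero =>
      intro x t ht htT
      simpa using (abs_le.mp (hW x t ht htT)).1
    | succ n ih =>
      intro x t ht htT
      rw [duhamel_damped hκ hm hB hw0 hB0 hw L x t ht htT]
      have h1 : 0 ≤ Real.exp (-L * t) * Pk κ σ t w0 x :=
        mul_nonneg (Real.exp_pos _).le (Pk_ge hκ ht hw0 hB0 hw0n x)
      have h2 : -(W * ((2 * L * t) ^ (n + 1) / (n + 1).factorial)) =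
          ∫ s in Set.Ioc 0 t, -((2 * L) * W * (2 * L) ^ n / n.factorial) * s ^ n := by
        rw [integral_const_mul, ← intervalIntegral.integral_of_le ht.le, integral_pow,
          Nat.factorial_succ]
        have := Nat.factorial_ne_zero n
        push_cast
        have h3 : (n : ℝ) + 1 ≠ 0 := by positivity
        field_simp
        simp
        ring
      have h4 : ∫ s in Set.Ioc 0 t, -((2 * L) * W * (2 * L) ^ n / n.factorial) * s ^ n ≤
          ∫ s in Set.Ioc 0 t, Real.exp (-L * (t - s)) *
        (Pk κ σ (t - s) (fun y => h y s) x + L * Pk κ σ (t - s) (fun y => w y s) x) := by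
        rw [integral_Ioc_eq_integral_Ioo, integral_Ioc_eq_integral_Ioo]
        refine setIntegral_mono_on ?_ ?_ measurableSet_Ioo ?_
        · refine IntegrableOn.mono_set ?_ Set.Ioo_subset_Icc_self
          apply ContinuousOn.integrableOn_Icc
          fun_prop
        · have m1 : Measurable fun s => Pk κ σ (t - s) (fun y => h y s) x :=
            (Pk_meas κ σ hm).comp (by fun_prop : Measurable fun r : ℝ => (t - r, r, x))
          have m2 : Measurable fun s => Pk κ σ (t - s) (fun y => w y s) x :=
            (Pk_meas κ σ wm).comp (by fun_prop : Measurable fun r : ℝ => (t - r, r, x))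
          refine Integrable.of_bound (C := B + L * W) (by fun_prop) ?_
          refine (ae_restrict_iff' measurableSet_Ioo).mpr (ae_of_all _ ?_)
          intro s hs
          have hts : 0 ≤ t - s := sub_nonneg.mpr hs.2.le
          have b1 := Pk_abs_le (σ := σ) hκ hts (fun y => hB y s) x
          have b2 := Pk_abs_le (σ := σ) hκ hts (fun y => hW y s hs.1 (hs.2.le.trans htT)) x
          rw [norm_mul, Real.norm_eq_abs, Real.norm_eq_abs, Real.abs_exp]
          have b3 : Real.exp (-L * (t - s)) ≤ 1 := by
            apply Real.exp_le_one_iff.mpr; nlinarith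
          calc _ ≤ 1 * |Pk κ σ (t - s) (fun y => h y s) x + L * Pk κ σ (t - s) (fun y => w y s) x| := by
                gcongr
            _ ≤ |Pk κ σ (t - s) (fun y => h y s) x| + |L * Pk κ σ (t - s) (fun y => w y s) x| := by
                rw [one_mul]; exact abs_add_le _ _
            _ ≤ _ := by
                rw [abs_mul, abs_of_nonneg hL]; gcongr
        · intro s hs
          have hts : 0 < t - s := sub_pos.mpr hs.2
          have hsT : s ≤ T := hs.2.le.trans htT
          have hs0 : 0 < s := hs.1
          have m1 : Measurable fun y => h y s := hm.comp (by fun_prop : Measurable fun y : ℝ => (y, s))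
          have m2 : Measurable fun y => w y s := wm.comp (by fun_prop : Measurable fun y : ℝ => (y, s))
          rw [← Pk_lin hκ hts m1 m2 (fun y => hB y s) (fun y => hW y s hs.1 hsT)]
          set q : ℝ := (2 * L) * W * (2 * L) ^ n / n.factorial * s ^ n with hq
          have hq0 : 0 ≤ q := by positivity
          have b4 : -q ≤ Pk κ σ (t - s) (fun y => h y s + L * w y s) x := by
            refine Pk_ge hκ hts (by fun_prop) (B := B + L * W) ?_ ?_ x
            · intro y
              calc _ ≤ |h y s| + |L * w y s| := abs_add_le _ _
                _ ≤ _ := by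
                  rw [abs_mul, abs_of_nonneg hL]
                  gcongr
                  · exact hB y s
                  · exact hW y s hs.1 hsT
            · intro y
              refine le_trans ?_ (hlow y s hs.1 hsT)
              refine le_min (by linarith) ?_
              have := mul_le_mul_of_nonneg_left (ih y s hs.1 hsT) (by positivity : 0 ≤ 2 * L)
              refine le_trans (le_of_eq ?_) this
              rw [hq, mul_pow]; ring
          have b3 : Real.exp (-L * (t - s)) ≤ 1 := by
            apply Real.exp_le_one_iff.mpr; nlinarith
          have b5 := Real.exp_pos (-L * (t - s))
          calc _ = -q := by rw [hq]; ring
            _ ≤ Real.exp (-L * (t - s)) * (-q) := by nlinarith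
            _ ≤ _ := by gcongr
      linarith
  have lim : Tendsto (fun n : ℕ => -(W * ((2 * L * t) ^ n / n.factorial))) atTop (𝓝 (-(W * 0))) :=
    ((FloorSemiring.tendsto_pow_div_factorial_atTop (2 * L * t)).const_mul W).neg
  have := le_of_tendsto' lim (fun n => claim n x t ht htT)
  simpa using this

/-- Comparison with step-function initial data. Let `u` be a
bounded continuous mild solution of `∂_t u + Au = g(u)` on `ℝ × [0,T]` whose
initial datum has finite limits at `±∞`. If
`v₀(x) = a₀ + Σ_{j} a_j·H(x − c_j)` with `c₁ < ⋯ < c_N`,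
`γ = min v₀ ≤ δ = max v₀`, `g ≥ 0` on `[γ,δ]`, and `u(·,0) ≥ v₀`, then
`u(x,t) ≥ a₀ + Σ_j a_j·F((x − c_j)/t)` for all `x ∈ ℝ`, `t ∈ (0,T]`,
where `F(x) = 1/2 + (1/π)·arctan((x−σ)/κ)` is the stable CDF. -/
theorem mild_solution_step_data_comparison
    (β : ℝ) (hβ : β ∈ Set.Ioo (-1 : ℝ) 1)
    (κ σ : ℝ) (hκ : κ = Real.cos (π * β / 2)) (hσ : σ = Real.sin (π * β / 2))
    (g : ℝ → ℝ) (hg : LocallyLipschitz g)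
    (T : ℝ) (hT : 0 < T)
    (u : ℝ → ℝ → ℝ)
    (hu_cont : ContinuousOn (fun p : ℝ × ℝ => u p.1 p.2)
      (Set.univ ×ˢ Set.Icc 0 T))
    (hu_bdd : ∃ M : ℝ, ∀ x : ℝ, ∀ t ∈ Set.Icc (0 : ℝ) T, |u x t| ≤ M)
    (hu : IsMildSolution κ σ g T u)
    (hu0_limits : (∃ Lp : ℝ, Tendsto (fun x : ℝ => u x 0) atTop (𝓝 Lp)) ∧
      (∃ Lm : ℝ, Tendsto (fun x : ℝ => u x 0) atBot (𝓝 Lm)))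
    (N : ℕ) (hN : 1 ≤ N)
    (a₀ : ℝ) (a : Fin N → ℝ) (c : Fin N → ℝ) (hc : StrictMono c)
    (v₀ : ℝ → ℝ)
    (hv₀ : ∀ x : ℝ, v₀ x = a₀ + ∑ j : Fin N, a j * heaviside (x - c j))
    (γ δ : ℝ) (hγ : IsLeast (Set.range v₀) γ) (hδ : IsGreatest (Set.range v₀) δ)
    (hg_nonneg : ∀ ζ ∈ Set.Icc γ δ, 0 ≤ g ζ)
    (h0 : ∀ x : ℝ, v₀ x ≤ u x 0) :
    ∀ x t : ℝ, 0 < t → t ≤ T →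
      a₀ + ∑ j : Fin N,
          a j * (1 / 2 + (1 / π) * Real.arctan (((x - c j) / t - σ) / κ)) ≤
        u x t := by
  intro x t ht htT
  have hκ0 : 0 < κ := by
    rw [hκ]
    apply Real.cos_pos_of_mem_Ioo
    have h1 := hβ.1
    have h2 := hβ.2
    have h3 := pi_pos
    constructor <;> nlinarith
  obtain ⟨M, hM⟩ := hu_bdd
  have hv₀' : v₀ = fun y => a₀ + ∑ j : Fin N, a j * heaviside (y - c j) := funext hv₀
  have v0m : Measurable v₀ := by
    rw [hv₀']
    refine measurable_const.add (Finset.measurable_sum _ fun j _ => ?_)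
    exact (heav_meas (c j)).const_mul _
  have v0l : ∀ y, γ ≤ v₀ y := fun y => hγ.2 ⟨y, rfl⟩
  have v0u : ∀ y, v₀ y ≤ δ := fun y => hδ.2 ⟨y, rfl⟩
  set R : ℝ := max M (max |γ| |δ|) with hR
  have hRM : M ≤ R := le_max_left _ _
  have hRγ : |γ| ≤ R := (le_max_left _ _).trans (le_max_right _ _)
  have hRδ : |δ| ≤ R := (le_max_right _ _).trans (le_max_right _ _)
  have v0b : ∀ y, |v₀ y| ≤ R := fun y => abs_le.mpr
    ⟨by linarith [(abs_le.mp hRγ).1, v0l y], by linarith [(abs_le.mp hRδ).2, v0u y]⟩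
  -- the clamped solution
  set ut : ℝ → ℝ → ℝ := fun y s => u y (max 0 (min s T)) with hut
  have clamp_mem : ∀ s : ℝ, max 0 (min s T) ∈ Set.Icc (0 : ℝ) T := fun s =>
    ⟨le_max_left _ _, max_le hT.le (min_le_right _ _)⟩
  have clamp_eq : ∀ s : ℝ, 0 ≤ s → s ≤ T → max 0 (min s T) = s := fun s h1 h2 => by
    rw [min_eq_left h2, max_eq_right h1]
  have ut_cont : Continuous (fun p : ℝ × ℝ => ut p.1 p.2) := by
    have := hu_cont.comp_continuous (f := fun p : ℝ × ℝ => (p.1, max 0 (min p.2 T)))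
      (by fun_prop) (fun p => ⟨Set.mem_univ _, clamp_mem p.2⟩)
    exact this
  have ut_b : ∀ y s, |ut y s| ≤ R := fun y s => (hM y _ (clamp_mem s)).trans hRM
  have ut_eq : ∀ y s, 0 ≤ s → s ≤ T → ut y s = u y s := fun y s h1 h2 => by
    simp only [hut]; rw [clamp_eq s h1 h2]
  obtain ⟨K, hK⟩ := (hg.locallyLipschitzOn (s := Set.Icc (-R) R)).exists_lipschitzOnWith_of_compact
    isCompact_Icc
  have hLip : ∀ p q : ℝ, |p| ≤ R → |q| ≤ R → |g p - g q| ≤ K * |p - q| := by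
    intro p q hp hq
    have := hK.dist_le_mul p (abs_le.mp hp) q (abs_le.mp hq)
    simpa [Real.dist_eq] using this
  obtain ⟨B, hBg⟩ := isCompact_Icc.exists_bound_of_continuousOn
    (f := g) (s := Set.Icc (-R) R) hg.continuous.continuousOn
  -- the free evolution
  set V : ℝ → ℝ → ℝ := fun x t => a₀ + ∑ j : Fin N,
          a j * (1 / 2 + (1 / π) * Real.arctan (((x - c j) / t - σ) / κ)) with hV
  have V_eq : ∀ y s, 0 < s → Pk κ σ s v₀ y = V y s := fun y s hs => by
    rw [hv₀', Pk_step hκ0 hs]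
  have V_l : ∀ y s, 0 < s → γ ≤ V y s := fun y s hs => by
    rw [← V_eq y s hs]; exact Pk_ge hκ0 hs v0m v0b v0l y
  have V_u : ∀ y s, 0 < s → V y s ≤ δ := fun y s hs => by
    rw [← V_eq y s hs]; exact Pk_le hκ0 hs v0m v0b v0u y
  have V_b : ∀ y s, 0 < s → |V y s| ≤ R := fun y s hs => by
    rw [← V_eq y s hs]; exact Pk_abs_le hκ0 hs.le v0b y
  have V_m : Measurable (fun p : ℝ × ℝ => V p.1 p.2) := by
    rw [hV]
    fun_prop
  have u0_m : Measurable (fun y => ut y 0) :=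
    ut_cont.measurable.comp (by fun_prop : Measurable fun y : ℝ => (y, (0 : ℝ)))
  have key := duhamel_nonneg (κ := κ) (σ := σ) hκ0 (h := fun y s => g (ut y s))
    (w := fun y s => ut y s - V y s)
    (hg.continuous.comp ut_cont).measurable (B := B)
    (fun y s => hBg _ (abs_le.mp (ut_b y s)))
    (w0 := fun y => ut y 0 - v₀ y) (u0_m.sub v0m) (B0 := R + R)
    (fun y => (abs_sub _ _).trans (add_le_add (ut_b y 0) (v0b y)))
    (fun y => by rw [ut_eq y 0 le_rfl hT.le]; exact sub_nonneg.mpr (h0 y))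
    (T := T) (ut_cont.measurable.sub V_m) (W := R + R)
    (fun y s hs _ => (abs_sub _ _).trans (add_le_add (ut_b y s) (V_b y s hs)))
    (by
      intro y s hs hsT
      rw [Pk_sub hκ0 hs u0_m v0m (fun z => ut_b z 0) v0b, V_eq y s hs, ut_eq y s hs.le hsT,
        hu y s hs hsT]
      have e1 : Pk κ σ s (fun y => ut y 0) y = ∫ z : ℝ, stableKernel κ σ s (y - z) * u z 0 := by
        unfold Pk
        simp_rw [ut_eq _ 0 le_rfl hT.le]
      have e2 : ∫ r in Set.Ioc 0 s, Pk κ σ (s - r) (fun y => g (ut y r)) y =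
          ∫ r in Set.Ioc (0 : ℝ) s, ∫ z : ℝ, stableKernel κ σ (s - r) (y - z) * g (u z r) := by
        refine setIntegral_congr_fun measurableSet_Ioc ?_
        intro r hr
        simp only [Pk]
        simp_rw [ut_eq _ r hr.1.le (hr.2.trans hsT)]
      rw [e1, e2]
      ring)
    (L := K) K.coe_nonneg
    (by
      intro y s hs hsT
      have h1 := hg_nonneg (V y s) ⟨V_l y s hs, V_u y s hs⟩
      have h2 := (abs_le.mp (hLip _ _ (ut_b y s) (V_b y s hs))).1
      rcases le_total 0 (ut y s - V y s) with h | h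
      · rw [abs_of_nonneg h] at h2
        exact (min_le_left _ _).trans (by linarith)
      · rw [abs_of_nonpos h] at h2
        exact (min_le_right _ _).trans (by linarith))
    x t ht htT
  rw [ut_eq x t ht.le htT] at key
  exact sub_nonneg.mp key
end

section
/- Unbounded speed of spread (the α = 1 case): let g : [0,1] → ℝ be continuously differentiable with g(0) = g(1) = 0 and g(ζ) > 0 for all ζ ∈ (0,1). Let u : ℝ × [0,∞) → ℝ be continuous with 0 ≤ u(x,t) ≤ 1 for all (x,t), a mild solution of ∂_t u + Au = g(u) on ℝ × [0,T] for every T > 0, whose initial datum u₀ = u(·,0) is continuous, satisfies 0 ≤ u₀ ≤ 1, u₀(x) = 0 for all x < 0, and lim_{x→∞} u₀(x) = 1. Then for every c > 0 and every ε > 0 there exists T > 0 such that u(x,t) > 1 − ε for all t ≥ T and all x ≥ −ct; that is, liminf_{t→∞} inf_{x ≥ −ct} u(x,t) = 1 for every c > 0. -/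
open Real MeasureTheory Filter Topology

noncomputable def cauchyM : Measure ℝ := ProbabilityTheory.cauchyMeasure 0 1

instance : IsProbabilityMeasure cauchyM := by unfold cauchyM; infer_instance

lemma cauchyM_integral {E : Type*} [NormedAddCommGroup E] [NormedSpace ℝ E] (f : ℝ → E) :
    ∫ z, f z ∂cauchyM = ∫ z, (π⁻¹ * (z ^ 2 + 1)⁻¹) • f z := by
  unfold cauchyM
  rw [ProbabilityTheory.cauchyMeasure_of_scale_ne_zero _ one_ne_zero]
  have : (ProbabilityTheory.cauchyPDF 0 1) =
      fun z => ((Real.toNNReal (ProbabilityTheory.cauchyPDFReal 0 1 z) : NNReal) : ENNReal) := rfl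
  rw [this, integral_withDensity_eq_integral_smul (by fun_prop)]
  congr 1
  ext z
  rw [NNReal.smul_def, Real.coe_toNNReal _ (ProbabilityTheory.cauchyPDF_pos 0 one_ne_zero z).le]
  simp [ProbabilityTheory.cauchyPDFReal_def]

lemma fourier_expabs (w : ℝ) :
    FourierTransform.fourier (fun v : ℝ => (Complex.exp (-(2 * π * |v| : ℝ)))) w
      = ((π⁻¹ * (w ^ 2 + 1)⁻¹ : ℝ) : ℂ) := by
  rw [Real.fourier_real_eq_integral_exp_smul]
  have h1 : ∀ v ∈ Set.Iic (0:ℝ), Complex.exp (((-2 * π * v * w : ℝ) : ℂ) * Complex.I) •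
      Complex.exp (-(2 * π * |v| : ℝ)) = Complex.exp ((2 * π * (1 - w * Complex.I)) * v) := by
    intro v hv
    rw [abs_of_nonpos hv, smul_eq_mul, ← Complex.exp_add]
    congr 1; push_cast; ring
  have h2 : ∀ v ∈ Set.Ioi (0:ℝ), Complex.exp (((-2 * π * v * w : ℝ) : ℂ) * Complex.I) •
      Complex.exp (-(2 * π * |v| : ℝ)) = Complex.exp ((-2 * π * (1 + w * Complex.I)) * v) := by
    intro v hv
    rw [abs_of_pos hv, smul_eq_mul, ← Complex.exp_add]
    congr 1; push_cast; ring
  have r1 : 0 < (2 * π * (1 - w * Complex.I) : ℂ).re := by simp; positivity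
  have r2 : (-2 * π * (1 + w * Complex.I) : ℂ).re < 0 := by simp; positivity
  have n1 : (2 * π * (1 - w * Complex.I) : ℂ) ≠ 0 := fun h => by simp [h] at r1
  have n2 : (-2 * π * (1 + w * Complex.I) : ℂ) ≠ 0 := fun h => by rw [h] at r2; simp at r2
  rw [← integral_add_compl (measurableSet_Iic (a := (0:ℝ)))]
  · rw [Set.compl_Iic, setIntegral_congr_fun measurableSet_Iic h1,
      setIntegral_congr_fun measurableSet_Ioi h2, integral_exp_mul_complex_Iic r1,
      integral_exp_mul_complex_Ioi r2]
    have e : (w:ℂ)^2+1 = (1 - w * Complex.I) * (1 + w * Complex.I) := by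
      ring_nf; simp
    have hpi : (π:ℂ) ≠ 0 := by simp [Real.pi_ne_zero]
    push_cast
    rw [e]
    have n3 : (1 - w * Complex.I : ℂ) ≠ 0 := right_ne_zero_of_mul n1
    have n4 : (1 + w * Complex.I : ℂ) ≠ 0 := right_ne_zero_of_mul n2
    simp
    field_simp
    ring
  · have i1 := (integrableOn_exp_mul_complex_Iic r1 0).congr_fun (fun v hv => (h1 v hv).symm) measurableSet_Iic
    have i2 := (integrableOn_exp_mul_complex_Ioi r2 0).congr_fun (fun v hv => (h2 v hv).symm) measurableSet_Ioi
    have := i1.union i2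
    rwa [Set.Iic_union_Ioi, integrableOn_univ] at this

lemma cauchyM_charFun (l : ℝ) : charFun cauchyM l = Complex.exp (-(|l| : ℝ)) := by
  have hc : Continuous (fun v : ℝ => (Complex.exp (-(2 * π * |v| : ℝ)))) := by fun_prop
  have hi : Integrable (fun v : ℝ => (Complex.exp (-(2 * π * |v| : ℝ)))) := by
    have r1 : 0 < (2 * π: ℂ).re := by simp; positivity
    have r2 : (-(2 * π) : ℂ).re < 0 := by simp; positivity
    have i1 : IntegrableOn (fun v : ℝ => (Complex.exp (-(2 * π * |v| : ℝ)))) (Set.Iic 0) :=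
      (integrableOn_exp_mul_complex_Iic r1 0).congr_fun (fun v hv => by
        simp only [abs_of_nonpos (Set.mem_Iic.1 hv)]; congr 1; push_cast; ring) measurableSet_Iic
    have i2 : IntegrableOn (fun v : ℝ => (Complex.exp (-(2 * π * |v| : ℝ)))) (Set.Ioi 0) :=
      (integrableOn_exp_mul_complex_Ioi r2 0).congr_fun (fun v hv => by
        simp only [abs_of_pos (Set.mem_Ioi.1 hv)]; congr 1; push_cast; ring) measurableSet_Ioi
    have := i1.union i2
    rwa [Set.Iic_union_Ioi, integrableOn_univ] at this
  have hF : FourierTransform.fourier (fun v : ℝ => (Complex.exp (-(2 * π * |v| : ℝ)))) =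
    fun w => ((π⁻¹ * (w ^ 2 + 1)⁻¹ : ℝ) : ℂ) := funext fourier_expabs
  have hi2 : Integrable (FourierTransform.fourier (fun v : ℝ => (Complex.exp (-(2 * π * |v| : ℝ))))) := by
    rw [hF]
    have := (ProbabilityTheory.integrable_cauchyPDFReal 0 (γ := 1)).ofReal (𝕜 := ℂ)
    refine this.congr (ae_of_all _ fun w => ?_)
    simp [ProbabilityTheory.cauchyPDFReal_def]
  have h := congrFun (hc.fourierInv_fourier_eq hi hi2) (l / (2 * π))
  rw [hF, Real.fourierInv_eq'] at h
  rw [charFun_apply_real, cauchyM_integral]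
  have e : 2 * π * |l / (2 * π)| = |l| := by
    rw [abs_div, abs_of_pos (by positivity : 0 < 2 * π)]; field_simp
  rw [e] at h
  rw [← h]
  congr 1
  ext v
  rw [Complex.real_smul, smul_eq_mul, mul_comm]
  congr 2
  simp
  field_simp

lemma cauchyM_map_add (a b : ℝ) (ha : 0 ≤ a) (hb : 0 ≤ b) :
    (cauchyM.map (a * ·)) ∗ (cauchyM.map (b * ·)) = cauchyM.map ((a + b) * ·) := by
  have := Measure.isProbabilityMeasure_map (μ := cauchyM) (f := (a * ·)) (by fun_prop)
  have := Measure.isProbabilityMeasure_map (μ := cauchyM) (f := (b * ·)) (by fun_prop)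
  have := Measure.isProbabilityMeasure_map (μ := cauchyM) (f := ((a+b) * ·)) (by fun_prop)
  apply Measure.ext_of_charFun
  ext l
  rw [charFun_conv, charFun_map_mul, charFun_map_mul, charFun_map_mul, cauchyM_charFun,
    cauchyM_charFun, cauchyM_charFun, ← Complex.exp_add, abs_mul, abs_mul, abs_mul,
    abs_of_nonneg ha, abs_of_nonneg hb, abs_of_nonneg (add_nonneg ha hb)]
  congr 1; push_cast; ring

/-- semigroup property -/
lemma cauchyM_semigroup (κ σ a b : ℝ) (ha : 0 ≤ a) (hb : 0 ≤ b) (f : ℝ → ℝ) (hf : Continuous f)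
    (C : ℝ) (hC : ∀ x, |f x| ≤ C) (x : ℝ) :
    ∫ z, ∫ w, f (x - (σ + κ * z) * a - (σ + κ * w) * b) ∂cauchyM ∂cauchyM
      = ∫ z, f (x - (σ + κ * z) * (a + b)) ∂cauchyM := by
  have := Measure.isProbabilityMeasure_map (μ := cauchyM) (f := (a * ·)) (by fun_prop)
  have := Measure.isProbabilityMeasure_map (μ := cauchyM) (f := (b * ·)) (by fun_prop)
  set F : ℝ → ℝ := fun y => f (x - σ * (a + b) - κ * y) with hF
  have hFc : Continuous F := by fun_prop
  have h1 : ∫ z, f (x - (σ + κ * z) * (a + b)) ∂cauchyM = ∫ y, F y ∂(cauchyM.map ((a + b) * ·)) := by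
    rw [integral_map (by fun_prop) hFc.aestronglyMeasurable]
    congr 1; ext z; simp only [hF]; congr 1; ring
  rw [h1, ← cauchyM_map_add a b ha hb, integral_conv, integral_map (by fun_prop)]
  · congr 1; ext z
    rw [integral_map (by fun_prop) (by fun_prop)]
    congr 1; ext w; simp only [hF]; congr 1; ring
  · apply Continuous.aestronglyMeasurable
    apply continuous_of_dominated (bound := fun _ => C)
    · intro y; fun_prop
    · intro y; exact ae_of_all _ fun z => hC _
    · exact integrable_const _
    · exact ae_of_all _ fun z => by fun_prop
  · exact Integrable.of_bound (by fun_prop) C (ae_of_all _ fun z => hC _)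

/-- kernel to measure -/
lemma stable_to_cauchyM (κ σ t : ℝ) (hκ : 0 < κ) (ht : 0 < t) (f : ℝ → ℝ) (x : ℝ) :
    ∫ y : ℝ, κ * t / (π * (((x - y) - σ * t) ^ 2 + (κ * t) ^ 2)) * f y =
      ∫ z, f (x - (σ + κ * z) * t) ∂cauchyM := by
  rw [cauchyM_integral]
  set G : ℝ → ℝ := fun z => (π⁻¹ * (z ^ 2 + 1)⁻¹) • f (x - (σ + κ * z) * t)
  have hp : 0 < κ * t := by positivity
  have h := Measure.integral_comp_mul_left G (κ * t)⁻¹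
  have h2 := integral_sub_left_eq_self (μ := volume) (fun y => G ((κ * t)⁻¹ * y)) (x - σ * t)
  rw [h] at h2
  simp only [inv_inv, abs_of_pos hp, smul_eq_mul] at h2
  have : ∫ z, G z = (κ * t)⁻¹ * (κ * t * ∫ z, G z) := by field_simp
  rw [this, ← h2, ← integral_const_mul]
  congr 1; ext y
  simp only [G, smul_eq_mul]
  have e : x - (σ + κ * ((κ * t)⁻¹ * (x - σ * t - y))) * t = y := by field_simp; ring
  rw [e, ← mul_assoc]
  congr 1
  have : x - y - σ * t = x - σ * t - y := by ring
  rw [this]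
  set q := x - σ * t - y
  field_simp

/-- continuity of the free evolution in parameters -/
lemma free_continuous (κ σ : ℝ) (F : ℝ → ℝ → ℝ) (hF : Continuous fun p : ℝ × ℝ => F p.1 p.2)
    (M : ℝ) (hM : ∀ x t, |F x t| ≤ M) (x t : ℝ) :
    Continuous fun s => ∫ z, F (x - (σ + κ * z) * (t - s)) s ∂cauchyM := by
  apply continuous_of_dominated (bound := fun _ => M)
  · intro s
    have : Continuous fun z => F (x - (σ + κ * z) * (t - s)) s :=
      hF.comp (f := fun z => (x - (σ + κ * z) * (t - s), s)) (by fun_prop)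
    exact this.aestronglyMeasurable
  · intro y; exact ae_of_all _ fun z => hM _ _
  · exact integrable_const _
  · exact ae_of_all _ fun z =>
      hF.comp (f := fun s => (x - (σ + κ * z) * (t - s), s)) (by fun_prop)

lemma free_push (κ σ : ℝ) (F : ℝ → ℝ → ℝ) (hF : Continuous fun p : ℝ × ℝ => F p.1 p.2)
    (M : ℝ) (hM : ∀ x t, |F x t| ≤ M) (x s t : ℝ) (hs : 0 ≤ s) (hst : s ≤ t) :
    ∫ z, (∫ r in (0:ℝ)..s, ∫ w, F (x - (σ + κ * z) * (t - s) - (σ + κ * w) * (s - r)) r ∂cauchyM) ∂cauchyM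
      = ∫ r in (0:ℝ)..s, ∫ w, F (x - (σ + κ * w) * (t - r)) r ∂cauchyM := by
  simp only [intervalIntegral.integral_of_le hs]
  rw [integral_integral_swap]
  · refine setIntegral_congr_fun measurableSet_Ioc fun r hr => ?_
    have hFr : Continuous fun y => F y r := hF.comp (f := fun y => (y, r)) (by fun_prop)
    have := cauchyM_semigroup κ σ (t - s) (s - r) (by linarith) (by linarith [hr.2])
      (fun y => F y r) hFr M (fun y => hM y r) x
    rw [this]
    congr 1; ext z; congr 1; ring
  · have hfin : IsFiniteMeasure (volume.restrict (Set.Ioc 0 s)) := by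
      constructor; simp
    refine Integrable.of_bound (C := M) ?_ (ae_of_all _ fun p => ?_)
    · apply Continuous.aestronglyMeasurable
      apply continuous_of_dominated (bound := fun _ => M)
      · intro p
        have : Continuous fun w => F (x - (σ + κ * p.1) * (t - s) - (σ + κ * w) * (s - p.2)) p.2 :=
          hF.comp (f := fun w => (x - (σ + κ * p.1) * (t - s) - (σ + κ * w) * (s - p.2), p.2)) (by fun_prop)
        exact this.aestronglyMeasurable
      · intro y; exact ae_of_all _ fun z => hM _ _
      · exact integrable_const _
      · exact ae_of_all _ fun z =>
          hF.comp (f := fun p : ℝ × ℝ => (x - (σ + κ * p.1) * (t - s) - (σ + κ * z) * (s - p.2), p.2)) (by fun_prop)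
    · refine (norm_integral_le_of_norm_le_const (C := M) (ae_of_all _ fun z => hM _ _)).trans ?_
      simp

/-- Duhamel with damping, as an inequality -/
lemma duhamelK (κ σ : ℝ) (g : ℝ → ℝ) (hg : Continuous g)
    (u : ℝ → ℝ → ℝ) (hu : Continuous fun p : ℝ × ℝ => u p.1 p.2)
    (hb : ∀ x t, u x t ∈ Set.Icc (0:ℝ) 1) (M : ℝ) (hM : ∀ ζ ∈ Set.Icc (0:ℝ) 1, |g ζ| ≤ M)
    (mild : ∀ x t, 0 ≤ t → u x t = (∫ z, u (x - (σ + κ * z) * t) 0 ∂cauchyM) +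
      ∫ s in (0:ℝ)..t, ∫ z, g (u (x - (σ + κ * z) * (t - s)) s) ∂cauchyM)
    (K : ℝ) (x t : ℝ) (ht : 0 ≤ t) :
    ∫ s in (0:ℝ)..t, Real.exp (-K * (t - s)) *
      (∫ z, (g (u (x - (σ + κ * z) * (t - s)) s) + K * u (x - (σ + κ * z) * (t - s)) s) ∂cauchyM)
      ≤ u x t := by
  have hgu : Continuous fun p : ℝ × ℝ => g (u p.1 p.2) := hg.comp hu
  have hM' : ∀ x t, |g (u x t)| ≤ M := fun x t => hM _ (hb x t)
  have hb' : ∀ x t, |u x t| ≤ 1 := fun x t => by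
    rw [abs_of_nonneg (hb x t).1]; exact (hb x t).2
  set G : ℝ → ℝ := fun s => ∫ z, g (u (x - (σ + κ * z) * (t - s)) s) ∂cauchyM with hG
  have hGc : Continuous G := free_continuous κ σ (fun x t => g (u x t)) hgu M hM' x t
  set A : ℝ := ∫ z, u (x - (σ + κ * z) * t) 0 ∂cauchyM with hA
  have hA0 : 0 ≤ A := integral_nonneg fun z => (hb _ _).1
  set Φ : ℝ → ℝ := fun s => A + ∫ r in (0:ℝ)..s, G r with hΦ
  have hd : ∀ s, HasDerivAt Φ (G s) s := fun s =>
    (intervalIntegral.integral_hasDerivAt_right (hGc.intervalIntegrable _ _)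
      (hGc.stronglyMeasurableAtFilter _ _) hGc.continuousAt).const_add A
  have hΦt : u x t = Φ t := mild x t ht
  have hE : ∀ s ∈ Set.Icc 0 t, ∫ z, u (x - (σ + κ * z) * (t - s)) s ∂cauchyM = Φ s := by
    intro s hs
    have e : ∀ z, u (x - (σ + κ * z) * (t - s)) s = _ := fun z => mild _ s hs.1
    simp_rw [e]
    have hfc : Continuous fun z => ∫ w, u (x - (σ + κ * z) * (t - s) - (σ + κ * w) * s) 0 ∂cauchyM := by
      apply continuous_of_dominated (bound := fun _ => 1)
      · intro z
        have : Continuous fun w => u (x - (σ + κ * z) * (t - s) - (σ + κ * w) * s) 0 :=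
          hu.comp (f := fun w => (x - (σ + κ * z) * (t - s) - (σ + κ * w) * s, 0)) (by fun_prop)
        exact this.aestronglyMeasurable
      · intro y; exact ae_of_all _ fun z => hb' _ _
      · exact integrable_const _
      · exact ae_of_all _ fun w =>
          hu.comp (f := fun z => (x - (σ + κ * z) * (t - s) - (σ + κ * w) * s, 0)) (by fun_prop)
    have hi1 : Integrable (fun z => ∫ w, u (x - (σ + κ * z) * (t - s) - (σ + κ * w) * s) 0 ∂cauchyM) cauchyM := by
      refine Integrable.of_bound hfc.aestronglyMeasurable 1 (ae_of_all _ fun z => ?_)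
      refine (norm_integral_le_of_norm_le_const (C := 1) (ae_of_all _ fun z => hb' _ _)).trans ?_
      simp
    have hui : Integrable (fun z => u (x - (σ + κ * z) * (t - s)) s) cauchyM := by
      have : Continuous fun z => u (x - (σ + κ * z) * (t - s)) s :=
          hu.comp (f := fun z => (x - (σ + κ * z) * (t - s), s)) (by fun_prop)
      exact Integrable.of_bound this.aestronglyMeasurable 1 (ae_of_all _ fun z => hb' _ _)
    rw [integral_add hi1]
    · have h0 : Continuous fun y => u y 0 := hu.comp (f := fun y => (y, 0)) (by fun_prop)
      rw [cauchyM_semigroup κ σ (t - s) s (by linarith [hs.2]) hs.1 (fun y => u y 0) h0 1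
        (fun y => hb' y 0) x,
        free_push κ σ (fun x t => g (u x t)) hgu M hM' x s t hs.1 hs.2]
      simp [hΦ, hA, hG]
    · refine (hui.sub hi1).congr (ae_of_all _ fun z => ?_)
      simp only [Pi.sub_apply]
      rw [e z]; ring
  have hintegrand : ∀ s ∈ Set.uIcc 0 t, Real.exp (-K * (t - s)) *
      (∫ z, (g (u (x - (σ + κ * z) * (t - s)) s) + K * u (x - (σ + κ * z) * (t - s)) s) ∂cauchyM)
      = Real.exp (-K * (t - s)) * (K * Φ s + G s) := by
    intro s hs
    rw [Set.uIcc_of_le ht] at hs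
    congr 1
    have c1 : Continuous fun z => u (x - (σ + κ * z) * (t - s)) s :=
          hu.comp (f := fun z => (x - (σ + κ * z) * (t - s), s)) (by fun_prop)
    rw [integral_add, integral_const_mul, hE s hs, add_comm]
    · exact Integrable.of_bound (hg.comp c1).aestronglyMeasurable M (ae_of_all _ fun z => hM' _ _)
    · exact (Integrable.of_bound c1.aestronglyMeasurable 1 (ae_of_all _ fun z => hb' _ _)).const_mul K
  rw [intervalIntegral.integral_congr hintegrand]
  have hΦc : Continuous Φ := continuous_iff_continuousAt.2 fun s => (hd s).continuousAt
  have hder : ∀ s ∈ Set.uIcc 0 t, HasDerivAt (fun s => Real.exp (-K * (t - s)) * Φ s)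
      (Real.exp (-K * (t - s)) * (K * Φ s + G s)) s := by
    intro s _
    have h1 : HasDerivAt (fun s => -K * (t - s)) K s := by
      have := ((hasDerivAt_id s).const_sub t).const_mul (-K)
      simpa using this
    have := h1.exp.mul (hd s)
    refine this.congr_deriv ?_
    ring
  rw [intervalIntegral.integral_eq_sub_of_hasDerivAt hder
    (Continuous.intervalIntegrable (by fun_prop) _ _), hΦt]
  have : Φ 0 = A := by simp [hΦ]
  rw [this]
  simp only [sub_self, mul_zero, Real.exp_zero, one_mul]
  linarith [mul_nonneg (Real.exp_pos (-K * (t - 0))).le hA0]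

lemma cauchyM_Iic_pos (a : ℝ) : 0 < cauchyM.real (Set.Iic a) := by
  rw [measureReal_def, ENNReal.toReal_pos_iff]
  refine ⟨pos_iff_ne_zero.2 fun h => ?_, measure_lt_top _ _⟩
  have hac : (volume : Measure ℝ) ≪ cauchyM := by
    unfold cauchyM
    rw [ProbabilityTheory.cauchyMeasure_of_scale_ne_zero _ one_ne_zero]
    refine withDensity_absolutelyContinuous' (by fun_prop) (ae_of_all _ fun z => ?_)
    have := ProbabilityTheory.cauchyPDF_pos 0 (one_ne_zero (α := NNReal)) z
    simp [ProbabilityTheory.cauchyPDF_def, this]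
  have := hac h
  simp at this

lemma cauchyM_Iic_tendsto : Tendsto (fun Z => cauchyM.real (Set.Iic Z)) atTop (𝓝 1) := by
  have h := tendsto_measure_Iic_atTop cauchyM
  rw [measure_univ] at h
  exact (ENNReal.tendsto_toReal ENNReal.one_ne_top).comp h

/-- one improvement step -/
lemma spread_step (κ σ : ℝ) (hκ : 0 < κ) (g : ℝ → ℝ) (hg : Continuous g)
    (u : ℝ → ℝ → ℝ) (hu : Continuous fun p : ℝ × ℝ => u p.1 p.2)
    (hb : ∀ x t, u x t ∈ Set.Icc (0:ℝ) 1) (M : ℝ) (hM : ∀ ζ ∈ Set.Icc (0:ℝ) 1, |g ζ| ≤ M)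
    (hg0 : ∀ ζ ∈ Set.Icc (0:ℝ) 1, 0 ≤ g ζ)
    (K : ℝ) (hK : 0 < K) (hmono : MonotoneOn (fun ζ => g ζ + K * ζ) (Set.Icc 0 1))
    (D : ∀ x t, 0 ≤ t → ∫ s in (0:ℝ)..t, Real.exp (-K * (t - s)) *
      (∫ z, (g (u (x - (σ + κ * z) * (t - s)) s) + K * u (x - (σ + κ * z) * (t - s)) s) ∂cauchyM)
      ≤ u x t)
    (m m' c c' T : ℝ) (hm : m ∈ Set.Icc (0:ℝ) 1) (hT : 0 < T) (hc : 0 < c) (hcc : c < c')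
    (hL : ∀ t, T ≤ t → ∀ x, -c' * t ≤ x → m ≤ u x t) (hm' : m' < m + g m / K) :
    ∃ T', 0 < T' ∧ ∀ t, T' ≤ t → ∀ x, -c * t ≤ x → m' ≤ u x t := by
  set h := g m + K * m with hh
  have hh0 : 0 ≤ h := add_nonneg (hg0 m hm) (mul_nonneg hK.le hm.1)
  have hlim : Tendsto (fun Z => (h * cauchyM.real (Set.Iic Z)) * ((1 - Real.exp (-K * Z)) / K)) atTop
      (𝓝 ((h * 1) * ((1 - 0) / K))) := by
    refine (cauchyM_Iic_tendsto.const_mul h).mul ((tendsto_const_nhds.sub ?_).div_const K)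
    refine Real.tendsto_exp_atBot.comp ?_
    exact tendsto_id.const_mul_atTop_of_neg (by linarith)
  have hlt : m' < (h * 1) * ((1 - 0) / K) := by
    have : (h * 1) * ((1 - 0) / K) = m + g m / K := by rw [hh]; field_simp; ring
    rw [this]; exact hm'
  obtain ⟨Z, hZ1, hZ0⟩ := ((hlim.eventually (lt_mem_nhds hlt)).and (eventually_gt_atTop 0)).exists
  have hcd : 0 < c' - c := by linarith
  refine ⟨max (T + Z) ((c' + |σ| + κ * Z) * Z / (c' - c)), lt_max_of_lt_left (by linarith), ?_⟩
  intro t ht x hx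
  have ht1 : T + Z ≤ t := (le_max_left _ _).trans ht
  have ht2 : (c' + |σ| + κ * Z) * Z ≤ t * (c' - c) := by
    rw [← div_le_iff₀ hcd]; exact (le_max_right _ _).trans ht
  refine hZ1.le.trans (le_trans ?_ (D x t (by linarith)))
  have hb' : ∀ x t, |u x t| ≤ 1 := fun x t => by
    rw [abs_of_nonneg (hb x t).1]; exact (hb x t).2
  set H : ℝ → ℝ → ℝ := fun x t => g (u x t) + K * u x t with hH
  have hHc : Continuous fun p : ℝ × ℝ => H p.1 p.2 := (hg.comp hu).add (hu.const_mul K)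
  have hHb : ∀ x t, |H x t| ≤ M + K * 1 := fun x t => by
    refine (abs_add_le _ _).trans (add_le_add (hM _ (hb x t)) ?_)
    rw [abs_mul, abs_of_pos hK]; exact mul_le_mul_of_nonneg_left (hb' x t) hK.le
  have hH0 : ∀ x t, 0 ≤ H x t := fun x t =>
    add_nonneg (hg0 _ (hb x t)) (mul_nonneg hK.le (hb x t).1)
  set I : ℝ → ℝ := fun s => ∫ z, H (x - (σ + κ * z) * (t - s)) s ∂cauchyM with hI
  have hIc : Continuous I := free_continuous κ σ H hHc _ hHb x t
  have hI0 : ∀ s, 0 ≤ I s := fun s => integral_nonneg fun z => hH0 _ _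
  change _ ≤ ∫ s in (0:ℝ)..t, Real.exp (-K * (t - s)) * I s
  have hfc : Continuous fun s => Real.exp (-K * (t - s)) * I s := by fun_prop
  have hIl : ∀ s ∈ Set.Icc (t - Z) t, h * cauchyM.real (Set.Iic Z) ≤ I s := by
    intro s hs
    have hc1 : Continuous fun z => H (x - (σ + κ * z) * (t - s)) s :=
      hHc.comp (f := fun z => (x - (σ + κ * z) * (t - s), s)) (by fun_prop)
    have : h * cauchyM.real (Set.Iic Z) = ∫ z, (Set.Iic Z).indicator (fun _ => h) z ∂cauchyM := by
      rw [integral_indicator_const _ measurableSet_Iic, smul_eq_mul, mul_comm]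
    rw [this]
    refine integral_mono ((integrable_const h).indicator measurableSet_Iic)
      (Integrable.of_bound hc1.aestronglyMeasurable _ (ae_of_all _ fun z => hHb _ _)) fun z => ?_
    by_cases hz : z ∈ Set.Iic Z
    · rw [Set.indicator_of_mem hz]
      refine hmono hm (hb _ _) (hL s (by linarith [hs.1]) _ ?_)
      have hz' : z ≤ Z := hz
      have τ0 : 0 ≤ t - s := by linarith [hs.2]
      have τ1 : t - s ≤ Z := by linarith [hs.1]
      have e1 : (c' + σ + κ * z) * (t - s) ≤ (c' + |σ| + κ * Z) * (t - s) := by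
        refine mul_le_mul_of_nonneg_right ?_ τ0
        have := mul_le_mul_of_nonneg_left hz' hκ.le
        linarith [le_abs_self σ]
      have e2 : (c' + |σ| + κ * Z) * (t - s) ≤ (c' + |σ| + κ * Z) * Z := by
        refine mul_le_mul_of_nonneg_left τ1 ?_
        have := abs_nonneg σ
        have := mul_pos hκ hZ0
        linarith
      nlinarith
    · rw [Set.indicator_of_notMem hz]; exact hH0 _ _
  have hsplit := intervalIntegral.integral_add_adjacent_intervals
    (hfc.intervalIntegrable (μ := volume) 0 (t - Z)) (hfc.intervalIntegrable (t - Z) t)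
  rw [← hsplit]
  have hn : 0 ≤ ∫ s in (0:ℝ)..(t - Z), Real.exp (-K * (t - s)) * I s :=
    intervalIntegral.integral_nonneg (by linarith) fun s _ => mul_nonneg (Real.exp_pos _).le (hI0 s)
  have hmain : ∫ s in (t - Z)..t, Real.exp (-K * (t - s)) * (h * cauchyM.real (Set.Iic Z)) ≤
      ∫ s in (t - Z)..t, Real.exp (-K * (t - s)) * I s := by
    refine intervalIntegral.integral_mono_on (by linarith)
      (Continuous.intervalIntegrable (by fun_prop) _ _) (hfc.intervalIntegrable _ _) fun s hs => ?_
    exact mul_le_mul_of_nonneg_left (hIl s hs) (Real.exp_pos _).le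
  have hcomp : ∫ s in (t - Z)..t, Real.exp (-K * (t - s)) = (1 - Real.exp (-K * Z)) / K := by
    have hder : ∀ s ∈ Set.uIcc (t - Z) t, HasDerivAt (fun s => Real.exp (-K * (t - s)) / K)
        (Real.exp (-K * (t - s))) s := by
      intro s _
      have h1 : HasDerivAt (fun s => -K * (t - s)) K s := by
        have := ((hasDerivAt_id s).const_sub t).const_mul (-K)
        simpa using this
      refine (h1.exp.div_const K).congr_deriv ?_
      field_simp
    rw [intervalIntegral.integral_eq_sub_of_hasDerivAt hder
      (Continuous.intervalIntegrable (by fun_prop) _ _)]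
    simp [sub_div]
  rw [intervalIntegral.integral_mul_const, hcomp, mul_comm] at hmain
  linarith

/-- The main theorem for globally continuous `u`. -/
lemma spread_aux (κ σ : ℝ) (hκ : 0 < κ) (g : ℝ → ℝ) (hg_lip : LocallyLipschitz g)
    (hg0 : g 0 = 0) (hg1 : g 1 = 0)
    (hg_pos : ∀ ζ ∈ Set.Ioo (0 : ℝ) 1, 0 < g ζ)
    (u : ℝ → ℝ → ℝ) (hu : Continuous fun p : ℝ × ℝ => u p.1 p.2)
    (hb : ∀ x t, u x t ∈ Set.Icc (0:ℝ) 1)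
    (mild : ∀ x t, 0 ≤ t → u x t = (∫ z, u (x - (σ + κ * z) * t) 0 ∂cauchyM) +
      ∫ s in (0:ℝ)..t, ∫ z, g (u (x - (σ + κ * z) * (t - s)) s) ∂cauchyM)
    (hlim : Tendsto (fun x : ℝ => u x 0) atTop (𝓝 1))
    (c : ℝ) (hc : 0 < c) (ε : ℝ) (hε : 0 < ε) :
    ∃ T : ℝ, 0 < T ∧ ∀ t : ℝ, T ≤ t → ∀ x : ℝ, -c * t ≤ x → 1 - ε < u x t := by
  have hg : Continuous g := hg_lip.continuous
  have hgnn : ∀ ζ ∈ Set.Icc (0:ℝ) 1, 0 ≤ g ζ := by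
    intro ζ hζ
    rcases eq_or_lt_of_le hζ.1 with h | h
    · rw [← h, hg0]
    rcases eq_or_lt_of_le hζ.2 with h' | h'
    · rw [h', hg1]
    exact (hg_pos ζ ⟨h, h'⟩).le
  obtain ⟨L, hL⟩ := LocallyLipschitzOn.exists_lipschitzOnWith_of_compact
    (isCompact_Icc (a := (0:ℝ)) (b := 1)) hg_lip.locallyLipschitzOn
  set K : ℝ := L + 1 with hKdef
  have hK : 0 < K := by positivity
  have hmono : MonotoneOn (fun ζ => g ζ + K * ζ) (Set.Icc 0 1) := by
    intro a ha b hb hab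
    have := hL.dist_le_mul a ha b hb
    rw [Real.dist_eq, Real.dist_eq, abs_sub_comm a b, abs_of_nonneg (sub_nonneg.2 hab)] at this
    have := (abs_le.1 this).2
    simp only [hKdef]
    nlinarith
  obtain ⟨M, hM⟩ := (isCompact_Icc (a := (0:ℝ)) (b := 1)).exists_bound_of_continuousOn hg.continuousOn
  have hM' : ∀ ζ ∈ Set.Icc (0:ℝ) 1, |g ζ| ≤ M := hM
  have D := duhamelK κ σ g hg u hu hb M hM' mild K
  have hb' : ∀ x t, |u x t| ≤ 1 := fun x t => by
    rw [abs_of_nonneg (hb x t).1]; exact (hb x t).2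
  -- initial lower bound
  have start0 : ∃ m0, 0 < m0 ∧ m0 ≤ 1/2 ∧ ∃ T, 0 < T ∧ ∀ t, T ≤ t → ∀ x, -(c+1) * t ≤ x → m0 ≤ u x t := by
    obtain ⟨Y, hY⟩ := eventually_atTop.1 (hlim.eventually (lt_mem_nhds (by norm_num : (1:ℝ)/2 < 1)))
    set Z : ℝ := (-(c + 1) - σ - 1) / κ
    have hZ : κ * Z = -(c + 1) - σ - 1 := by simp only [Z]; field_simp
    refine ⟨1/2 * cauchyM.real (Set.Iic Z), mul_pos (by norm_num) (cauchyM_Iic_pos Z), ?_, max Y 1,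
      lt_max_of_lt_right one_pos, ?_⟩
    · have : cauchyM.real (Set.Iic Z) ≤ 1 := measureReal_le_one
      linarith
    intro t ht x hx
    have ht1 : 1 ≤ t := (le_max_right _ _).trans ht
    have htY : Y ≤ t := (le_max_left _ _).trans ht
    rw [mild x t (by linarith)]
    have hnn : 0 ≤ ∫ s in (0:ℝ)..t, ∫ z, g (u (x - (σ + κ * z) * (t - s)) s) ∂cauchyM :=
      intervalIntegral.integral_nonneg (by linarith) fun s _ => integral_nonneg fun z => hgnn _ (hb _ _)
    have : 1/2 * cauchyM.real (Set.Iic Z) = ∫ z, (Set.Iic Z).indicator (fun _ => (1/2:ℝ)) z ∂cauchyM := by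
      rw [integral_indicator_const _ measurableSet_Iic, smul_eq_mul, mul_comm]
    have hc1 : Continuous fun z => u (x - (σ + κ * z) * t) 0 :=
      hu.comp (f := fun z => (x - (σ + κ * z) * t, 0)) (by fun_prop)
    have : 1/2 * cauchyM.real (Set.Iic Z) ≤ ∫ z, u (x - (σ + κ * z) * t) 0 ∂cauchyM := by
      rw [this]
      refine integral_mono ((integrable_const _).indicator measurableSet_Iic)
        (Integrable.of_bound hc1.aestronglyMeasurable _ (ae_of_all _ fun z => hb' _ _)) fun z => ?_
      by_cases hz : z ∈ Set.Iic Z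
      · rw [Set.indicator_of_mem hz]
        refine (hY _ ?_).le
        have h1 : κ * z ≤ κ * Z := mul_le_mul_of_nonneg_left hz hκ.le
        rw [hZ] at h1
        have h2 : (σ + κ * z) * t ≤ (-(c+1) - 1) * t :=
          mul_le_mul_of_nonneg_right (by linarith) (by linarith)
        linarith
      · rw [Set.indicator_of_notMem hz]; exact (hb _ _).1
    linarith
  obtain ⟨m0, hm0, hm0', hstart⟩ := start0
  set e : ℝ := min (ε / 2) (1 / 2) with he
  have he0 : 0 < e := lt_min (by linarith) (by norm_num)
  have he1 : e ≤ 1 / 2 := min_le_right _ _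
  have he2 : e ≤ ε / 2 := min_le_left _ _
  obtain ⟨p, hp, hpmin⟩ := (isCompact_Icc (a := m0) (b := 1 - e)).exists_isMinOn
    (Set.nonempty_Icc.2 (by linarith)) hg.continuousOn
  have hgp : 0 < g p := hg_pos p ⟨by linarith [hp.1], by linarith [hp.2]⟩
  set η : ℝ := g p / (2 * K) with hη
  have hη0 : 0 < η := by positivity
  have key : ∀ n : ℕ, ∀ c1, 0 < c1 → c1 < c + 1 →
      ∃ T, 0 < T ∧ ∀ t, T ≤ t → ∀ x, -c1 * t ≤ x → min (m0 + n * η) (1 - e) ≤ u x t := by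
    intro n
    induction n with
    | zero =>
      intro c1 h1 h2
      obtain ⟨T, hT, hTT⟩ := hstart
      refine ⟨T, hT, fun t ht x hx => (min_le_left _ _).trans ?_⟩
      simp only [Nat.cast_zero, zero_mul, add_zero]
      refine hTT t ht x (le_trans ?_ hx)
      nlinarith
    | succ n ih =>
      intro c1 h1 h2
      obtain ⟨T, hT, hTT⟩ := ih ((c1 + (c + 1)) / 2) (by linarith) (by linarith)
      set m := min (m0 + n * η) (1 - e) with hm
      have hma : m0 ≤ m := le_min (by have : 0 ≤ n * η := by positivity
                                      linarith) (by linarith)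
      have hmb : m ≤ 1 - e := min_le_right _ _
      have hgm : g p ≤ g m := hpmin ⟨hma, hmb⟩
      refine spread_step κ σ hκ g hg u hu hb M hM' hgnn K hK hmono D m _ c1
        ((c1 + (c + 1)) / 2) T ⟨by linarith, by linarith⟩ hT h1 (by linarith) hTT ?_
      have h3 : m + η < m + g m / K := by
        have : η < g m / K := by
          rw [hη, div_lt_div_iff₀ (by positivity) hK]
          nlinarith
        linarith
      refine lt_of_le_of_lt ?_ h3
      push_cast
      rcases min_choice (m0 + n * η) (1 - e) with h | h
      · refine (min_le_left _ _).trans ?_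
        rw [hm, h]; linarith
      · refine (min_le_right _ _).trans ?_
        rw [hm, h]; linarith
  obtain ⟨n, hn⟩ := exists_nat_gt (1 / η)
  obtain ⟨T, hT, hTT⟩ := key n c hc (by linarith)
  refine ⟨T, hT, fun t ht x hx => ?_⟩
  have h1 := hTT t ht x hx
  rw [div_lt_iff₀ hη0] at hn
  rw [min_eq_right (by linarith)] at h1
  linarith

/-- Unbounded speed of spread (the α = 1 case). Let `g` be C¹
on `[0,1]` (extended locally Lipschitz to ℝ) with `g(0) = g(1) = 0` and
`g > 0` on `(0,1)`. Let `u` be a continuous mild solution of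
`∂_t u + Au = g(u)` with `0 ≤ u ≤ 1`, whose initial datum vanishes on
`(-∞,0)` and tends to `1` at `+∞`. Then for every `c > 0` and every `ε > 0`
there exists `T > 0` such that `u(x,t) > 1 − ε` whenever `t ≥ T` and
`x ≥ −ct`; i.e. `liminf_{t→∞} inf_{x ≥ −ct} u(x,t) = 1` for every `c > 0`. -/
theorem unbounded_speed_of_spread
    (β : ℝ) (hβ : β ∈ Set.Ioo (-1 : ℝ) 1)
    (κ σ : ℝ) (hκ : κ = Real.cos (π * β / 2)) (hσ : σ = Real.sin (π * β / 2))
    (g : ℝ → ℝ) (hg_lip : LocallyLipschitz g)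
    (hg_C1 : ContDiffOn ℝ 1 g (Set.Icc 0 1))
    (hg0 : g 0 = 0) (hg1 : g 1 = 0)
    (hg_pos : ∀ ζ ∈ Set.Ioo (0 : ℝ) 1, 0 < g ζ)
    (u : ℝ → ℝ → ℝ)
    (hu_cont : ContinuousOn (fun p : ℝ × ℝ => u p.1 p.2)
      (Set.univ ×ˢ Set.Ici 0))
    (hu_bdd : ∀ x : ℝ, ∀ t : ℝ, 0 ≤ t → u x t ∈ Set.Icc (0 : ℝ) 1)
    (hu : ∀ T : ℝ, 0 < T → IsMildSolution κ σ g T u)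
    (hu0_supp : ∀ x : ℝ, x < 0 → u x 0 = 0)
    (hu0_lim : Tendsto (fun x : ℝ => u x 0) atTop (𝓝 1)) :
    ∀ c : ℝ, 0 < c → ∀ ε : ℝ, 0 < ε → ∃ T : ℝ, 0 < T ∧
      ∀ t : ℝ, T ≤ t → ∀ x : ℝ, -c * t ≤ x → 1 - ε < u x t := by
  have hκ0 : 0 < κ := by
    rw [hκ]
    apply Real.cos_pos_of_mem_Ioo
    constructor <;> nlinarith [Real.pi_pos, hβ.1, hβ.2]
  set U : ℝ → ℝ → ℝ := fun x t => u x (max t 0) with hU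
  have hUe : ∀ x t, 0 ≤ t → U x t = u x t := fun x t ht => by simp only [hU, max_eq_left ht]
  have hUc : Continuous fun p : ℝ × ℝ => U p.1 p.2 :=
    hu_cont.comp_continuous (f := fun p : ℝ × ℝ => (p.1, max p.2 0)) (by fun_prop)
      (fun p => ⟨trivial, Set.mem_Ici.2 (le_max_right _ _)⟩)
  have hUb : ∀ x t, U x t ∈ Set.Icc (0:ℝ) 1 := fun x t => hu_bdd _ _ (le_max_right _ _)
  have hmild : ∀ x t, 0 ≤ t → U x t = (∫ z, U (x - (σ + κ * z) * t) 0 ∂cauchyM) +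
      ∫ s in (0:ℝ)..t, ∫ z, g (U (x - (σ + κ * z) * (t - s)) s) ∂cauchyM := by
    intro x t ht
    rcases eq_or_lt_of_le ht with h | h
    · subst h; simp
    rw [hUe x t ht, hu t h x t h le_rfl]
    congr 1
    · simp only [stableKernel]
      rw [stable_to_cauchyM κ σ t hκ0 h (fun y => u y 0) x]
      simp only [hUe _ 0 le_rfl]
    · rw [intervalIntegral.integral_of_le ht, integral_Ioc_eq_integral_Ioo,
        integral_Ioc_eq_integral_Ioo]
      refine setIntegral_congr_fun measurableSet_Ioo fun s hs => ?_
      simp only [stableKernel]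
      rw [stable_to_cauchyM κ σ (t - s) hκ0 (by linarith [hs.2]) (fun y => g (u y s)) x]
      simp only [hUe _ s hs.1.le]
  have hUlim : Tendsto (fun x : ℝ => U x 0) atTop (𝓝 1) := by
    simpa only [hUe _ 0 le_rfl] using hu0_lim
  intro c hc ε hε
  obtain ⟨T, hT, h⟩ := spread_aux κ σ hκ0 g hg_lip hg0 hg1 hg_pos U hUc hUb hmild hUlim c hc ε hε
  refine ⟨T, hT, fun t ht x hx => ?_⟩
  rw [← hUe x t (by linarith)]
  exact h t ht x hx
end

section
/- Finite speed of spread (the α = 1 case): let g : [0,1] → ℝ be continuously differentiable with g(0) = g(1) = 0 and g'(0) < 0. Let u : ℝ × [0,∞) → ℝ be continuous with 0 ≤ u(x,t) ≤ 1 for all (x,t), a mild solution of ∂_t u + Au = g(u) on ℝ × [0,T] for every T > 0, whose initial datum u₀ = u(·,0) is continuous, satisfies 0 ≤ u₀ ≤ 1, u₀(x) = 0 for all x < 0, and lim_{x→∞} u₀(x) = 1. Then there exists c > 0 such that for every ε > 0 there exists T > 0 with u(x,t) < ε for all t ≥ T and all x ≤ −ct; that is, limsup_{t→∞} sup_{x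 ≤ −ct} u(x,t) = 0 for some c > 0. -/
open Real MeasureTheory Filter Topology

open scoped NNReal FourierTransform ComplexInnerProductSpace

lemma fsp_fourier (σ : ℝ) (γ : ℝ≥0) (hγ : γ ≠ 0) (v : ℝ) :
    Integrable (fun w : ℝ => Complex.exp (-(2*π*γ*|w| : ℝ) + (2*π*σ*w : ℝ) * Complex.I)) ∧
    𝓕 (fun w : ℝ => Complex.exp (-(2*π*γ*|w| : ℝ) + (2*π*σ*w : ℝ) * Complex.I)) v
      = (ProbabilityTheory.cauchyPDFReal σ γ v : ℂ) := by
  have hg : (0:ℝ) < γ := by positivity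
  have hmain : ∀ θ : ℝ, Integrable (fun w : ℝ => Complex.exp (-(2*π*γ*|w| : ℝ) + (2*π*θ*w : ℝ) * Complex.I)) ∧ ∫ w : ℝ, Complex.exp (-(2*π*γ*|w| : ℝ) + (2*π*θ*w : ℝ) * Complex.I) = ((π⁻¹ * γ * (θ^2+γ^2)⁻¹ : ℝ) : ℂ) := by
    intro θ
    have h1re : (-(2*π*γ : ℝ) + (2*π*θ : ℝ) * Complex.I).re < 0 := by
      simp; positivity
    have h2re : 0 < ((2*π*γ : ℝ) + (2*π*θ : ℝ) * Complex.I).re := by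
      simp; positivity
    have i1 := integrableOn_exp_mul_complex_Ioi h1re 0
    have i2 := integrableOn_exp_mul_complex_Iic h2re 0
    have j1 := integral_exp_mul_complex_Ioi h1re 0
    have j2 := integral_exp_mul_complex_Iic h2re 0
    have e1 : Set.EqOn (fun w : ℝ => Complex.exp (-(2*π*γ*|w| : ℝ) + (2*π*θ*w : ℝ) * Complex.I)) (fun w : ℝ => Complex.exp ((-(2*π*γ : ℝ) + (2*π*θ : ℝ) * Complex.I) * w)) (Set.Ioi 0) := by
      intro w hw
      simp only [abs_of_pos (Set.mem_Ioi.1 hw)]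
      congr 1; push_cast; ring
    have e2 : Set.EqOn (fun w : ℝ => Complex.exp (-(2*π*γ*|w| : ℝ) + (2*π*θ*w : ℝ) * Complex.I)) (fun w : ℝ => Complex.exp (((2*π*γ : ℝ) + (2*π*θ : ℝ) * Complex.I) * w)) (Set.Iic 0) := by
      intro w hw
      simp only [abs_of_nonpos (Set.mem_Iic.1 hw)]
      congr 1; push_cast; ring
    have k1 := (integrableOn_congr_fun e1 measurableSet_Ioi).2 i1
    have k2 := (integrableOn_congr_fun e2 measurableSet_Iic).2 i2
    refine ⟨?_, ?_⟩
    · rw [← integrableOn_univ, ← Set.Iic_union_Ioi (a := (0:ℝ))]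
      exact k2.union k1
    · rw [← intervalIntegral.integral_Iic_add_Ioi k2 k1, setIntegral_congr_fun measurableSet_Ioi e1,
        setIntegral_congr_fun measurableSet_Iic e2, j1, j2]
      have hp : (π:ℂ) ≠ 0 := by exact_mod_cast pi_ne_zero
      have n1 : (-(2*π*γ : ℝ) + (2*π*θ : ℝ) * Complex.I) ≠ 0 := fun h => by rw [h] at h1re; simp at h1re
      have n2 : ((2*π*γ : ℝ) + (2*π*θ : ℝ) * Complex.I) ≠ 0 := fun h => by rw [h] at h2re; simp at h2re
      have n3 : ((θ:ℂ)^2+(γ:ℝ)^2) ≠ 0 := by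
        have : θ^2+(γ:ℝ)^2 ≠ 0 := by positivity
        exact_mod_cast this
      simp only [Complex.ofReal_zero, mul_zero, Complex.exp_zero]
      push_cast at n1 n2 n3 ⊢
      have n4 : ((γ:ℝ):ℂ) + θ * Complex.I ≠ 0 := fun h => n2 (by
        linear_combination (2*π:ℂ) * h)
      have n5 : -((γ:ℝ):ℂ) + θ * Complex.I ≠ 0 := fun h => n1 (by
        linear_combination (2*π:ℂ) * h)
      field_simp
      ring_nf
      simp only [Complex.I_sq]
      ring
  refine ⟨(hmain σ).1, ?_⟩
  rw [Real.fourier_eq', ProbabilityTheory.cauchyPDFReal_def]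
  have := (hmain (σ - v)).2
  rw [show (v - σ)^2 = (σ - v)^2 by ring, ← this]
  congr 1; ext w
  rw [smul_eq_mul, ← Complex.exp_add]
  congr 1
  simp
  ring

lemma fsp_charFun (σ : ℝ) (γ : ℝ≥0) (hγ : γ ≠ 0) (t : ℝ) :
    charFun (ProbabilityTheory.cauchyMeasure σ γ) t =
      Complex.exp (-(γ*|t| : ℝ) + (σ*t : ℝ) * Complex.I) := by
  set f : ℝ → ℂ := (fun w : ℝ => Complex.exp (-(2*π*γ*|w| : ℝ) + (2*π*σ*w : ℝ) * Complex.I)) with hf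
  have hF : 𝓕 f = fun v => (ProbabilityTheory.cauchyPDFReal σ γ v : ℂ) :=
    funext fun v => (fsp_fourier σ γ hγ v).2
  have hfi : Integrable f := (fsp_fourier σ γ hγ 0).1
  have hfc : Continuous f := by rw [hf]; fun_prop
  have hinv := hfc.fourierInv_fourier_eq hfi (by
    rw [hF]; exact (ProbabilityTheory.integrable_cauchyPDFReal σ).ofReal)
  have h := congrFun hinv (t/(2*π))
  rw [Real.fourierInv_eq', hF] at h
  rw [charFun_apply_real, ProbabilityTheory.cauchyMeasure_of_scale_ne_zero _ hγ,
    integral_withDensity_eq_integral_toReal_smul (by fun_prop) (by simp [ProbabilityTheory.cauchyPDF])]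
  have hR : f (t/(2*π)) = Complex.exp (-(γ*|t| : ℝ) + (σ*t : ℝ) * Complex.I) := by
    rw [hf]
    have : |t/(2*π)| = |t|/(2*π) := by rw [abs_div, abs_of_pos (by positivity : 0 < 2*π)]
    simp only [this]
    congr 3
    · field_simp
    · field_simp
  rw [← hR, ← h]
  congr 1; ext v
  rw [ProbabilityTheory.cauchyPDF, ENNReal.toReal_ofReal (ProbabilityTheory.cauchyPDF_pos σ hγ v).le]
  rw [Complex.real_smul, smul_eq_mul, mul_comm]
  congr 2
  have : 2 * π * (t/(2*π) * v) = t * v := by field_simp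
  simp
  rw [← mul_assoc]; congr 1
  have hp : (π:ℂ) ≠ 0 := by exact_mod_cast pi_ne_zero
  field_simp

/-- strict stability -/
lemma fsp_stable (σ : ℝ) (γ : ℝ≥0) (hγ : γ ≠ 0) (a b : ℝ) (ha : 0 ≤ a) (hb : 0 ≤ b)
    (k : ℝ → ℝ) (hk : Continuous k) (C : ℝ) (hC : ∀ x, |k x| ≤ C) :
    ∫ z, ∫ w, k (a * z + b * w) ∂(ProbabilityTheory.cauchyMeasure σ γ) ∂(ProbabilityTheory.cauchyMeasure σ γ)
      = ∫ z, k ((a+b)*z) ∂(ProbabilityTheory.cauchyMeasure σ γ) := by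
  set μ := ProbabilityTheory.cauchyMeasure σ γ with hμ
  have hm : (μ.map (a * ·)) ∗ (μ.map (b * ·)) = μ.map ((a+b) * ·) := by
    have := Measure.isProbabilityMeasure_map (μ := μ) (f := (a * ·)) (by fun_prop)
    have := Measure.isProbabilityMeasure_map (μ := μ) (f := (b * ·)) (by fun_prop)
    have := Measure.isProbabilityMeasure_map (μ := μ) (f := ((a+b) * ·)) (by fun_prop)
    apply Measure.ext_of_charFun
    ext t
    rw [charFun_conv, charFun_map_mul, charFun_map_mul, charFun_map_mul, hμ, fsp_charFun _ _ hγ,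
      fsp_charFun _ _ hγ, fsp_charFun _ _ hγ, ← Complex.exp_add]
    congr 1
    rw [abs_mul, abs_mul, abs_mul, abs_of_nonneg ha, abs_of_nonneg hb, abs_of_nonneg (add_nonneg ha hb)]
    push_cast; ring
  have hint : ∀ (ν : Measure ℝ) [IsProbabilityMeasure ν], Integrable k ν := fun ν _ =>
    Integrable.of_bound hk.aestronglyMeasurable C (ae_of_all _ fun x => by simpa using hC x)
  have := Measure.isProbabilityMeasure_map (μ := μ) (f := (a * ·)) (by fun_prop)
  have := Measure.isProbabilityMeasure_map (μ := μ) (f := (b * ·)) (by fun_prop)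
  have e : ∫ x, k x ∂((μ.map (a * ·)) ∗ (μ.map (b * ·))) = ∫ x, k x ∂(μ.map ((a+b) * ·)) := by rw [hm]
  rw [integral_conv (hint _), integral_map (by fun_prop) (hk.aestronglyMeasurable),
    integral_map (by fun_prop)] at e
  · rw [← e]; congr 1; ext z
    rw [integral_map (by fun_prop)]
    exact (hk.comp (by fun_prop)).aestronglyMeasurable
  · refine (Continuous.aestronglyMeasurable ?_)
    refine continuous_of_dominated (bound := fun _ => C) ?_ ?_ ?_ ?_
    · intro x; exact (hk.comp (by fun_prop)).aestronglyMeasurable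
    · intro x; exact ae_of_all _ fun y => by simpa using hC _
    · exact integrable_const _
    · exact ae_of_all _ fun y => hk.comp (by fun_prop)

lemma fsp_int (μ : Measure ℝ) [IsProbabilityMeasure μ] (k : ℝ → ℝ) (hk : Continuous k) (C : ℝ)
    (hC : ∀ x, |k x| ≤ C) : Integrable k μ :=
  Integrable.of_bound hk.aestronglyMeasurable C (ae_of_all _ fun x => by simpa using hC x)

lemma fsp_int_le (μ : Measure ℝ) [IsProbabilityMeasure μ] (k : ℝ → ℝ) (C : ℝ)
    (hC : ∀ x, |k x| ≤ C) : |∫ z, k z ∂μ| ≤ C := by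
  have := norm_integral_le_of_norm_le_const (μ := μ) (f := k) (C := C)
    (ae_of_all _ fun x => by simpa using hC x)
  simpa using this

lemma fsp_int_cont {X : Type*} [TopologicalSpace X] [FirstCountableTopology X]
    (μ : Measure ℝ) [IsProbabilityMeasure μ] (k : X → ℝ → ℝ)
    (hk : Continuous (fun p : X × ℝ => k p.1 p.2)) (C : ℝ)
    (hC : ∀ x z, |k x z| ≤ C) : Continuous (fun x => ∫ z, k x z ∂μ) := by
  refine continuous_of_dominated (bound := fun _ => C) ?_ ?_ ?_ ?_
  · intro x; exact (hk.comp (by fun_prop : Continuous fun z : ℝ => (x, z))).aestronglyMeasurable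
  · intro x; exact ae_of_all _ fun y => by simpa using hC _ _
  · exact integrable_const _
  · exact ae_of_all _ fun y => hk.comp (by fun_prop : Continuous fun x : X => (x, y))

lemma fsp_tail (μ : Measure ℝ) [IsProbabilityMeasure μ] (f : ℝ → ℝ) (hf : Integrable f μ)
    (M Λ : ℝ) (hM : ∀ z, f z ≤ M) (h0 : ∀ z, -Λ < z → f z ≤ 0) :
    ∫ z, f z ∂μ ≤ M * μ.real (Set.Iic (-Λ)) := by
  have : ∫ z, (Set.Iic (-Λ)).indicator (fun _ => M) z ∂μ = M * μ.real (Set.Iic (-Λ)) := by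
    rw [integral_indicator_const _ measurableSet_Iic, smul_eq_mul, mul_comm]
  rw [← this]
  refine integral_mono hf ((integrable_const M).indicator measurableSet_Iic) fun z => ?_
  by_cases hz : z ≤ -Λ
  · simpa [Set.indicator, hz] using hM z
  · simpa [Set.indicator, hz] using h0 z (not_le.1 hz)

lemma fsp_tail_small (μ : Measure ℝ) [IsProbabilityMeasure μ] (η : ℝ) (hη : 0 < η) :
    ∃ Λ : ℝ, 0 < Λ ∧ μ.real (Set.Iic (-Λ)) < η := by
  have h2 : Tendsto (fun x => μ.real (Set.Iic x)) atBot (𝓝 0) := by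
    have := ProbabilityTheory.tendsto_cdf_atBot μ
    exact this.congr fun x => ProbabilityTheory.cdf_eq_real μ x
  have h3 := (h2.eventually (gt_mem_nhds hη)).and (eventually_lt_atBot 0)
  obtain ⟨x, hx, hx0⟩ := h3.exists
  exact ⟨-x, by linarith, by simpa using hx⟩

lemma fsp_duhamel (μ : Measure ℝ) [IsProbabilityMeasure μ]
    (hst : ∀ a b : ℝ, 0 ≤ a → 0 ≤ b → ∀ k : ℝ → ℝ, Continuous k → ∀ C, (∀ x, |k x| ≤ C) →
      ∫ z, ∫ w, k (a * z + b * w) ∂μ ∂μ = ∫ z, k ((a+b)*z) ∂μ)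
    (U G : ℝ → ℝ → ℝ) (hU : Continuous (fun p : ℝ × ℝ => U p.1 p.2))
    (hG : Continuous (fun p : ℝ × ℝ => G p.1 p.2))
    (C₁ C : ℝ) (hUb : ∀ x t, |U x t| ≤ C₁) (hGb : ∀ x t, |G x t| ≤ C)
    (hmild : ∀ x t, 0 < t → U x t = (∫ z, U (x - t * z) 0 ∂μ) +
      ∫ s in Set.Ioc (0:ℝ) t, ∫ z, G (x - (t - s) * z) s ∂μ)
    (x t s : ℝ) (hs : 0 ≤ s) (hst' : s ≤ t) :
    ∫ z, U (x - (t - s) * z) s ∂μ = (∫ z, U (x - t * z) 0 ∂μ) +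
      ∫ r in (0:ℝ)..s, ∫ z, G (x - (t - r) * z) r ∂μ := by
  rcases hs.eq_or_lt with rfl | hs
  · simp
  have e1 : ∀ z, U (x - (t - s) * z) s = (∫ w, U (x - (t - s) * z - s * w) 0 ∂μ) +
      ∫ r in Set.Ioc (0:ℝ) s, ∫ w, G (x - (t - s) * z - (s - r) * w) r ∂μ :=
    fun z => hmild _ s hs
  have c2 : Continuous (fun p : ℝ × ℝ => ∫ w, G (x - (t - s) * p.1 - (s - p.2) * w) p.2 ∂μ) := by
    refine fsp_int_cont μ _ ?_ C fun _ _ => hGb _ _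
    exact hG.comp (by fun_prop : Continuous fun q : (ℝ × ℝ) × ℝ =>
      (x - (t - s) * q.1.1 - (s - q.1.2) * q.2, q.1.2))
  have i2 : Integrable (fun p : ℝ × ℝ => ∫ w, G (x - (t - s) * p.1 - (s - p.2) * w) p.2 ∂μ)
      (μ.prod (volume.restrict (Set.Ioc (0:ℝ) s))) := by
    refine Integrable.of_bound c2.aestronglyMeasurable C (ae_of_all _ fun p => ?_)
    exact fsp_int_le μ _ C fun _ => hGb _ _
  have i1 : Integrable (fun z => ∫ w, U (x - (t - s) * z - s * w) 0 ∂μ) μ := by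
    refine fsp_int μ _ ?_ C₁ fun z => fsp_int_le μ _ C₁ fun _ => hUb _ _
    refine fsp_int_cont μ _ ?_ C₁ fun _ _ => hUb _ _
    exact hU.comp (by fun_prop : Continuous fun q : ℝ × ℝ =>
      (x - (t - s) * q.1 - s * q.2, (0:ℝ)))
  simp_rw [e1]
  rw [integral_add i1 i2.integral_prod_left, integral_integral_swap (f := fun z r => ∫ w, G (x - (t - s) * z - (s - r) * w) r ∂μ) i2, intervalIntegral.integral_of_le hs.le]
  congr 1
  · have := hst (t - s) s (by linarith) hs.le (fun y => U (x - y) 0)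
      (hU.comp (by fun_prop : Continuous fun y : ℝ => (x - y, (0:ℝ)))) C₁ (fun _ => hUb _ _)
    rw [sub_add_cancel] at this
    rw [← this]
    simp_rw [sub_sub]
  · refine setIntegral_congr_fun measurableSet_Ioc fun r hr => ?_
    have := hst (t - s) (s - r) (by linarith) (by linarith [hr.2]) (fun y => G (x - y) r)
      (hG.comp (by fun_prop : Continuous fun y : ℝ => (x - y, r))) C (fun _ => hGb _ _)
    rw [sub_add_sub_cancel] at this
    simp only [← this]
    simp_rw [sub_sub]

/-- Gronwall type comparison. -/
lemma fsp_gronwall (Φ F : ℝ → ℝ) (hd : ∀ s, HasDerivAt Φ (F s) s) (a B t₀ t₁ : ℝ) (ha : 0 < a)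
    (hB : 0 ≤ B) (h01 : t₀ ≤ t₁) (h : ∀ s, t₀ ≤ s → s ≤ t₁ → F s + a * Φ s ≤ B) :
    Φ t₁ ≤ exp (-(a * (t₁ - t₀))) * Φ t₀ + B / a := by
  have hd' : ∀ s, HasDerivAt (fun s => exp (a * s) * (Φ s - B / a))
      (exp (a * s) * (F s + a * Φ s - B)) s := by
    intro s
    have h1 : HasDerivAt (fun s => exp (a * s)) (exp (a * s) * a) s := by
      simpa using ((hasDerivAt_id s).const_mul a).exp
    have := h1.mul ((hd s).sub_const (B / a))
    refine this.congr_deriv ?_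
    field_simp
    ring
  have hanti : AntitoneOn (fun s => exp (a * s) * (Φ s - B / a)) (Set.Icc t₀ t₁) := by
    refine antitoneOn_of_deriv_nonpos (convex_Icc _ _)
      (fun s _ => (hd' s).continuousAt.continuousWithinAt)
      (fun s _ => (hd' s).differentiableAt.differentiableWithinAt) fun s hs => ?_
    rw [interior_Icc] at hs
    rw [(hd' s).deriv]
    have := h s hs.1.le hs.2.le
    exact mul_nonpos_of_nonneg_of_nonpos (exp_pos _).le (by linarith)
  have h2 := hanti (Set.left_mem_Icc.2 h01) (Set.right_mem_Icc.2 h01) h01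
  have h3 : exp (-(a * (t₁ - t₀))) = exp (-(a * t₁)) * exp (a * t₀) := by
    rw [← exp_add]; congr 1; ring
  have h4 : exp (-(a * t₁)) * exp (a * t₁) = 1 := by rw [← exp_add]; simp
  have h5 := mul_le_mul_of_nonneg_left h2 (exp_pos (-(a * t₁))).le
  simp only [← mul_assoc, h4, ← h3, one_mul] at h5
  have h6 : 0 ≤ exp (-(a * (t₁ - t₀))) * (B / a) := by positivity
  linarith

lemma fsp_main (μ : Measure ℝ) [IsProbabilityMeasure μ]
    (hst : ∀ a b : ℝ, 0 ≤ a → 0 ≤ b → ∀ k : ℝ → ℝ, Continuous k → ∀ C, (∀ x, |k x| ≤ C) →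
      ∫ z, ∫ w, k (a * z + b * w) ∂μ ∂μ = ∫ z, k ((a+b)*z) ∂μ)
    (U : ℝ → ℝ → ℝ) (g : ℝ → ℝ) (hU : Continuous (fun p : ℝ × ℝ => U p.1 p.2))
    (hg : Continuous g)
    (hUb : ∀ x t, U x t ∈ Set.Icc (0:ℝ) 1)
    (hmild : ∀ x t, 0 < t → U x t = (∫ z, U (x - t * z) 0 ∂μ) +
      ∫ s in Set.Ioc (0:ℝ) t, ∫ z, g (U (x - (t - s) * z) s) ∂μ)
    (hU0 : ∀ x, x < 0 → U x 0 = 0)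
    (a δ : ℝ) (ha : 0 < a) (hδ : 0 < δ) (hgδ : ∀ v ∈ Set.Icc (0:ℝ) 1, v ≤ δ → g v + a * v ≤ 0) :
    ∃ c : ℝ, 0 < c ∧ ∀ ε : ℝ, 0 < ε → ∃ T : ℝ, 0 < T ∧
      ∀ t : ℝ, T ≤ t → ∀ x : ℝ, x ≤ -c * t → U x t < ε := by
  obtain ⟨C₀, hC₀⟩ := (isCompact_Icc (a := (0:ℝ)) (b := 1)).exists_bound_of_continuousOn hg.continuousOn
  set C := |C₀| + a + 1 with hC
  have hCpos : 0 < C := by positivity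
  have hGb : ∀ x t, |g (U x t)| ≤ C := fun x t => by
    have := hC₀ _ (hUb x t)
    rw [Real.norm_eq_abs] at this
    linarith [le_abs_self C₀]
  have hhC : ∀ x t, g (U x t) + a * U x t ≤ C := fun x t => by
    have := hC₀ _ (hUb x t)
    rw [Real.norm_eq_abs] at this
    have h2 := (hUb x t).2
    nlinarith [le_abs_self C₀, le_abs_self (g (U x t))]
  have hUabs : ∀ x t, |U x t| ≤ 1 := fun x t => abs_le.2 ⟨by linarith [(hUb x t).1], (hUb x t).2⟩
  have hG : Continuous (fun p : ℝ × ℝ => g (U p.1 p.2)) := hg.comp hU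
  -- the interpolating function
  set F : ℝ → ℝ → ℝ → ℝ := fun x t s => ∫ z, g (U (x - (t - s) * z) s) ∂μ with hF
  set Φ : ℝ → ℝ → ℝ → ℝ := fun x t s => (∫ z, U (x - t * z) 0 ∂μ) + ∫ r in (0:ℝ)..s, F x t r with hΦ
  have hFc : ∀ x t, Continuous (F x t) := fun x t => by
    refine fsp_int_cont μ _ ?_ C fun _ _ => hGb _ _
    exact hG.comp (by fun_prop : Continuous fun q : ℝ × ℝ => (x - (t - q.1) * q.2, q.1))
  have hd : ∀ x t s, HasDerivAt (Φ x t) (F x t s) s := fun x t s =>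
    ((hFc x t).integral_hasStrictDerivAt 0 s).hasDerivAt.const_add _
  have hΦeq : ∀ x t s, 0 ≤ s → s ≤ t → Φ x t s = ∫ z, U (x - (t - s) * z) s ∂μ :=
    fun x t s h1 h2 => (fsp_duhamel μ hst U (fun x t => g (U x t)) hU hG 1 C hUabs hGb hmild x t s h1 h2).symm
  have hΦt : ∀ x t, 0 ≤ t → Φ x t t = U x t := fun x t h => by
    rw [hΦeq x t t h le_rfl]; simp
  have hUi : ∀ x t s, Integrable (fun z => U (x - (t - s) * z) s) μ := fun x t s =>
    fsp_int μ _ (hU.comp (by fun_prop : Continuous fun z : ℝ => (x - (t - s) * z, s))) 1 fun _ => hUabs _ _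
  have hGi : ∀ x t s, Integrable (fun z => g (U (x - (t - s) * z) s)) μ := fun x t s =>
    fsp_int μ _ (hG.comp (by fun_prop : Continuous fun z : ℝ => (x - (t - s) * z, s))) C fun _ => hGb _ _
  have hΦ1 : ∀ x t s, 0 ≤ s → s ≤ t → Φ x t s ≤ 1 := fun x t s h1 h2 => by
    rw [hΦeq x t s h1 h2]
    exact (abs_le.1 (fsp_int_le μ _ 1 fun _ => hUabs _ _)).2
  have hB : ∀ x t s Λ, 0 ≤ s → s ≤ t → (∀ z, -Λ < z → U (x - (t - s) * z) s ≤ δ) →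
      F x t s + a * Φ x t s ≤ C * μ.real (Set.Iic (-Λ)) := by
    intro x t s Λ h1 h2 h3
    rw [hΦeq x t s h1 h2, ← integral_const_mul, hF]
    simp only
    rw [← integral_add (hGi x t s) ((hUi x t s).const_mul a)]
    exact fsp_tail μ _ ((hGi x t s).add ((hUi x t s).const_mul a)) C Λ (fun z => hhC _ _)
      fun z hz => hgδ _ (hUb _ _) (h3 z hz)
  obtain ⟨c, hc, hq⟩ := fsp_tail_small μ (δ / 2 / (1 + C / a)) (by positivity)
  set q := μ.real (Set.Iic (-c)) with hqdef
  have hq0 : 0 ≤ q := measureReal_nonneg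
  have hq2 : q + C * q / a ≤ δ / 2 := by
    rw [lt_div_iff₀ (by positivity)] at hq
    have : q + C * q / a = q * (1 + C / a) := by ring
    linarith
  have hstep : ∀ T, 0 ≤ T → (∀ s, 0 ≤ s → s ≤ T → ∀ x, x < -c * s → U x s ≤ δ) →
      (∀ s, 0 ≤ s → s ≤ T + δ / (2 * C) → ∀ x, x < -c * s → U x s ≤ δ) := by
    intro T hT hP t ht htT x hx
    rcases le_or_gt t T with h | h
    · exact hP t ht h x hx
    have hΦ0 : Φ x t 0 ≤ q := by
      rw [hΦeq x t 0 le_rfl ht]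
      have := fsp_tail μ _ (hUi x t 0) 1 c (fun z => (hUb _ _).2) (fun z hz => by
        rw [hU0 _ (by nlinarith)])
      simpa using this
    have hΦ0' : 0 ≤ Φ x t 0 := by
      rw [hΦeq x t 0 le_rfl ht]
      exact integral_nonneg fun z => (hUb _ _).1
    have h1 := fsp_gronwall (Φ x t) (F x t) (hd x t) a (C * q) 0 T ha (by positivity) hT
      (fun s hs hsT => hB x t s c hs (by linarith) fun z hz => hP s hs hsT _ (by nlinarith))
    have h2 : exp (-(a * (T - 0))) ≤ 1 := exp_le_one_iff.2 (by nlinarith)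
    have h3 : exp (-(a * (T - 0))) * Φ x t 0 ≤ q :=
      (mul_le_of_le_one_left hΦ0' h2).trans hΦ0
    have h4 : Φ x t t - Φ x t T ≤ C * (t - T) := by
      have e : Φ x t t - Φ x t T = ∫ r in T..t, F x t r := by
        simp only [hΦ]
        rw [add_sub_add_left_eq_sub, intervalIntegral.integral_interval_sub_left
          ((hFc x t).intervalIntegrable _ _) ((hFc x t).intervalIntegrable _ _)]
      rw [e]
      have := intervalIntegral.norm_integral_le_of_norm_le_const (a := T) (b := t) (f := F x t) (C := C)
        fun r _ => fsp_int_le μ _ C fun _ => hGb _ _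
      rw [abs_of_pos (by linarith)] at this
      exact (le_abs_self _).trans this
    have h5 : C * (t - T) ≤ δ / 2 := by
      have : C * (t - T) ≤ C * (δ / (2 * C)) := mul_le_mul_of_nonneg_left (by linarith) hCpos.le
      have e : C * (δ / (2 * C)) = δ / 2 := by field_simp
      linarith
    rw [← hΦt x t ht]
    linarith
  have hind : ∀ n : ℕ, ∀ s, 0 ≤ s → s ≤ n * (δ / (2 * C)) → ∀ x, x < -c * s → U x s ≤ δ := by
    intro n
    induction n with
    | zero =>
      intro s hs hs' x hx
      have : s = 0 := le_antisymm (by simpa using hs') hs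
      subst this
      rw [hU0 x (by simpa using hx)]; exact hδ.le
    | succ n ih =>
      have := hstep (n * (δ / (2 * C))) (by positivity) ih
      intro s hs hs' x hx
      exact this s hs (by push_cast at hs'; linarith) x hx
  have hall : ∀ s, 0 ≤ s → ∀ x, x < -c * s → U x s ≤ δ := by
    intro s hs x hx
    obtain ⟨n, hn⟩ := exists_nat_ge (s / (δ / (2 * C)))
    exact hind n s hs (by rwa [div_le_iff₀ (by positivity)] at hn) x hx
  refine ⟨c + 1, by linarith, fun ε hε => ?_⟩
  obtain ⟨Λ, hΛ, hqΛ⟩ := fsp_tail_small μ (ε / 2 / (C / a)) (by positivity)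
  obtain ⟨N, hN, hNε⟩ : ∃ N : ℝ, 0 < N ∧ exp (-(a * N)) < ε / 2 := by
    have h1 : Tendsto (fun N : ℝ => exp (-(a * N))) atTop (𝓝 0) :=
      tendsto_exp_neg_atTop_nhds_zero.comp (tendsto_id.const_mul_atTop ha)
    obtain ⟨N, h2, h3⟩ := ((h1.eventually (gt_mem_nhds (half_pos hε))).and (eventually_gt_atTop 0)).exists
    exact ⟨N, h3, h2⟩
  refine ⟨N * Λ + N, by positivity, fun t ht x hx => ?_⟩
  have hNΛ : 0 < N * Λ := by positivity
  have h1 := fsp_gronwall (Φ x t) (F x t) (hd x t) a (C * μ.real (Set.Iic (-Λ))) (t - N) t ha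
    (by positivity) (by linarith)
    (fun s hs hst' => hB x t s Λ (by linarith) hst' fun z hz => hall s (by linarith) _ (by
      have e1 : (t - s) * (-Λ) ≤ (t - s) * z := mul_le_mul_of_nonneg_left hz.le (by linarith)
      have e2 : (t - s) * Λ ≤ N * Λ := mul_le_mul_of_nonneg_right (by linarith) hΛ.le
      have e3 : c * s ≤ c * t := mul_le_mul_of_nonneg_left hst' hc.le
      linarith))
  rw [hΦt x t (by linarith)] at h1
  have h2 : exp (-(a * (t - (t - N)))) * Φ x t (t - N) ≤ exp (-(a * N)) := by
    rw [sub_sub_cancel]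
    exact mul_le_of_le_one_right (exp_pos _).le (hΦ1 x t _ (by linarith) (by linarith))
  have h3 : C * μ.real (Set.Iic (-Λ)) / a < ε / 2 := by
    rw [lt_div_iff₀ (by positivity)] at hqΛ
    have : C * μ.real (Set.Iic (-Λ)) / a = μ.real (Set.Iic (-Λ)) * (C / a) := by ring
    linarith
  linarith

lemma fsp_kernel (κ σ : ℝ) (γ : ℝ≥0) (hγ : γ ≠ 0) (hκ : (γ:ℝ) = κ) (t x : ℝ) (ht : 0 < t)
    (k : ℝ → ℝ) : ∫ y : ℝ, stableKernel κ σ t (x - y) * k y =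
      ∫ z, k (x - t * z) ∂(ProbabilityTheory.cauchyMeasure σ γ) := by
  rw [ProbabilityTheory.cauchyMeasure_of_scale_ne_zero _ hγ,
    integral_withDensity_eq_integral_toReal_smul (by fun_prop)
      (by simp [ProbabilityTheory.cauchyPDF])]
  have hκ0 : 0 < κ := by rw [← hκ]; positivity
  rw [← integral_sub_left_eq_self (fun y => stableKernel κ σ t (x - y) * k y) volume x]
  have h := Measure.integral_comp_mul_left
    (fun y => stableKernel κ σ t (x - (x - y)) * k (x - y)) t
  rw [abs_of_pos (inv_pos.2 ht), smul_eq_mul, eq_comm, inv_mul_eq_iff_eq_mul₀ ht.ne'] at h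
  rw [h, ← integral_const_mul]
  congr 1; ext z
  rw [ProbabilityTheory.cauchyPDF,
    ENNReal.toReal_ofReal (ProbabilityTheory.cauchyPDF_pos σ hγ z).le,
    ProbabilityTheory.cauchyPDFReal_def, hκ, smul_eq_mul, stableKernel]
  have : 0 < (z - σ)^2 + κ^2 := by positivity
  have e : (x - (x - t * z) - σ * t)^2 + (κ * t)^2 = t^2 * ((z - σ)^2 + κ^2) := by ring
  rw [e]
  field_simp

/-- Finite speed of spread (the α = 1 case). Let `g` be C¹ on
`[0,1]` (extended locally Lipschitz to ℝ) with `g(0) = g(1) = 0` and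
`g'(0) < 0`. Let `u` be a continuous mild solution of `∂_t u + Au = g(u)`
with `0 ≤ u ≤ 1`, whose initial datum vanishes on `(-∞,0)` and tends to `1`
at `+∞`. Then there exists `c > 0` such that for every `ε > 0` there exists
`T > 0` with `u(x,t) < ε` whenever `t ≥ T` and `x ≤ −ct`; i.e.
`limsup_{t→∞} sup_{x ≤ −ct} u(x,t) = 0` for some `c > 0`. -/
theorem finite_speed_of_spread
    (β : ℝ) (hβ : β ∈ Set.Ioo (-1 : ℝ) 1)
    (κ σ : ℝ) (hκ : κ = Real.cos (π * β / 2)) (hσ : σ = Real.sin (π * β / 2))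
    (g : ℝ → ℝ) (hg_lip : LocallyLipschitz g)
    (hg_C1 : ContDiffOn ℝ 1 g (Set.Icc 0 1))
    (hg0 : g 0 = 0) (hg1 : g 1 = 0)
    (hg'0 : derivWithin g (Set.Icc 0 1) 0 < 0)
    (u : ℝ → ℝ → ℝ)
    (hu_cont : ContinuousOn (fun p : ℝ × ℝ => u p.1 p.2)
      (Set.univ ×ˢ Set.Ici 0))
    (hu_bdd : ∀ x : ℝ, ∀ t : ℝ, 0 ≤ t → u x t ∈ Set.Icc (0 : ℝ) 1)
    (hu : ∀ T : ℝ, 0 < T → IsMildSolution κ σ g T u)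
    (hu0_supp : ∀ x : ℝ, x < 0 → u x 0 = 0)
    (hu0_lim : Tendsto (fun x : ℝ => u x 0) atTop (𝓝 1)) :
    ∃ c : ℝ, 0 < c ∧ ∀ ε : ℝ, 0 < ε → ∃ T : ℝ, 0 < T ∧
      ∀ t : ℝ, T ≤ t → ∀ x : ℝ, x ≤ -c * t → u x t < ε := by
  have hκ0 : 0 < κ := by
    rw [hκ]
    apply Real.cos_pos_of_mem_Ioo
    constructor <;> nlinarith [hβ.1, hβ.2, pi_pos]
  set γ : ℝ≥0 := ⟨κ, hκ0.le⟩ with hγdef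
  have hγκ : (γ:ℝ) = κ := rfl
  have hγ : γ ≠ 0 := fun h => by
    rw [h] at hγκ; simp at hγκ; linarith
  -- the slope at zero
  obtain ⟨a, δ, ha, hδ, hgδ⟩ : ∃ a δ : ℝ, 0 < a ∧ 0 < δ ∧
      ∀ v ∈ Set.Icc (0:ℝ) 1, v ≤ δ → g v + a * v ≤ 0 := by
    set d := derivWithin g (Set.Icc 0 1) 0 with hd
    have hD : HasDerivWithinAt g d (Set.Icc 0 1) 0 :=
      (hg_C1.differentiableOn (by simp) 0 (by simp)).hasDerivWithinAt
    have h1 := hasDerivWithinAt_iff_isLittleO.1 hD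
    have h2 := h1.def (c := -d / 2) (by linarith)
    rw [eventually_nhdsWithin_iff, Metric.eventually_nhds_iff] at h2
    obtain ⟨r, hr, h3⟩ := h2
    refine ⟨-d / 2, r / 2, by linarith, by linarith, fun v hv hvr => ?_⟩
    have h4 := h3 (y := v) (by rw [Real.dist_eq, sub_zero, abs_of_nonneg hv.1]; linarith) hv
    simp only [hg0, sub_zero, smul_eq_mul, Real.norm_eq_abs, abs_of_nonneg hv.1] at h4
    have h5 := (le_abs_self _).trans h4
    linarith
  have hU : Continuous (fun p : ℝ × ℝ => u p.1 (max p.2 0)) := by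
    have : Continuous (fun p : ℝ × ℝ => ((p.1, max p.2 0) : ℝ × ℝ)) := by fun_prop
    exact hu_cont.comp_continuous this fun p => by simp
  obtain ⟨c, hc, hmain⟩ := fsp_main (ProbabilityTheory.cauchyMeasure σ γ)
    (fun a b ha hb k hk C hC => fsp_stable σ γ hγ a b ha hb k hk C hC)
    (fun x t => u x (max t 0)) g hU hg_lip.continuous
    (fun x t => hu_bdd x _ (le_max_right _ _))
    (fun x t ht => by
      simp only [max_self, max_eq_left ht.le]
      rw [hu t ht x t ht le_rfl, fsp_kernel κ σ γ hγ hγκ t x ht, integral_Ioc_eq_integral_Ioo,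
        integral_Ioc_eq_integral_Ioo]
      congr 1
      refine setIntegral_congr_fun measurableSet_Ioo fun s hs => ?_
      simp only [max_eq_left hs.1.le]
      exact fsp_kernel κ σ γ hγ hγκ (t - s) x (sub_pos.2 hs.2) (fun y => g (u y s)))
    (fun x hx => by simpa using hu0_supp x hx) a δ ha hδ hgδ
  refine ⟨c, hc, fun ε hε => ?_⟩
  obtain ⟨T, hT, h⟩ := hmain ε hε
  refine ⟨T, hT, fun t ht x hx => ?_⟩
  have := h t ht x hx
  rwa [max_eq_left (by linarith)] at this
end
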